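/- Let G be a 2-connected finite simple graph and let δ > 2 be an integer. Then G satisfies (♠)_δ if and only if G can be obtained from the cycle of length δ by a finite sequence of the following two constructions: (a) gluing δ−1 graphs satisfying (♠)_δ along edges of weight δ−1 into a single edge; (b) replacing an edge of weight 1 by a path of δ−1 edges ((δ−1)-subdivision). -/

import Mathlib

/-!
The proof works with induced subgraphs of a fixed graph, described by vertex sets `X`.
Connectivity of `G[X]` is encoded by two-colourings (`ConnOn`, `TwoConnOn`), and contracting a
connected set `S` in a `2`-connected graph gives a `2`-connected graph exactly when the complement
of `S` is connected, so good flats become `FlatOn`. For `δ ≥ 3` the condition `(♠)_δ` turns into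
`RSp`: contractible edges have weight `δ - 1`, all others weight `1`, and the numerical equalities
hold for the whole graph and for flats with at least three vertices.

The main tool is a separation `Sep` of `G[X]` by two vertices `p`, `q`. Weights add up along
a separation (`Sep.wt_union`), and a side can be traded for a single edge `pq` of weight `c`
whenever its weight is `c` plus `δ` times the number of its inner vertices; this
preserves the equalities (`Sep.weak`, `Sep.rsp`).

*No edge is both deletable and contractible* (`Weak.not_deletable_contractible`). Suppose `uv` is.
If there are no two-vertex separations, every vertex-deleted subgraph is a flat, and counting each
edge once for every vertex it avoids contradicts the equality for the whole graph. Otherwise take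
a smallest side `A` of a separation containing `u` and `v`; trading the opposite side for an edge
gives a smaller counterexample.

*From `(♠)_δ` to the construction.* If some edge `ab` is not contractible, then `G` is the gluing
of its bridges at `ab`. Each piece satisfies `(♠)_δ` with `ab` of weight `δ - 1`, and comparing
weights shows that there are exactly `δ - 1` pieces (`Glued.card_iff`,
`RSp.obtainable_of_not_contractible`). If all edges are contractible, none is deletable, so a
maximal proper `2`-connected induced subgraph leaves a single ear (`exists_ear`). This subgraph is
a flat, and the equalities force the length of the ear to be `δ - 1`. Hence `G` is the cycle of
length `δ` or a `(δ - 1)`-subdivision of a smaller graph satisfying `(♠)_δ`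
(`RSp.obtainable_of_contractible`).

*From the construction to `(♠)_δ`.* The weight has to be `cw`. A flat of the constructed graph
either lies in one side of the separation involved or contains the whole opposite side
(`Ear.flat_cases`, `Sep.flat_eq_of_subset`, `Sep.flat_eq_of_compl`), which reduces its equality to
one for a piece (`Ear.rsp_cycle`, `Glued.rsp`, `Ear.rsp_subdivide`).
-/

open SimpleGraph
open scoped Pointwise

namespace Gor

/-! ### Graph-theoretic notions -/

/-- A graph is `2`-connected if it is connected and remains connected after deletion of any
single vertex.  A single edge `K₂` counts as `2`-connected. -/
def IsTwoConnected {V : Type*} (G : SimpleGraph V) : Prop :=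
  G.Connected ∧ ∀ v : V, (G.induce {u : V | u ≠ v}).Connected

/-- `E(S)`: the set of edges of `G` with both endpoints in `S`. -/
def edgesIn {V : Type*} (G : SimpleGraph V) (S : Set V) : Set (Sym2 V) :=
  {e ∈ G.edgeSet | ∀ v ∈ e, v ∈ S}

/-- The simple graph obtained from `G` by contracting all edges in `F`: its vertices are the
connected components of the graph with edge set `F`, two being adjacent if some edge of `G`
joins them. -/
def contractEdges {V : Type*} (G : SimpleGraph V) (F : Set (Sym2 V)) :
    SimpleGraph (SimpleGraph.fromEdgeSet F).ConnectedComponent :=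
  SimpleGraph.fromRel fun c d => ∃ u v : V, G.Adj u v ∧
    (SimpleGraph.fromEdgeSet F).connectedComponentMk u = c ∧
    (SimpleGraph.fromEdgeSet F).connectedComponentMk v = d

/-- `S` is a good flat of `G`: the induced subgraph `G[S]` is `2`-connected and the contraction
of all edges of `E(S)` in `G` is `2`-connected. -/
def IsGoodFlat {V : Type*} (G : SimpleGraph V) (S : Set V) : Prop :=
  IsTwoConnected (G.induce S) ∧ IsTwoConnected (contractEdges G (edgesIn G S))

/-- The weight function `w : E → {1, δ-1}` with `w e = 1` whenever `G∖e` is `2`-connected and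
`w e = δ - 1` whenever `G/e` is `2`-connected. -/
def IsCanonicalWeight {V : Type*} (G : SimpleGraph V) (δ : ℕ) (w : Sym2 V → ℕ) : Prop :=
  (∀ e ∈ G.edgeSet, w e = 1 ∨ w e = δ - 1) ∧
  (∀ e ∈ G.edgeSet, IsTwoConnected (G.deleteEdges {e}) → w e = 1) ∧
  (∀ e ∈ G.edgeSet, IsTwoConnected (contractEdges G {e}) → w e = δ - 1)

/-- A `2`-connected graph `G` satisfies `(♠)_δ` via the weight function `w`. -/
def SatisfiesSpade {V : Type*} (G : SimpleGraph V) (δ : ℕ) (w : Sym2 V → ℕ) : Prop :=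
  IsTwoConnected G ∧ IsCanonicalWeight G δ w ∧
  (∑ᶠ e ∈ G.edgeSet, w e) = δ * (Nat.card V - 1) ∧
  ∀ S : Set V, IsGoodFlat G S → (∑ᶠ e ∈ edgesIn G S, w e) + 1 = δ * (S.ncard - 1)

/-- The number of `2`-connected components (blocks) of a graph: the number of inclusion-maximal
vertex subsets inducing a `2`-connected subgraph. -/
noncomputable def numBlocks {V : Type*} (G : SimpleGraph V) : ℕ :=
  {S : Set V | IsTwoConnected (G.induce S) ∧
    ∀ T : Set V, S ⊆ T → IsTwoConnected (G.induce T) → S = T}.ncard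

/-! ### Lattice polytopes and the Gorenstein property -/

/-- A point of `ℝ^η` is a lattice point if all its coordinates are integers. -/
def IsLatticePoint {η : Type*} (x : η → ℝ) : Prop := ∀ i, ∃ z : ℤ, x i = z

/-- The cone over a polytope `P ⊆ ℝ^η`, living in `ℝ^η × ℝ`. -/
def coneOver {η : Type*} (P : Set (η → ℝ)) : Set ((η → ℝ) × ℝ) :=
  {y | ∃ t : ℝ, ∃ p ∈ P, 0 ≤ t ∧ y = (t • p, t)}

/-- The lattice affinely spanned by the lattice points of `P`, placed at height one;
i.e. the subgroup of `ℝ^η × ℝ` generated by `{(p, 1) : p a lattice point of P}`. -/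
def coneLattice {η : Type*} (P : Set (η → ℝ)) : Submodule ℤ ((η → ℝ) × ℝ) :=
  Submodule.span ℤ {y | ∃ p ∈ P, IsLatticePoint p ∧ y = (p, 1)}

/-- `h` is a linear form cutting out a facet-supporting hyperplane of the cone over `P`:
it is nonnegative on the cone and vanishes on a subset of the cone spanning one dimension less
than the cone itself. -/
def IsFacetForm {η : Type*} (P : Set (η → ℝ)) (h : ((η → ℝ) × ℝ) →ₗ[ℝ] ℝ) : Prop :=
  (∀ y ∈ coneOver P, 0 ≤ h y) ∧
  Module.finrank ℝ (Submodule.span ℝ {y ∈ coneOver P | h y = 0}) + 1 =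
    Module.finrank ℝ (Submodule.span ℝ (coneOver P))

/-- `h` is reduced with respect to the lattice spanned by `P`: it takes integer values on the
lattice and attains the value `1` there. -/
def IsReducedForm {η : Type*} (P : Set (η → ℝ)) (h : ((η → ℝ) × ℝ) →ₗ[ℝ] ℝ) : Prop :=
  (∀ y ∈ coneLattice P, ∃ z : ℤ, h y = z) ∧ ∃ y ∈ coneLattice P, h y = 1

/-- A polytope `P`, regarded as full-dimensional in the affine lattice it spans, is
`δ`-Gorenstein if there is a lattice point `v ∈ δP` with `h (v, δ) = 1` for the reduced
equation `h` of every facet-supporting hyperplane of the cone over `P`. -/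
def IsDeltaGorenstein {η : Type*} (P : Set (η → ℝ)) (δ : ℕ) : Prop :=
  ∃ v : η → ℝ, v ∈ (δ : ℝ) • P ∧ (v, (δ : ℝ)) ∈ coneLattice P ∧
    ∀ h : ((η → ℝ) × ℝ) →ₗ[ℝ] ℝ, IsFacetForm P h → IsReducedForm P h → h (v, (δ : ℝ)) = 1

/-- A polytope is Gorenstein if it is `δ`-Gorenstein for some positive integer `δ`. -/
def IsGorenstein {η : Type*} (P : Set (η → ℝ)) : Prop :=
  ∃ δ : ℕ, 0 < δ ∧ IsDeltaGorenstein P δ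

/-! ### Graphic matroids of simple graphs and their polytopes -/

/-- An independent set of the graphic matroid of `G`: a set of edges forming a forest. -/
def IsGraphicIndep {V : Type*} (G : SimpleGraph V) (I : Set (Sym2 V)) : Prop :=
  I ⊆ G.edgeSet ∧ (SimpleGraph.fromEdgeSet I).IsAcyclic

/-- A basis of the graphic matroid of `G`: a maximal forest (spanning forest). -/
def IsGraphicBasis {V : Type*} (G : SimpleGraph V) (B : Set (Sym2 V)) : Prop :=
  IsGraphicIndep G B ∧ ∀ e ∈ G.edgeSet, e ∉ B → ¬ IsGraphicIndep G (insert e B)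

/-- The base polytope `B(M(G))` of the graphic matroid of `G`: the convex hull of the
indicator vectors of the bases. -/
def basePolytope {V : Type*} (G : SimpleGraph V) : Set (Sym2 V → ℝ) :=
  convexHull ℝ {x | ∃ B : Set (Sym2 V), IsGraphicBasis G B ∧
    x = B.indicator fun _ => (1 : ℝ)}

/-- The base polytope `B(M(G))`, regarded inside `ℝ^E` where `E` is the edge set of `G`. -/
def basePolytopeE {V : Type*} (G : SimpleGraph V) : Set (↥G.edgeSet → ℝ) :=
  convexHull ℝ {x | ∃ B : Set (Sym2 V), IsGraphicBasis G B ∧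
    x = (Subtype.val ⁻¹' B).indicator fun _ => (1 : ℝ)}

/-- A homogeneous inequality `g x ≥ 0` is valid for `P` and defines a facet (a supporting
hyperplane whose intersection with `P` has affine dimension one less than `P`). -/
def IsSupportingFaceIneq {α : Type*} (P : Set (α → ℝ)) (g : (α → ℝ) → ℝ) : Prop :=
  (∀ x ∈ P, 0 ≤ g x) ∧
  Module.finrank ℝ (vectorSpan ℝ {x ∈ P | g x = 0}) + 1 =
    Module.finrank ℝ (vectorSpan ℝ P)

/-! ### Multigraphs -/

/-- A finite undirected loopless multigraph on a vertex type `V` with edge type `E`. -/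
structure Multigraph (V E : Type*) where
  ends : E → Sym2 V
  loopless : ∀ e, ¬ (ends e).IsDiag

/-- The underlying simple graph of a multigraph. -/
def Multigraph.toSimple {V E : Type*} (G : Multigraph V E) : SimpleGraph V :=
  SimpleGraph.fromEdgeSet (Set.range G.ends)

/-- `E(S)` for a multigraph: the set of edges with both endpoints in `S`. -/
def Multigraph.edgesIn {V E : Type*} (G : Multigraph V E) (S : Set V) : Set E :=
  {e | ∀ v ∈ G.ends e, v ∈ S}

/-- A set of edges of a multigraph is a forest (an independent set of the graphic matroid):
no two parallel edges and no cycle. -/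
def IsMultiForest {V E : Type*} (G : Multigraph V E) (I : Set E) : Prop :=
  Set.InjOn G.ends I ∧ (SimpleGraph.fromEdgeSet (G.ends '' I)).IsAcyclic

/-- The independence polytope `P(M(G))` of the graphic matroid of a multigraph `G`. -/
def multiIndepPolytope {V E : Type*} (G : Multigraph V E) : Set (E → ℝ) :=
  convexHull ℝ {x | ∃ I : Set E, IsMultiForest G I ∧ x = I.indicator fun _ => (1 : ℝ)}

/-- The rank of a set of edges in the graphic matroid of a multigraph. -/
noncomputable def mrank {V E : Type*} (G : Multigraph V E) (A : Set E) : ℕ :=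
  sSup {n | ∃ I ⊆ A, IsMultiForest G I ∧ I.ncard = n}

/-- A flat of the graphic matroid of a multigraph: adding any further edge increases the rank. -/
def IsGraphicFlat {V E : Type*} (G : Multigraph V E) (A : Set E) : Prop :=
  ∀ e : E, e ∉ A → mrank G (insert e A) ≠ mrank G A

/-- A circuit of the graphic matroid of a multigraph: a minimal dependent set of edges. -/
def IsMultiCircuit {V E : Type*} (G : Multigraph V E) (C : Set E) : Prop :=
  ¬ IsMultiForest G C ∧ ∀ C' ⊂ C, IsMultiForest G C'

/-- The restriction of the graphic matroid of `G` to `A` is a connected matroid: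
`A` is nonempty and any two distinct elements of `A` lie on a common circuit inside `A`. -/
def ConnectedRestriction {V E : Type*} (G : Multigraph V E) (A : Set E) : Prop :=
  A.Nonempty ∧ ∀ e ∈ A, ∀ f ∈ A, e ≠ f → ∃ C ⊆ A, IsMultiCircuit G C ∧ e ∈ C ∧ f ∈ C

/-- `G` is the `m`-blow-up of the simple graph `H`: every edge of `H` is replaced by exactly
`m` parallel edges and there are no other edges. -/
def IsBlowUp {V E : Type*} (G : Multigraph V E) (m : ℕ) (H : SimpleGraph V) : Prop :=
  (∀ p ∈ H.edgeSet, {e : E | G.ends e = p}.ncard = m) ∧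
  ∀ p : Sym2 V, p ∉ H.edgeSet → {e : E | G.ends e = p} = ∅

/-- The condition `(♣)_δ`: `(δ-1)|E(S)| + 1 = δ(|S|-1)` for every vertex subset `S` inducing a
`2`-connected subgraph. -/
def ClubCond {V : Type*} (H : SimpleGraph V) (δ : ℕ) : Prop :=
  ∀ S : Set V, IsTwoConnected (H.induce S) →
    (δ - 1) * (edgesIn H S).ncard + 1 = δ * (S.ncard - 1)

/-! ### Chordality, `K₄` minors, cycle attachments -/

/-- A chordless cycle: a cycle such that every edge of `G` between vertices of the cycle is an
edge of the cycle. -/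
def IsChordlessCycle {V : Type*} (G : SimpleGraph V) {v : V} (c : G.Walk v v) : Prop :=
  c.IsCycle ∧ ∀ e ∈ edgesIn G {u : V | u ∈ c.support}, e ∈ c.edges

/-- `G` is `δ`-chordal: every cycle without a chord has exactly `δ + 1` edges. -/
def IsDeltaChordal {V : Type*} (G : SimpleGraph V) (δ : ℕ) : Prop :=
  ∀ (v : V) (c : G.Walk v v), IsChordlessCycle G c → c.length = δ + 1

/-- `G` has a `K₄` minor: there are four disjoint nonempty connected branch sets pairwise
joined by an edge. -/
def HasK4Minor {V : Type*} (G : SimpleGraph V) : Prop :=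
  ∃ B : Fin 4 → Set V, (∀ i, (B i).Nonempty) ∧ (∀ i, (G.induce (B i)).Connected) ∧
    (Pairwise fun i j => Disjoint (B i) (B j)) ∧
    (Pairwise fun i j => ∃ u ∈ B i, ∃ v ∈ B j, G.Adj u v)

/-- One step of attaching a new `(δ+1)`-cycle to an edge: `B` is obtained from `A` by adding
`δ - 1` new vertices forming a path of length `δ` between the endpoints of an edge of
`H[A]`, these being all new edges. -/
def AttachStep {V : Type*} (H : SimpleGraph V) (δ : ℕ) (A B : Set V) : Prop :=
  ∃ q : Fin (δ + 1) → V, Function.Injective q ∧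
    H.Adj (q 0) (q (Fin.last δ)) ∧ q 0 ∈ A ∧ q (Fin.last δ) ∈ A ∧
    (∀ i : Fin (δ + 1), i ≠ 0 → i ≠ Fin.last δ → q i ∉ A) ∧
    B = A ∪ {x | ∃ i : Fin (δ + 1), i ≠ 0 ∧ i ≠ Fin.last δ ∧ q i = x} ∧
    edgesIn H B = edgesIn H A ∪ {e | ∃ i : Fin δ, e = s(q i.castSucc, q i.succ)}

/-- `H` can be constructed from the clique `K₂` by repeatedly attaching new `(δ+1)`-cycles to
edges of the preceding graph. -/
def ConstructibleFromK2 {V : Type*} (H : SimpleGraph V) (δ : ℕ) : Prop :=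
  ∃ (k : ℕ) (S : Fin (k + 1) → Set V),
    (∃ u v : V, H.Adj u v ∧ S 0 = {u, v}) ∧
    S (Fin.last k) = Set.univ ∧
    ∀ i : Fin k, AttachStep H δ (S i.castSucc) (S i.succ)

/-! ### Gluings, subdivisions, collisions, ears -/

/-- `G` (with distinguished edge `ab`) is the gluing of the graphs `Gs i` along the edges
`es i`: the disjoint union with all the edges `es i` identified to the single edge `ab`. -/
def IsGluing {ι : Type*} {Vf : ι → Type*} {W : Type*} (Gs : ∀ i, SimpleGraph (Vf i))
    (es : ∀ i, Sym2 (Vf i)) (G : SimpleGraph W) (a b : W) : Prop :=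
  a ≠ b ∧ G.Adj a b ∧
  ∃ φ : ∀ i, Vf i → W,
    (∀ i, Function.Injective (φ i)) ∧
    (∀ x : W, ∃ i, x ∈ Set.range (φ i)) ∧
    (∀ i, Sym2.map (φ i) (es i) = s(a, b)) ∧
    (∀ i j, i ≠ j → Set.range (φ i) ∩ Set.range (φ j) = {a, b}) ∧
    ∀ x y : W, G.Adj x y ↔ ∃ i, ∃ u v, (Gs i).Adj u v ∧ φ i u = x ∧ φ i v = y

/-- `G'` together with the path `q` is the subdivision of `G` obtained by replacing the edge
`uv` by a path of `m` edges `q 0, …, q m` through new vertices. -/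
def IsSubdivisionAt {V W : Type*} (G : SimpleGraph V) (u v : V) {m : ℕ}
    (G' : SimpleGraph W) (q : Fin (m + 1) → W) : Prop :=
  ∃ φ : V → W, Function.Injective φ ∧ Function.Injective q ∧
    q 0 = φ u ∧ q (Fin.last m) = φ v ∧
    (∀ i : Fin (m + 1), i ≠ 0 → i ≠ Fin.last m → q i ∉ Set.range φ) ∧
    (∀ x : W, x ∈ Set.range φ ∨ x ∈ Set.range q) ∧
    ∀ x y : W, G'.Adj x y ↔
      ((∃ a b : V, G.Adj a b ∧ s(a, b) ≠ s(u, v) ∧ φ a = x ∧ φ b = y) ∨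
       ∃ i : Fin m, s(x, y) = s(q i.castSucc, q i.succ))

/-- `G` (with the distinguished nonadjacent pair `a b`) is the collision of `G₁` and `G₂` on
the edges `e₁, e₂`: the disjoint union with `e₁` and `e₂` identified and then deleted. -/
def IsCollision {V₁ V₂ W : Type*} (G₁ : SimpleGraph V₁) (G₂ : SimpleGraph V₂)
    (e₁ : Sym2 V₁) (e₂ : Sym2 V₂) (G : SimpleGraph W) (a b : W) : Prop :=
  a ≠ b ∧ ¬ G.Adj a b ∧
  ∃ (φ₁ : V₁ → W) (φ₂ : V₂ → W),
    Function.Injective φ₁ ∧ Function.Injective φ₂ ∧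
    Sym2.map φ₁ e₁ = s(a, b) ∧ Sym2.map φ₂ e₂ = s(a, b) ∧
    (∀ x : W, x ∈ Set.range φ₁ ∨ x ∈ Set.range φ₂) ∧
    Set.range φ₁ ∩ Set.range φ₂ = {a, b} ∧
    ∀ x y : W, G.Adj x y ↔
      ((∃ u v, G₁.Adj u v ∧ s(u, v) ≠ e₁ ∧ φ₁ u = x ∧ φ₁ v = y) ∨
       (∃ u v, G₂.Adj u v ∧ s(u, v) ≠ e₂ ∧ φ₂ u = x ∧ φ₂ v = y))

/-- The inner vertices of an ear. -/
def earInner {V : Type*} {s : ℕ} (p : Fin (s + 1) → V) : Set V :=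
  {x | ∃ i : Fin (s + 1), i ≠ 0 ∧ i ≠ Fin.last s ∧ p i = x}

/-- The edges of an ear. -/
def earEdges {V : Type*} {s : ℕ} (p : Fin (s + 1) → V) : Set (Sym2 V) :=
  {e | ∃ i : Fin s, e = s(p i.castSucc, p i.succ)}

/-- An `s`-ear of `G`: a path with `s` edges whose inner vertices have degree `2` in `G`. -/
def IsEar {V : Type*} (G : SimpleGraph V) {s : ℕ} (p : Fin (s + 1) → V) : Prop :=
  Function.Injective p ∧ (∀ i : Fin s, G.Adj (p i.castSucc) (p i.succ)) ∧
  ∀ i : Fin (s + 1), i ≠ 0 → i ≠ Fin.last s → (G.neighborSet (p i)).ncard = 2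

/-- `T` is the vertex set of an inclusion-maximal proper `2`-connected induced subgraph. -/
def IsMaxProperTwoConnected {V : Type*} (G : SimpleGraph V) (T : Set V) : Prop :=
  IsTwoConnected (G.induce T) ∧ T ≠ Set.univ ∧
  ∀ T' : Set V, T ⊆ T' → T' ≠ Set.univ → IsTwoConnected (G.induce T') → T' = T

/-! ### `(♠)₂` and `3`-connectivity -/

/-- A `2`-connected graph satisfies the equalities `(♠)₂`:
`|E| = 2(|V|-1)` and `|E(S)| = 2|S| - 3` for every good flat `S`. -/
def Spade2 {V : Type*} (G : SimpleGraph V) : Prop :=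
  IsTwoConnected G ∧ G.edgeSet.ncard = 2 * (Nat.card V - 1) ∧
  ∀ S : Set V, IsGoodFlat G S → (edgesIn G S).ncard = 2 * S.ncard - 3

/-- A graph is `3`-connected if it has more than `3` vertices and remains connected after
deletion of any two vertices. -/
def IsThreeConnected {V : Type*} (G : SimpleGraph V) : Prop :=
  3 < Nat.card V ∧ ∀ u v : V, (G.induce {x : V | x ≠ u ∧ x ≠ v}).Connected

/-! ### Inductive constructions -/

/-- Graphs obtainable from the `δ`-cycle by gluings (Proposition `construction1`) and
`(δ-1)`-subdivisions (Proposition `construction2`). -/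
inductive Obtainable (δ : ℕ) : {W : Type} → SimpleGraph W → Prop
  | cycle {W : Type} (G : SimpleGraph W) (e : G ≃g SimpleGraph.cycleGraph δ) :
      Obtainable δ G
  | glue {Vf : Fin (δ - 1) → Type} {W : Type}
      (Gs : ∀ i, SimpleGraph (Vf i)) (ws : ∀ i, Sym2 (Vf i) → ℕ) (es : ∀ i, Sym2 (Vf i))
      (G : SimpleGraph W) (a b : W)
      (hob : ∀ i, Obtainable δ (Gs i))
      (hsp : ∀ i, SatisfiesSpade (Gs i) δ (ws i))
      (hes : ∀ i, es i ∈ (Gs i).edgeSet)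
      (hwe : ∀ i, ws i (es i) = δ - 1)
      (hgl : IsGluing Gs es G a b) : Obtainable δ G
  | subdivide {V W : Type} (G : SimpleGraph V) (w : Sym2 V → ℕ) (u v : V)
      (G' : SimpleGraph W) (q : Fin (δ - 1 + 1) → W)
      (hob : Obtainable δ G) (hsp : SatisfiesSpade G δ w)
      (huv : G.Adj u v) (hw1 : w s(u, v) = 1)
      (hsub : IsSubdivisionAt G u v G' q) : Obtainable δ G'

/-- Graphs obtainable from the clique `K₄` by a finite sequence of collisions. -/
inductive ObtainableK4 : {W : Type} → SimpleGraph W → Prop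
  | k4 {W : Type} (G : SimpleGraph W) (e : G ≃g (⊤ : SimpleGraph (Fin 4))) :
      ObtainableK4 G
  | collide {V₁ V₂ W : Type} (G₁ : SimpleGraph V₁) (G₂ : SimpleGraph V₂)
      (e₁ : Sym2 V₁) (e₂ : Sym2 V₂) (G : SimpleGraph W) (a b : W)
      (h₁ : ObtainableK4 G₁) (h₂ : ObtainableK4 G₂)
      (he₁ : e₁ ∈ G₁.edgeSet) (he₂ : e₂ ∈ G₂.edgeSet)
      (hc : IsCollision G₁ G₂ e₁ e₂ G a b) : ObtainableK4 G

/-! ### Connectivity of vertex sets -/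

/-- The subgraph of `G` induced on `X` is connected.  This is encoded by colourings: `X` is
nonempty and every two-colouring of the vertices that is constant along the edges inside `X` is
constant on `X`. -/
def ConnOn {V : Type*} (G : SimpleGraph V) (X : Set V) : Prop :=
  X.Nonempty ∧ ∀ f : V → Prop, (∀ x ∈ X, ∀ y ∈ X, G.Adj x y → (f x ↔ f y)) →
    ∀ x ∈ X, ∀ y ∈ X, (f x ↔ f y)

/-- The subgraph of `G` induced on `X` is `2`-connected (a single edge counts). -/
def TwoConnOn {V : Type*} (G : SimpleGraph V) (X : Set V) : Prop :=
  ConnOn G X ∧ ∀ v ∈ X, ConnOn G (X \ {v})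

/-- `S` is a good flat of the subgraph of a `2`-connected graph induced on `X`: contracting a
connected set `S` gives a `2`-connected graph exactly when the complement of `S` is connected. -/
def FlatOn {V : Type*} (G : SimpleGraph V) (X S : Set V) : Prop :=
  S ⊆ X ∧ TwoConnOn G S ∧ ConnOn G (X \ S)

section
variable {V V' : Type*} {G G' H : SimpleGraph V} {X Y Z S T A : Set V} {δ : ℕ} {p q u v : V}

lemma ConnOn.congr (h : ConnOn G X) (hGH : ∀ x ∈ X, ∀ y ∈ X, G.Adj x y → H.Adj x y) :
    ConnOn H X :=
  ⟨h.1, fun f hf => h.2 f fun x hx y hy hxy => hf x hx y hy (hGH x hx y hy hxy)⟩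

lemma TwoConnOn.congr (h : TwoConnOn G X) (hGH : ∀ x ∈ X, ∀ y ∈ X, G.Adj x y → H.Adj x y) :
    TwoConnOn H X :=
  ⟨h.1.congr hGH, fun v hv => (h.2 v hv).congr fun x hx y hy => hGH x hx.1 y hy.1⟩

lemma connOn_singleton (x : V) : ConnOn G {x} :=
  ⟨⟨x, rfl⟩, by rintro f - _ rfl _ rfl; rfl⟩

lemma connOn_pair (h : G.Adj u v) : ConnOn G {u, v} := by
  refine ⟨⟨u, by simp⟩, fun f hf x hx y hy => ?_⟩
  have := hf u (by simp) v (by simp) h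
  rcases hx with rfl | rfl <;> rcases hy with rfl | rfl <;> tauto

lemma twoConnOn_pair (h : G.Adj u v) : TwoConnOn G {u, v} := by
  refine ⟨connOn_pair h, fun x hx => ?_⟩
  have hne := h.ne
  rcases hx with rfl | rfl
  · have : ({x, v} : Set V) \ {x} = {v} := by ext z; simp; grind
    rw [this]; exact connOn_singleton _
  · have : ({u, x} : Set V) \ {x} = {u} := by ext z; simp; grind
    rw [this]; exact connOn_singleton _

/-- A set with at least three elements is connected as soon as all its one-vertex deletions
are. -/
lemma connOn_of_deletions (hX : 2 < X.ncard) (h : ∀ v ∈ X, ConnOn G (X \ {v})) :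
    ConnOn G X := by
  refine ⟨Set.nonempty_of_ncard_ne_zero (by omega), fun f hf x hx y hy => ?_⟩
  have hfin : X.Finite := Set.finite_of_ncard_ne_zero (by omega)
  obtain ⟨z, hz, hzn⟩ := Set.exists_mem_notMem_of_ncard_lt_ncard
    (s := {x, y}) (t := X) (lt_of_le_of_lt (Set.ncard_insert_le x {y}) (by simpa using hX))
  refine (h z hz).2 f (fun a ha b hb => hf a ha.1 b hb.1) x ⟨hx, ?_⟩ y ⟨hy, ?_⟩ <;>
    simp at hzn ⊢ <;> grind

lemma TwoConnOn.exists_ne (h : TwoConnOn G X) (hv : v ∈ X) : ∃ w ∈ X, w ≠ v := by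
  obtain ⟨w, hw⟩ := (h.2 v hv).1
  exact ⟨w, hw.1, hw.2⟩

/-- If the set `Z` is joined to the rest of `X` only through `p` and `q`, and `X` minus `q` is
connected, then a colouring constant along the edges inside `Z` and from `Z` to `p` takes the
colour of `p` on all of `Z`. -/
lemma attach (hc : ConnOn G (X \ {q})) (hp : p ∈ X) (hpq : p ≠ q) (hZ : Z ⊆ X) (hpZ : p ∉ Z)
    (hqZ : q ∉ Z) (hout : ∀ z ∈ Z, ∀ y ∈ X, G.Adj z y → y ∈ Z ∨ y = p ∨ y = q)
    {f : V → Prop} (hf : ∀ z ∈ Z, ∀ y ∈ Z, G.Adj z y → (f z ↔ f y))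
    (hfp : ∀ z ∈ Z, G.Adj z p → (f z ↔ f p)) : ∀ z ∈ Z, (f z ↔ f p) := by
  intro z hz
  have key := hc.2 (fun x => x ∈ Z → (f x ↔ f p)) ?_ z
    ⟨hZ hz, by rintro rfl; exact hqZ hz⟩ p ⟨hp, hpq⟩
  · exact key.2 (fun h => absurd h hpZ) hz
  · intro x hx y hy hxy
    have h1 := fun h => hout x h y hy.1 hxy
    have h2 := fun h => hout y h x hx.1 hxy.symm
    have h3 := fun h h' => hf x h y h' hxy
    have h4 := hfp x
    have h5 := hfp y
    have h6 := hxy.symm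
    have hx2 : x ≠ q := hx.2
    have hy2 : y ≠ q := hy.2
    grind

/-- In a `2`-connected graph, an edge whose ends separate the graph can be deleted. -/
lemma deletable_of_not_contractible (hX : TwoConnOn G X) (hu : u ∈ X) (hv : v ∈ X)
    (huv : G.Adj u v) (hne : (X \ {u, v}).Nonempty) (hnc : ¬ ConnOn G (X \ {u, v})) :
    TwoConnOn (G.deleteEdges {s(u, v)}) X := by
  have hne' := huv.ne
  obtain ⟨g, hg, a, ha, b, hb, hab⟩ : ∃ g : V → Prop,
      (∀ x ∈ X \ {u, v}, ∀ y ∈ X \ {u, v}, G.Adj x y → (g x ↔ g y)) ∧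
      ∃ a ∈ X \ {u, v}, ∃ b ∈ X \ {u, v}, ¬ (g a ↔ g b) := by
    by_contra hcon
    refine hnc ⟨hne, fun f hf x hx y hy => ?_⟩
    by_contra h
    exact hcon ⟨f, hf, x, hx, y, hy, h⟩
  have key : ∀ (f : V → Prop) (x : V), (∀ z ∈ X \ {x}, ∀ y ∈ X \ {x},
      (G.deleteEdges {s(u, v)}).Adj z y → (f z ↔ f y)) →
      ∀ z ∈ X \ {x}, ∀ y ∈ X \ {x}, G.Adj z y → (f z ↔ f y) := by
    intro f x hf z hz y hy hzy
    by_cases he : s(z, y) = s(u, v)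
    · have huvx : x ≠ u ∧ x ≠ v := by
        have h1 : z ≠ x := hz.2
        have h2 : y ≠ x := hy.2
        rcases Sym2.eq_iff.1 he with ⟨rfl, rfl⟩ | ⟨rfl, rfl⟩ <;> exact ⟨by tauto, by tauto⟩
      have att : ∀ p q : V, s(p, q) = s(u, v) → ∀ w ∈ {w ∈ X \ {u, v} | ¬ (g w ↔ g x)},
          (f w ↔ f p) := by
        intro p q hpq
        have hpq' : (p = u ∧ q = v) ∨ (p = v ∧ q = u) := Sym2.eq_iff.1 hpq
        refine attach (X := X) (G := G) (q := q) (hX.2 q (by grind)) (by grind) (by grind)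
          (fun w hw => hw.1.1) ?_ ?_ ?_ ?_ ?_
        · intro h; have := h.1.2; simp at this; grind
        · intro h; have := h.1.2; simp at this; grind
        · intro w hw y hy hwy
          by_cases hyuv : y ∈ ({u, v} : Set V)
          · simp at hyuv; grind
          · left
            refine ⟨⟨hy, hyuv⟩, ?_⟩
            have := hg w hw.1 y ⟨hy, hyuv⟩ hwy
            have := hw.2
            tauto
        · intro w hw y hy hwy
          refine hf w ⟨hw.1.1, ?_⟩ y ⟨hy.1.1, ?_⟩ ?_
          · rintro rfl; exact hw.2 Iff.rfl
          · rintro rfl; exact hy.2 Iff.rfl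
          · have h1 := hw.1.2
            have h2 := hy.1.2
            simp [deleteEdges_adj, hwy] at h1 h2 ⊢
            grind
        · intro w hw hwy
          refine hf w ⟨hw.1.1, ?_⟩ p ⟨by grind, by simp; grind⟩ ?_
          · rintro rfl; exact hw.2 Iff.rfl
          · have h1 := hw.1.2
            simp [deleteEdges_adj, hwy] at h1 ⊢
            grind
      obtain ⟨w, hw⟩ : ∃ w, w ∈ {w ∈ X \ {u, v} | ¬ (g w ↔ g x)} := by
        by_cases h : g a ↔ g x
        · exact ⟨b, hb, by tauto⟩
        · exact ⟨a, ha, h⟩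
      have h1 := att u v rfl w hw
      have h2 := att v u Sym2.eq_swap w hw
      rcases Sym2.eq_iff.1 he with ⟨rfl, rfl⟩ | ⟨rfl, rfl⟩ <;> tauto
    · exact hf z hz y hy (by simp [deleteEdges_adj, hzy]; simpa using he)
  have hcard : ∀ x ∈ X, ConnOn (G.deleteEdges {s(u, v)}) (X \ {x}) := fun x hx =>
    ⟨(hX.2 x hx).1, fun f hf => (hX.2 x hx).2 f (key f x hf)⟩
  refine ⟨⟨hX.1.1, fun f hf x hx y hy => ?_⟩, hcard⟩
  obtain ⟨w, hwX, hw⟩ : ∃ w ∈ X, w ≠ x ∧ w ≠ y := by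
    have hau : a ≠ u ∧ a ≠ v := by simpa using ha.2
    have hbu : b ≠ u ∧ b ≠ v := by simpa using hb.2
    have hab' : a ≠ b := by rintro rfl; exact hab Iff.rfl
    have ha1 := ha.1
    have hb1 := hb.1
    clear hcard key hg hnc hX hne hf ha hb hab
    by_contra hcon
    push Not at hcon
    have h1 := hcon a ha1
    have h2 := hcon b hb1
    have h3 := hcon u hu
    have h4 := hcon v hv
    by_cases hax : a = x <;> by_cases hbx : b = x <;> by_cases hux : u = x <;> simp_all
  exact (hcard w hwX).2 f (fun a ha b hb => hf a ha.1 b hb.1) x ⟨hx, by simp; tauto⟩ y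
    ⟨hy, by simp; tauto⟩

end

/-! ### Two-vertex separations -/

/-- The pair `p`, `q` separates `A` from the rest of `X`: both sides have a vertex different from
`p` and `q`, and no edge joins `A` minus `p`, `q` to `X` minus `A`. -/
structure Sep {V : Type*} (G : SimpleGraph V) (X A : Set V) (p q : V) : Prop where
  sub : A ⊆ X
  hp : p ∈ A
  hq : q ∈ A
  ne : p ≠ q
  rest : (X \ A).Nonempty
  int : (A \ {p, q}).Nonempty
  cross : ∀ x ∈ A, ∀ y ∈ X \ A, G.Adj x y → x = p ∨ x = q

section
variable {V V' : Type*} {G G' H : SimpleGraph V} {X Y Z S T A : Set V} {δ : ℕ} {p q u v : V}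

lemma Sep.mono (h : Sep G X A p q) (hG : G' ≤ G) : Sep G' X A p q :=
  ⟨h.sub, h.hp, h.hq, h.ne, h.rest, h.int, fun x hx y hy hxy => h.cross x hx y hy (hG hxy)⟩

lemma Sep.comm (h : Sep G X A p q) : Sep G X A q p :=
  ⟨h.sub, h.hq, h.hp, h.ne.symm, h.rest, by rw [Set.pair_comm]; exact h.int,
    fun x hx y hy hxy => (h.cross x hx y hy hxy).symm⟩

lemma Sep.diff_other (h : Sep G X A p q) : X \ (X \ A ∪ {p, q}) = A \ {p, q} := by
  have := h.sub
  ext z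
  simp
  grind

lemma Sep.other (h : Sep G X A p q) : Sep G X (X \ A ∪ {p, q}) p q := by
  have h1 := h.sub
  have h2 := h.hp
  have h3 := h.hq
  refine ⟨by rintro x (hx | rfl | rfl) <;> grind, by simp, by simp, h.ne, ?_, ?_, ?_⟩
  · rw [h.diff_other]; exact h.int
  · obtain ⟨z, hz⟩ := h.rest
    refine ⟨z, Or.inl hz, ?_⟩
    have := hz.2
    simp
    grind
  · rw [h.diff_other]
    rintro x (hx | hx) y hy hxy
    · have := h.cross y hy.1 x hx hxy.symm
      have := hy.2
      simp at this
      tauto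
    · simpa using hx

/-- Connectivity passes to one side of a separation, once `p` and `q` are joined. -/
lemma Sep.descent (h : Sep G X A p q) (hY : ConnOn G Y) (hYX : Y ⊆ X) (hYA : (Y ∩ A).Nonempty)
    (hGH : ∀ x ∈ A, ∀ y ∈ A, G.Adj x y → H.Adj x y) (hH : H.Adj p q) : ConnOn H (Y ∩ A) := by
  classical
  refine ⟨hYA, fun f hf x hx y hy => ?_⟩
  have hpq : p ∈ Y → q ∈ Y → (f p ↔ f q) := fun h1 h2 => hf p ⟨h1, h.hp⟩ q ⟨h2, h.hq⟩ hH
  have := hY.2 (fun z => (z ∈ A ∧ f z) ∨ (z ∉ A ∧ ((p ∈ Y ∧ f p) ∨ (p ∉ Y ∧ f q)))) ?_ x hx.1 y hy.1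
  · have h1 := hx.2
    have h2 := hy.2
    simpa [h1, h2] using this
  · intro x hx y hy hxy
    have hxX := hYX hx
    have hyX := hYX hy
    by_cases hxA : x ∈ A <;> by_cases hyA : y ∈ A
    · have := hf x ⟨hx, hxA⟩ y ⟨hy, hyA⟩ (hGH x hxA y hyA hxy)
      simpa [hxA, hyA] using this
    · have := h.cross x hxA y ⟨hyX, hyA⟩ hxy
      simp only [hxA, hyA]
      rcases this with rfl | rfl
      · tauto
      · tauto
    · have := h.cross y hyA x ⟨hxX, hxA⟩ hxy.symm
      simp only [hxA, hyA]
      rcases this with rfl | rfl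
      · tauto
      · tauto
    · simp [hxA, hyA]

lemma Sep.descent₂ (h : Sep G X A p q) (hY : TwoConnOn G Y) (hYX : Y ⊆ X)
    (hYA : ∀ v, ((Y ∩ A) \ {v}).Nonempty)
    (hGH : ∀ x ∈ A, ∀ y ∈ A, G.Adj x y → H.Adj x y) (hH : H.Adj p q) : TwoConnOn H (Y ∩ A) := by
  refine ⟨h.descent hY.1 hYX ((hYA p).mono Set.sdiff_subset) hGH hH, fun v hv => ?_⟩
  have he : (Y ∩ A) \ {v} = (Y \ {v}) ∩ A := by ext; simp; tauto
  rw [he]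
  refine h.descent (hY.2 v hv.1) (Set.sdiff_subset.trans hYX) ?_ hGH hH
  rw [← he]
  exact hYA v

lemma Sep.nonempty_diff_pair (h : Sep G X A p q) (u v : V) (T : Set V) (hp : p ∈ T) (hq : q ∈ T)
    {r : V} (hr : r ∈ T) (hr2 : r ∉ ({p, q} : Set V)) : (T \ {u, v}).Nonempty := by
  have := h.ne
  simp at hr2
  by_contra hcon
  rw [Set.not_nonempty_iff_eq_empty, Set.sdiff_eq_empty] at hcon
  have h1 := hcon hp
  have h2 := hcon hq
  have h3 := hcon hr
  simp at h1 h2 h3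
  grind

lemma Sep.nonempty_diff (h : Sep G X A p q) (u v : V) : (A \ {u, v}).Nonempty := by
  obtain ⟨r, hr, hr2⟩ := h.int
  exact h.nonempty_diff_pair u v A h.hp h.hq hr hr2

lemma Sep.descent_all (h : Sep G X A p q) (hX : TwoConnOn G X)
    (hGH : ∀ x ∈ A, ∀ y ∈ A, G.Adj x y → H.Adj x y) (hH : H.Adj p q) : TwoConnOn H A := by
  have he : X ∩ A = A := Set.inter_eq_right.2 h.sub
  rw [← he]
  refine h.descent₂ hX subset_rfl (fun v => ?_) hGH hH
  rw [he]
  simpa using h.nonempty_diff v v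

/-- On the side of a separation opposite to `A`, a colouring takes the colour of `p` as long as it
is constant along the edges of that side and those to `p`. -/
lemma Sep.attach_rest (h : Sep G X A p q) (hX : TwoConnOn G X) {f : V → Prop}
    (hf : ∀ z ∈ X \ A, ∀ y ∈ X \ A, G.Adj z y → (f z ↔ f y))
    (hfp : ∀ z ∈ X \ A, G.Adj z p → (f z ↔ f p)) : ∀ z ∈ X \ A, (f z ↔ f p) := by
  refine attach (X := X) (q := q) (hX.2 q (h.sub h.hq)) (h.sub h.hp) h.ne Set.sdiff_subset
    (fun hh => hh.2 h.hp) (fun hh => hh.2 h.hq) (fun z hz y hy hzy => ?_) hf hfp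
  by_cases hyA : y ∈ A
  · exact Or.inr (h.cross y hyA z hz hzy.symm)
  · exact Or.inl ⟨hy, hyA⟩

/-- Connectivity of a part of `A` containing `p` or `q` in `G` with `p` and `q` joined extends to
its union with the opposite side. -/
lemma Sep.ascent (h : Sep G X A p q) (hX : TwoConnOn G X) (hY : ConnOn H (Y ∩ A)) (hYX : Y ⊆ X)
    (hR : X \ A ⊆ Y) (hpq : p ∈ Y ∨ q ∈ Y)
    (hHG : ∀ x ∈ A, ∀ y ∈ A, H.Adj x y → G.Adj x y ∨ s(x, y) = s(p, q)) : ConnOn G Y := by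
  refine ⟨hY.1.mono Set.inter_subset_left, fun f hf => ?_⟩
  have h1 : p ∈ Y → ∀ z ∈ X \ A, (f z ↔ f p) := fun hp =>
    h.attach_rest hX (fun z hz y hy => hf z (hR hz) y (hR hy)) (fun z hz => hf z (hR hz) p hp)
  have h2 : q ∈ Y → ∀ z ∈ X \ A, (f z ↔ f q) := fun hq =>
    h.comm.attach_rest hX (fun z hz y hy => hf z (hR hz) y (hR hy)) (fun z hz => hf z (hR hz) q hq)
  have h3 := hY.2 f (fun x hx y hy hxy => by
    rcases hHG x hx.2 y hy.2 hxy with h4 | h4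
    · exact hf x hx.1 y hy.1 h4
    · obtain ⟨r, hr⟩ := h.rest
      rcases Sym2.eq_iff.1 h4 with ⟨rfl, rfl⟩ | ⟨rfl, rfl⟩
      · rw [← h1 hx.1 r hr, h2 hy.1 r hr]
      · rw [← h1 hy.1 r hr, h2 hx.1 r hr])
  obtain ⟨t, htY, htA, ht⟩ : ∃ t ∈ Y, t ∈ A ∧ ∀ z ∈ X \ A, (f z ↔ f t) := by
    rcases hpq with hp | hq
    · exact ⟨p, hp, h.hp, h1 hp⟩
    · exact ⟨q, hq, h.hq, h2 hq⟩
  have h4 : ∀ z ∈ Y, (f z ↔ f t) := fun z hz => by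
    by_cases hzA : z ∈ A
    · exact h3 z ⟨hz, hzA⟩ t ⟨htY, htA⟩
    · exact ht z ⟨hYX hz, hzA⟩
  intro x hx y hy
  rw [h4 x hx, h4 y hy]

lemma Sep.ascent₂ (h : Sep G X A p q) (hX : TwoConnOn G X) (hT : TwoConnOn H T) (hTA : T ⊆ A)
    (hp : p ∈ T) (hq : q ∈ T) (h3 : (T \ {p, q}).Nonempty)
    (hHG : ∀ x ∈ A, ∀ y ∈ A, H.Adj x y → G.Adj x y ∨ s(x, y) = s(p, q)) :
    TwoConnOn G (T ∪ X \ A) := by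
  have hsub : T ∪ X \ A ⊆ X := Set.union_subset (hTA.trans h.sub) Set.sdiff_subset
  refine ⟨h.ascent hX (Y := T ∪ X \ A) ?_ hsub Set.subset_union_right (Or.inl (Or.inl hp)) hHG, ?_⟩
  · have he : (T ∪ X \ A) ∩ A = T := by ext z; simp; grind
    rw [he]; exact hT.1
  rintro v (hv | hv)
  · have he : ((T ∪ X \ A) \ {v}) ∩ A = T \ {v} := by ext z; simp; grind
    refine h.ascent hX ?_ (Set.sdiff_subset.trans hsub) ?_ ?_ hHG
    · rw [he]; exact hT.2 v hv
    · intro z hz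
      refine ⟨Or.inr hz, ?_⟩
      rintro rfl
      exact hz.2 (hTA hv)
    · have := h.ne
      by_cases hvp : v = p
      · right; exact ⟨Or.inl hq, by simp; grind⟩
      · left; exact ⟨Or.inl hp, by simp; grind⟩
  · have hvT : v ∉ T := fun hh => hv.2 (hTA hh)
    refine ⟨⟨p, Or.inl hp, by rintro rfl; exact hvT hp⟩, fun f hf => ?_⟩
    have hin : ∀ z ∈ T, z ∈ (T ∪ X \ A) \ {v} :=
      fun z hz => ⟨Or.inl hz, by rintro rfl; exact hvT hz⟩
    have hfT : ∀ t ∈ ({p, q} : Set V), ∀ x ∈ T \ {t}, ∀ y ∈ T \ {t}, (f x ↔ f y) := by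
      intro t ht
      refine (hT.2 t (by rcases ht with rfl | rfl <;> assumption)).2 f fun x hx y hy hxy => ?_
      rcases hHG x (hTA hx.1) y (hTA hy.1) hxy with h4 | h4
      · exact hf x (hin x hx.1) y (hin y hy.1) h4
      · have hx2 : x ≠ t := hx.2
        have hy2 : y ≠ t := hy.2
        rcases Sym2.eq_iff.1 h4 with ⟨rfl, rfl⟩ | ⟨rfl, rfl⟩ <;> simp at ht <;> grind
    obtain ⟨r, hrT, hr⟩ := h3
    simp at hr
    have hpq := h.ne
    have hfr : ∀ t ∈ T, (f t ↔ f r) := by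
      intro t ht
      by_cases htp : t = p
      · exact hfT q (by simp) t ⟨ht, by simp; grind⟩ r ⟨hrT, by simp; tauto⟩
      · exact hfT p (by simp) t ⟨ht, by simp; grind⟩ r ⟨hrT, by simp; tauto⟩
    have hfp := hfr p hp
    have hfq := hfr q hq
    -- outside `v` the colour of `r` can be spread over all of `A`
    have key := (hX.2 v hv.1).2 (fun z => (z ∈ A ∧ f r) ∨ (z ∉ A ∧ f z)) (fun x hx y hy hxy => by
      by_cases hxA : x ∈ A <;> by_cases hyA : y ∈ A
      · simp [hxA, hyA]
      · have h1 : f x ↔ f r := by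
          rcases h.cross x hxA y ⟨hy.1, hyA⟩ hxy with rfl | rfl <;> assumption
        have hxT : x ∈ T := by
          rcases h.cross x hxA y ⟨hy.1, hyA⟩ hxy with rfl | rfl <;> assumption
        have := hf x (hin x hxT) y ⟨Or.inr ⟨hy.1, hyA⟩, hy.2⟩ hxy
        simp [hxA, hyA]; tauto
      · have h1 : f y ↔ f r := by
          rcases h.cross y hyA x ⟨hx.1, hxA⟩ hxy.symm with rfl | rfl <;> assumption
        have hyT : y ∈ T := by
          rcases h.cross y hyA x ⟨hx.1, hxA⟩ hxy.symm with rfl | rfl <;> assumption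
        have := hf y (hin y hyT) x ⟨Or.inr ⟨hx.1, hxA⟩, hx.2⟩ hxy.symm
        simp [hxA, hyA]; tauto
      · have := hf x ⟨Or.inr ⟨hx.1, hxA⟩, hx.2⟩ y ⟨Or.inr ⟨hy.1, hyA⟩, hy.2⟩ hxy
        simpa [hxA, hyA] using this)
    have hall : ∀ z ∈ (T ∪ X \ A) \ {v}, (f z ↔ f r) := by
      rintro z ⟨hz | hz, hzv⟩
      · exact hfr z hz
      · have := key z ⟨hz.1, hzv⟩ p ⟨h.sub h.hp, (hin p hp).2⟩
        have hz2 := hz.2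
        have := h.hp
        simp_all
    intro x hx y hy
    rw [hall x hx, hall y hy]

/-- Contractibility of an edge other than `pq` is decided inside the side containing it. -/
lemma Sep.connOn_diff_iff (h : Sep G X A p q) (hX : TwoConnOn G X) (hu : u ∈ A) (hv : v ∈ A)
    (huv : s(u, v) ≠ s(p, q)) (hGH : ∀ x ∈ A, ∀ y ∈ A, G.Adj x y → H.Adj x y) (hH : H.Adj p q)
    (hHG : ∀ x ∈ A, ∀ y ∈ A, H.Adj x y → G.Adj x y ∨ s(x, y) = s(p, q)) :
    ConnOn G (X \ {u, v}) ↔ ConnOn H (A \ {u, v}) := by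
  have he : (X \ {u, v}) ∩ A = A \ {u, v} := by
    have := h.sub
    ext z; simp; grind
  constructor
  · intro hc
    rw [← he]
    refine h.descent hc Set.sdiff_subset ?_ hGH hH
    rw [he]
    exact h.nonempty_diff u v
  · intro hc
    refine h.ascent hX (H := H) (by rwa [he]) Set.sdiff_subset ?_ ?_ hHG
    · rintro z hz
      refine ⟨hz.1, ?_⟩
      rintro (rfl | rfl)
      · exact hz.2 hu
      · exact hz.2 hv
    · have h1 := h.sub h.hp
      have h2 := h.sub h.hq
      have h3 := h.ne
      by_contra hcon
      push Not at hcon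
      apply huv
      simp [h1, h2] at hcon
      rw [Sym2.eq_iff]
      grind
end

/-! ### Weights of vertex sets -/

/-- The total weight `w(E(S))` of the edges inside `S`. -/
noncomputable def wt {V : Type*} (G : SimpleGraph V) (w : Sym2 V → ℕ) (S : Set V) : ℕ :=
  ∑ᶠ e ∈ edgesIn G S, w e

open Classical in
/-- The weight function `w` with the weight of the edge `e` changed to `c`. -/
noncomputable def setWt {V : Type*} (w : Sym2 V → ℕ) (e : Sym2 V) (c : ℕ) : Sym2 V → ℕ :=
  fun x => if x = e then c else w x

lemma setWt_self {V : Type*} {w : Sym2 V → ℕ} {e : Sym2 V} {c : ℕ} : setWt w e c e = c := by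
  simp [setWt]

lemma setWt_of_ne {V : Type*} {w : Sym2 V → ℕ} {e x : Sym2 V} {c : ℕ} (h : x ≠ e) :
    setWt w e c x = w x := by
  simp [setWt, h]

/-- The part of the weighted condition on the subgraph of `G` induced on `X` that survives when a
separation is split: the equalities are required for the whole graph and for good flats with at
least three vertices, and the weight of an edge is prescribed only if it is not contractible.
The equalities are written without subtraction. -/
structure Weak {V : Type*} (G : SimpleGraph V) (X : Set V) (δ : ℕ) (w : Sym2 V → ℕ) : Prop where
  two : TwoConnOn G X
  total : wt G w X + δ = δ * X.ncard
  flat : ∀ S, FlatOn G X S → 3 ≤ S.ncard → wt G w S + 1 + δ = δ * S.ncard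
  nonc : ∀ u ∈ X, ∀ v ∈ X, G.Adj u v → ¬ ConnOn G (X \ {u, v}) → w s(u, v) = 1

/-- The condition `(♠)_δ` for the subgraph of `G` induced on `X`: non-contractible edges have
weight `1`, contractible edges have weight `δ - 1`, which is the equality for flats with two
vertices. -/
structure RSp {V : Type*} (G : SimpleGraph V) (X : Set V) (δ : ℕ) (w : Sym2 V → ℕ) : Prop
    extends Weak G X δ w where
  con : ∀ u ∈ X, ∀ v ∈ X, G.Adj u v → ConnOn G (X \ {u, v}) → w s(u, v) = δ - 1

section
variable {V : Type*} {G G' H : SimpleGraph V} {X Y Z S T A : Set V} {δ c : ℕ} {p q u v : V}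
  {w w' : Sym2 V → ℕ}

@[simp] lemma mem_edgesIn : s(u, v) ∈ edgesIn G S ↔ G.Adj u v ∧ u ∈ S ∧ v ∈ S := by
  simp [edgesIn]

lemma wt_congr (h : edgesIn G S = edgesIn G' S) (hw : ∀ e ∈ edgesIn G S, w e = w' e) :
    wt G w S = wt G' w' S := by
  unfold wt
  rw [← h]
  exact finsum_mem_congr rfl hw

lemma wt_pair (h : G.Adj u v) : wt G w {u, v} = w s(u, v) := by
  have : edgesIn G {u, v} = {s(u, v)} := by
    ext e
    induction e with | _ x y => ?_
    have := h.symm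
    have := fun x => G.irrefl (v := x)
    simp
    grind
  rw [wt, this, finsum_mem_singleton]

lemma TwoConnOn.eq_pair [Finite V] (hS : TwoConnOn G S) (h : S.ncard < 3) :
    ∃ u v, G.Adj u v ∧ S = {u, v} := by
  obtain ⟨u, hu⟩ := hS.1.1
  obtain ⟨v, hv, hvu⟩ := hS.exists_ne hu
  have he : S = {u, v} := by
    symm
    apply Set.eq_of_subset_of_ncard_le
    · rintro x (rfl | rfl) <;> assumption
    · rw [Set.ncard_pair hvu.symm]; omega
    · exact Set.toFinite _
  refine ⟨u, v, ?_, he⟩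
  by_contra hadj
  have := hS.1.2 (fun z => z = u) (fun x hx y hy hxy => by
    have h1 := hxy.ne
    have h2 := hxy.symm
    rw [he] at hx hy
    simp at hx hy
    grind) u hu v hv
  tauto

lemma TwoConnOn.two_le [Finite V] (hS : TwoConnOn G S) : 2 ≤ S.ncard := by
  obtain ⟨u, hu⟩ := hS.1.1
  obtain ⟨v, hv, hvu⟩ := hS.exists_ne hu
  rw [← Set.ncard_pair hvu.symm]
  apply Set.ncard_le_ncard _ (Set.toFinite _)
  rintro x (rfl | rfl) <;> assumption

lemma RSp.flat_eq [Finite V] (h : RSp G X δ w) (hδ : 1 ≤ δ) (hS : FlatOn G X S) :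
    wt G w S + 1 + δ = δ * S.ncard := by
  by_cases h3 : 3 ≤ S.ncard
  · exact h.flat S hS h3
  · obtain ⟨u, v, huv, rfl⟩ := hS.2.1.eq_pair (by omega)
    rw [wt_pair huv, h.con u (hS.1 (by simp)) v (hS.1 (by simp)) huv hS.2.2,
      Set.ncard_pair huv.ne]
    omega

/-- The condition only depends on the edges inside `X` and their weights. -/
lemma RSp.congr (h : RSp G X δ w) (hG : ∀ x ∈ X, ∀ y ∈ X, (G.Adj x y ↔ H.Adj x y))
    (hw : ∀ u ∈ X, ∀ v ∈ X, G.Adj u v → w s(u, v) = w' s(u, v)) : RSp H X δ w' := by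
  have he : ∀ S ⊆ X, wt G w S = wt H w' S := by
    intro S hS
    apply wt_congr
    · ext e
      induction e with | _ x y => ?_
      simp
      grind
    · intro e
      induction e with | _ x y => ?_
      simp
      grind
  have hc : ∀ Y ⊆ X, ConnOn H Y → ConnOn G Y := fun Y hY hYc =>
    hYc.congr fun x hx y hy => (hG x (hY hx) y (hY hy)).2
  have hc' : ∀ Y ⊆ X, ConnOn G Y → ConnOn H Y := fun Y hY hYc =>
    hYc.congr fun x hx y hy => (hG x (hY hx) y (hY hy)).1
  refine ⟨⟨h.two.congr fun x hx y hy => (hG x hx y hy).1, ?_, ?_, ?_⟩, ?_⟩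
  · rw [← he X subset_rfl]; exact h.total
  · intro S hS h3
    rw [← he S hS.1]
    exact h.flat S ⟨hS.1, hS.2.1.congr fun x hx y hy => (hG x (hS.1 hx) y (hS.1 hy)).2,
      hc _ Set.sdiff_subset hS.2.2⟩ h3
  · intro u hu v hv huv hn
    have huv' := (hG u hu v hv).2 huv
    rw [← hw u hu v hv huv']
    exact h.nonc u hu v hv huv' fun hh => hn (hc' _ Set.sdiff_subset hh)
  · intro u hu v hv huv hn
    have huv' := (hG u hu v hv).2 huv
    rw [← hw u hu v hv huv']
    exact h.con u hu v hv huv' (hc _ Set.sdiff_subset hn)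

/-! ### Splitting the weighted condition along a separation -/

lemma sup_edge_adj' {x y : V} : (G ⊔ edge p q).Adj x y ↔ G.Adj x y ∨ (s(x, y) = s(p, q) ∧ x ≠ y) := by
  rw [sup_adj, edge_adj, Sym2.eq_iff]

lemma Sep.union_rest_ncard [Finite V] (_h : Sep G X A p q) (hTA : T ⊆ A) :
    (T ∪ X \ A).ncard = T.ncard + (X \ A).ncard :=
  Set.ncard_union_eq (Set.disjoint_left.2 fun _ hx hx' => hx'.2 (hTA hx))

lemma wt_sup_edge_of_not (hpq : ¬ (p ∈ T ∧ q ∈ T)) :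
    wt (G ⊔ edge p q) (setWt w s(p, q) c) T = wt G w T := by
  apply wt_congr
  · ext e
    induction e with | _ x y => ?_
    simp only [mem_edgesIn, sup_edge_adj', Sym2.eq_iff]
    grind
  · intro e he
    rw [setWt_of_ne]
    rintro rfl
    simp at he
    tauto

lemma wt_sup_edge [Finite V] (hne : p ≠ q) (hp : p ∈ T) (hq : q ∈ T) :
    wt (G ⊔ edge p q) (setWt w s(p, q) c) T =
      c + ∑ᶠ e ∈ edgesIn G T \ {s(p, q)}, w e := by
  have he : edgesIn (G ⊔ edge p q) T = insert s(p, q) (edgesIn G T \ {s(p, q)}) := by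
    ext e
    induction e with | _ x y => ?_
    simp only [mem_edgesIn, sup_edge_adj', Set.mem_insert_iff, Set.mem_sdiff,
      Set.mem_singleton_iff]
    by_cases h : s(x, y) = s(p, q)
    · simp only [h]
      rw [Sym2.eq_iff] at h
      grind
    · simp [h]
  rw [wt, he, finsum_mem_insert _ (by simp) (Set.toFinite _), setWt_self]
  congr 1
  apply finsum_mem_congr rfl
  intro e he
  rw [setWt_of_ne he.2]

/-- If the side opposite to `A` has weight `c + δ|X \ A|`, it can be traded for an edge `pq` of
weight `c`. -/
lemma Sep.wt_union [Finite V] (h : Sep G X A p q) (hTA : T ⊆ A) (hp : p ∈ T) (hq : q ∈ T)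
    (hB : wt G w (X \ A ∪ {p, q}) = c + δ * (X \ A).ncard) :
    wt G w (T ∪ X \ A) =
      wt (G ⊔ edge p q) (setWt w s(p, q) c) T + δ * (X \ A).ncard := by
  have he : edgesIn G (T ∪ X \ A) = (edgesIn G T \ {s(p, q)}) ∪ edgesIn G (X \ A ∪ {p, q}) := by
    have hc := h.cross
    ext e
    induction e with | _ x y => ?_
    simp only [mem_edgesIn, Set.mem_union, Set.mem_sdiff, Set.mem_singleton_iff,
      Set.mem_insert_iff]
    by_cases hxy : G.Adj x y
    · have hyx := hxy.symm
      by_cases hxT : x ∈ T <;> by_cases hyT : y ∈ T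
      · have h1 := hTA hxT
        have h2 := hTA hyT
        simp [hxT, hyT, h1, h2, hxy]
        have := hxy.ne
        grind
      · have h1 := hTA hxT
        have := hc x h1 y
        simp [hxT, hyT, h1, hxy]
        grind
      · have h1 := hTA hyT
        have := hc y h1 x
        simp [hxT, hyT, h1, hxy]
        grind
      · simp [hxT, hyT, hxy]
        grind
    · simp [hxy]
  rw [wt, he, finsum_mem_union _ (Set.toFinite _) (Set.toFinite _), wt_sup_edge (w := w) (c := c) h.ne hp hq]
  · have := hB
    unfold wt at this
    omega
  · rw [Set.disjoint_left]
    intro e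
    induction e with | _ x y => ?_
    simp only [mem_edgesIn, Set.mem_union, Set.mem_sdiff, Set.mem_singleton_iff,
      Set.mem_insert_iff]
    rintro ⟨⟨hxy, hx, hy⟩, hne⟩ ⟨-, h1, h2⟩
    have h3 := hTA hx
    have h4 := hTA hy
    have := hxy.ne
    simp [h3, h4] at h1 h2
    apply hne
    rw [Sym2.eq_iff]
    grind

/-- A two-connected set which does not contain both `p` and `q` is a flat of the whole graph if
it is one of the side `A` with `p` and `q` joined. -/
lemma Sep.flat_of_flat (h : Sep G X A p q) (hX : TwoConnOn G X) (hS : FlatOn (G ⊔ edge p q) A S)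
    (hpq : ¬ (p ∈ S ∧ q ∈ S)) : FlatOn G X S := by
  refine ⟨hS.1.trans h.sub, hS.2.1.congr fun x hx y hy hxy => ?_, ?_⟩
  · rw [sup_edge_adj', Sym2.eq_iff] at hxy
    grind
  · refine h.ascent hX (H := G ⊔ edge p q) ?_ Set.sdiff_subset ?_ ?_ ?_
    · have : (X \ S) ∩ A = A \ S := by
        have := h.sub
        ext z; simp; grind
      rw [this]; exact hS.2.2
    · exact fun z hz => ⟨hz.1, fun hh => hz.2 (hS.1 hh)⟩
    · have := h.sub h.hp
      have := h.sub h.hq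
      simp
      tauto
    · intro x hx y hy hxy
      rw [sup_edge_adj'] at hxy
      tauto

lemma Sep.flat_union_of_flat (h : Sep G X A p q) (hX : TwoConnOn G X)
    (hS : FlatOn (G ⊔ edge p q) A S) (hp : p ∈ S) (hq : q ∈ S) (h3 : (S \ {p, q}).Nonempty) :
    FlatOn G X (S ∪ X \ A) := by
  refine ⟨Set.union_subset (hS.1.trans h.sub) Set.sdiff_subset,
    h.ascent₂ hX hS.2.1 hS.1 hp hq h3 ?_, ?_⟩
  · intro x hx y hy hxy
    rw [sup_edge_adj'] at hxy
    tauto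
  · have : X \ (S ∪ X \ A) = A \ S := by
      have := h.sub
      ext z; simp; grind
    rw [this]
    refine hS.2.2.congr fun x hx y hy hxy => ?_
    rw [sup_edge_adj', Sym2.eq_iff] at hxy
    have h1 := hx.2
    have h2 := hy.2
    grind

/-- On `A` minus `p`, `q`, joining `p` and `q` changes nothing. -/
lemma connOn_sup_edge_diff (hA : S ⊆ {p, q}ᶜ) : ConnOn (G ⊔ edge p q) S ↔ ConnOn G S := by
  constructor
  · refine fun hc => hc.congr fun x hx y hy hxy => ?_
    rw [sup_edge_adj', Sym2.eq_iff] at hxy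
    have h1 := hA hx
    have h2 := hA hy
    simp at h1 h2
    grind
  · exact fun hc => hc.congr fun x _ y _ hxy => Or.inl hxy

lemma Sep.connOn_diff_sup_iff (h : Sep G X A p q) (hX : TwoConnOn G X) (hu : u ∈ A) (hv : v ∈ A)
    (huv : s(u, v) ≠ s(p, q)) :
    ConnOn G (X \ {u, v}) ↔ ConnOn (G ⊔ edge p q) (A \ {u, v}) := by
  refine h.connOn_diff_iff hX hu hv huv (fun x _ y _ hxy => Or.inl hxy) ?_ ?_
  · rw [sup_edge_adj']; exact Or.inr ⟨rfl, h.ne⟩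
  · intro x _ y _ hxy
    rw [sup_edge_adj'] at hxy
    tauto

lemma Sep.weak [Finite V] (h : Sep G X A p q) (hW : Weak G X δ w)
    (hB : wt G w (X \ A ∪ {p, q}) = c + δ * (X \ A).ncard)
    (hc : ¬ ConnOn G (A \ {p, q}) → c = 1) :
    Weak (G ⊔ edge p q) A δ (setWt w s(p, q) c) := by
  have hX : A ∪ X \ A = X := Set.union_sdiff_cancel h.sub
  refine ⟨h.descent_all hW.two (fun x _ y _ hxy => Or.inl hxy)
    (sup_edge_adj'.2 (Or.inr ⟨rfl, h.ne⟩)), ?_, ?_, ?_⟩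
  · have h1 := h.wt_union subset_rfl h.hp h.hq hB
    have h2 := h.union_rest_ncard subset_rfl
    rw [hX] at h1 h2
    have h3 := hW.total
    rw [h2, mul_add] at h3
    omega
  · intro S hS h3
    by_cases hpq : p ∈ S ∧ q ∈ S
    · have hne : (S \ {p, q}).Nonempty := by
        by_contra hcon
        rw [Set.not_nonempty_iff_eq_empty, Set.sdiff_eq_empty] at hcon
        have := Set.ncard_le_ncard hcon (Set.toFinite _)
        rw [Set.ncard_pair h.ne] at this
        omega
      have h1 := h.wt_union hS.1 hpq.1 hpq.2 hB
      have h2 := h.union_rest_ncard hS.1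
      have h4 := hW.flat _ (h.flat_union_of_flat hW.two hS hpq.1 hpq.2 hne) (by omega)
      rw [h2, mul_add] at h4
      omega
    · rw [wt_sup_edge_of_not hpq]
      exact hW.flat S (h.flat_of_flat hW.two hS hpq) h3
  · intro u hu v hv huv hn
    by_cases he : s(u, v) = s(p, q)
    · rw [he, setWt_self]
      apply hc
      have he' : ({u, v} : Set V) = {p, q} := by
        rcases Sym2.eq_iff.1 he with ⟨rfl, rfl⟩ | ⟨rfl, rfl⟩
        · rfl
        · exact Set.pair_comm _ _
      rw [he', connOn_sup_edge_diff (fun x hx => hx.2)] at hn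
      exact hn
    · rw [setWt_of_ne he]
      rw [← h.connOn_diff_sup_iff hW.two hu hv he] at hn
      rw [sup_edge_adj'] at huv
      exact hW.nonc u (h.sub hu) v (h.sub hv) (by tauto) hn

lemma Sep.rsp [Finite V] (h : Sep G X A p q) (hW : Weak G X δ w)
    (hcon : ∀ u ∈ A, ∀ v ∈ A, G.Adj u v → s(u, v) ≠ s(p, q) → ConnOn G (X \ {u, v}) →
      w s(u, v) = δ - 1)
    (hB : wt G w (X \ A ∪ {p, q}) = c + δ * (X \ A).ncard)
    (hc : ¬ ConnOn G (A \ {p, q}) → c = 1) (hc' : ConnOn G (A \ {p, q}) → c = δ - 1) :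
    RSp (G ⊔ edge p q) A δ (setWt w s(p, q) c) := by
  refine ⟨h.weak hW hB hc, fun u hu v hv huv hn => ?_⟩
  by_cases he : s(u, v) = s(p, q)
  · rw [he, setWt_self]
    apply hc'
    have he' : ({u, v} : Set V) = {p, q} := by
      rcases Sym2.eq_iff.1 he with ⟨rfl, rfl⟩ | ⟨rfl, rfl⟩
      · rfl
      · exact Set.pair_comm _ _
    rw [he', connOn_sup_edge_diff (fun x hx => hx.2)] at hn
    exact hn
  · rw [setWt_of_ne he]
    rw [← h.connOn_diff_sup_iff hW.two hu hv he] at hn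
    rw [sup_edge_adj'] at huv
    exact hcon u hu v hv (by tauto) he hn

/-- If the opposite side is itself a flat, it is traded for an edge of weight `δ - 1`. -/
lemma Sep.wt_rest_of_flat [Finite V] (h : Sep G X A p q) (hδ : 1 ≤ δ) (hW : Weak G X δ w)
    (hB : TwoConnOn G (X \ A ∪ {p, q})) (hA : ConnOn G (A \ {p, q})) :
    wt G w (X \ A ∪ {p, q}) = (δ - 1) + δ * (X \ A).ncard := by
  have h1 : (X \ A ∪ {p, q}).ncard = (X \ A).ncard + 2 := by
    rw [Set.ncard_union_eq, Set.ncard_pair h.ne]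
    rw [Set.disjoint_right]
    rintro x (rfl | rfl) hx
    exacts [hx.2 h.hp, hx.2 h.hq]
  have h2 : 0 < (X \ A).ncard := (Set.ncard_pos (Set.toFinite _)).2 h.rest
  have := hW.flat _ ⟨h.other.sub, hB, by rw [h.diff_other]; exact hA⟩ (by omega)
  rw [h1, mul_add] at this
  omega

/-- If `A` is a flat and `p`, `q` are not adjacent, the opposite side is traded for an edge of
weight `1`. -/
lemma Sep.wt_rest_of_flat' [Finite V] (h : Sep G X A p q) (hW : Weak G X δ w)
    (hpq : ¬ G.Adj p q) (hA : TwoConnOn G A) (hR : ConnOn G (X \ A)) :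
    wt G w (X \ A ∪ {p, q}) = 1 + δ * (X \ A).ncard := by
  have h0 : (A : Set V).ncard ≥ 3 := by
    have h1 : A = A \ {p, q} ∪ {p, q} :=
      (Set.sdiff_union_of_subset (by rintro x (rfl | rfl); exacts [h.hp, h.hq])).symm
    rw [h1, Set.ncard_union_eq, Set.ncard_pair h.ne]
    · have : 0 < (A \ {p, q}).ncard := (Set.ncard_pos (Set.toFinite _)).2 h.int
      omega
    · exact Set.disjoint_sdiff_left
  have h1 := hW.flat A ⟨h.sub, hA, hR⟩ h0
  have h2 : A ∪ X \ A = X := Set.union_sdiff_cancel h.sub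
  -- with `c` the weight of the opposite side and no vertex of it counted, the weights add up
  have h3 := h.wt_union (δ := 0) (c := wt G w (X \ A ∪ {p, q})) (w := w) subset_rfl h.hp h.hq
    (by simp)
  have h4 := h.union_rest_ncard subset_rfl
  rw [wt_sup_edge h.ne h.hp h.hq] at h3
  have h5 : edgesIn G A \ {s(p, q)} = edgesIn G A := by
    apply Set.sdiff_singleton_eq_self
    simp [hpq]
  rw [h5] at h3
  have h6 := hW.total
  rw [h2] at h3 h4
  change _ = _ + wt G w A + _ at h3
  rw [h4, mul_add] at h6
  omega
end

/-! ### No edge is both deletable and contractible -/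

section
variable {V : Type*} {G G' H : SimpleGraph V} {X Y Z S T A : Set V} {δ c : ℕ} {p q u v : V}
  {w w' : Sym2 V → ℕ}

lemma exists_colouring (hX : X.Nonempty) (h : ¬ ConnOn G X) : ∃ f : V → Prop,
    (∀ x ∈ X, ∀ y ∈ X, G.Adj x y → (f x ↔ f y)) ∧ ∃ a ∈ X, ∃ b ∈ X, ¬ (f a ↔ f b) := by
  by_contra hcon
  refine h ⟨hX, fun f hf x hx y hy => ?_⟩
  by_contra hxy
  exact hcon ⟨f, hf, x, hx, y, hy, hxy⟩

lemma Sep.not_connOn (h : Sep G X A p q) : ¬ ConnOn G (X \ {p, q}) := by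
  intro hc
  obtain ⟨a, haA, ha⟩ := h.int
  obtain ⟨b, hbX, hbA⟩ := h.rest
  have hb : b ∉ ({p, q} : Set V) := by
    rintro (rfl | rfl)
    exacts [hbA h.hp, hbA h.hq]
  have := hc.2 (fun z => z ∈ A) (fun x hx y hy hxy => by
    have h1 := fun hh hh' => h.cross x hh y ⟨hy.1, hh'⟩ hxy
    have h2 := fun hh hh' => h.cross y hh x ⟨hx.1, hh'⟩ hxy.symm
    have h3 := hx.2
    have h4 := hy.2
    simp at h3 h4
    tauto) a ⟨h.sub haA, ha⟩ b ⟨hbX, hb⟩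
  tauto

/-- A colour class of `X` minus `p`, `q`, together with `p` and `q`, is a side of a separation. -/
lemma sep_of_colouring (hp : p ∈ X) (hq : q ∈ X) (hpq : p ≠ q) {f : V → Prop}
    (hf : ∀ x ∈ X \ {p, q}, ∀ y ∈ X \ {p, q}, G.Adj x y → (f x ↔ f y)) {a b : V}
    (ha : a ∈ X \ {p, q}) (hb : b ∈ X \ {p, q}) (hab : ¬ (f a ↔ f b)) :
    Sep G X ({z ∈ X \ {p, q} | f z ↔ f a} ∪ {p, q}) p q := by
  refine ⟨?_, by simp, by simp, hpq, ⟨b, hb.1, ?_⟩, ⟨a, ?_, ha.2⟩, ?_⟩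
  · rintro x (hx | rfl | rfl)
    exacts [hx.1.1, hp, hq]
  · rintro (hh | hh)
    · exact hab hh.2.symm
    · exact hb.2 hh
  · exact Or.inl ⟨ha, Iff.rfl⟩
  · rintro x (hx | hx) y ⟨hyX, hy⟩ hxy
    · exfalso
      have hy' : y ∈ X \ {p, q} := ⟨hyX, fun hh => hy (Or.inr hh)⟩
      exact hy (Or.inl ⟨hy', (hf x hx.1 y hy' hxy).symm.trans hx.2⟩)
    · exact hx

lemma Sep.ncard_lt [Finite V] (h : Sep G X A p q) : A.ncard < X.ncard := by
  apply Set.ncard_lt_ncard _ (Set.toFinite _)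
  refine ⟨h.sub, fun hh => ?_⟩
  obtain ⟨b, hbX, hbA⟩ := h.rest
  exact hbA (hh hbX)

lemma Sep.three_le [Finite V] (h : Sep G X A p q) : 3 ≤ A.ncard := by
  have h1 : A = A \ {p, q} ∪ {p, q} :=
    (Set.sdiff_union_of_subset (by rintro x (rfl | rfl); exacts [h.hp, h.hq])).symm
  rw [h1, Set.ncard_union_eq, Set.ncard_pair h.ne]
  · have : 0 < (A \ {p, q}).ncard := (Set.ncard_pos (Set.toFinite _)).2 h.int
    omega
  · exact Set.disjoint_sdiff_left

/-- If a side of a separation by nonadjacent `p`, `q` is not `2`-connected, then it has a cut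
vertex separating `p` from `q`. -/
lemma Sep.exists_cut [Finite V] (h : Sep G X A p q) (hX : TwoConnOn G X) (hpq : ¬ G.Adj p q)
    (hA : ¬ TwoConnOn G A) : ∃ c ∈ A \ {p, q}, ∃ f : V → Prop,
      (∀ x ∈ A \ {c}, ∀ y ∈ A \ {c}, G.Adj x y → (f x ↔ f y)) ∧ ¬ (f p ↔ f q) := by
  have hH : TwoConnOn (G ⊔ edge p q) A := h.descent_all hX (fun x _ y _ hxy => Or.inl hxy)
    (sup_edge_adj'.2 (Or.inr ⟨rfl, h.ne⟩))
  by_contra hcon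
  push Not at hcon
  have key : ∀ v ∈ A, ConnOn G (A \ {v}) := by
    intro v hv
    refine ⟨(hH.2 v hv).1, fun f hf => (hH.2 v hv).2 f fun x hx y hy hxy => ?_⟩
    rcases sup_edge_adj'.1 hxy with h1 | ⟨h1, -⟩
    · exact hf x hx y hy h1
    · have hx2 : x ≠ v := hx.2
      have hy2 : y ≠ v := hy.2
      have := hcon v ⟨hv, by rcases Sym2.eq_iff.1 h1 with ⟨rfl, rfl⟩ | ⟨rfl, rfl⟩ <;> simp <;> grind⟩
        f hf
      rcases Sym2.eq_iff.1 h1 with ⟨rfl, rfl⟩ | ⟨rfl, rfl⟩ <;> tauto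
  exact hA ⟨connOn_of_deletions (by have := h.three_le; omega) key, key⟩

/-- A side of a separation by nonadjacent vertices that is not `2`-connected is connected after
removal of these vertices. -/
lemma Sep.connOn_rest [Finite V] (h : Sep G X A p q) (hX : TwoConnOn G X) (hpq : ¬ G.Adj p q)
    (hB : ¬ TwoConnOn G (X \ A ∪ {p, q})) : ConnOn G (X \ A) := by
  by_contra hR
  obtain ⟨g, hg, a, ha, b, hb, hab⟩ := exists_colouring h.rest hR
  obtain ⟨c, hc, f, hf, hfpq⟩ := h.other.exists_cut hX hpq hB
  have hcR : c ∈ X \ A := by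
    rcases hc.1 with h1 | h1
    · exact h1
    · exact absurd h1 hc.2
  have key : ∀ p q, Sep G X A p q → p ∈ (X \ A ∪ {p, q} : Set V) \ {c} →
      (∀ x ∈ (X \ A ∪ {p, q}) \ {c}, ∀ y ∈ (X \ A ∪ {p, q}) \ {c}, G.Adj x y → (f x ↔ f y)) →
      ∀ z ∈ {z ∈ X \ A | ¬ (g z ↔ g c)}, (f z ↔ f p) := by
    intro p q h hpc hf
    have hmem : ∀ z ∈ {z ∈ X \ A | ¬ (g z ↔ g c)}, z ∈ (X \ A ∪ {p, q}) \ {c} := by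
      intro z hz
      refine ⟨Or.inl hz.1, ?_⟩
      rintro rfl
      exact hz.2 Iff.rfl
    refine attach (X := X) (q := q) (hX.2 q (h.sub h.hq)) (h.sub h.hp) h.ne (fun z hz => hz.1.1)
      (fun hz => hz.1.2 h.hp) (fun hz => hz.1.2 h.hq) ?_ ?_ ?_
    · intro z hz y hy hzy
      by_cases hyA : y ∈ A
      · exact Or.inr (h.cross y hyA z hz.1 hzy.symm)
      · have := hg z hz.1 y ⟨hy, hyA⟩ hzy
        have := hz.2
        exact Or.inl ⟨⟨hy, hyA⟩, by tauto⟩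
    · exact fun z hz y hy hzy => hf z (hmem z hz) y (hmem y hy) hzy
    · exact fun z hz hzy => hf z (hmem z hz) p hpc hzy
  have hcp : p ≠ c ∧ q ≠ c := by
    have := hc.2
    simp at this
    grind
  obtain ⟨z, hz⟩ : ∃ z, z ∈ {z ∈ X \ A | ¬ (g z ↔ g c)} := by
    by_cases h1 : g a ↔ g c
    · exact ⟨b, hb, by tauto⟩
    · exact ⟨a, ha, h1⟩
  have h1 := key p q h ⟨by simp, hcp.1⟩ hf z hz
  have h2 := key q p h.comm ⟨by simp, hcp.2⟩ (by rw [Set.pair_comm]; exact hf) z hz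
  tauto

/-- Removing each vertex of `X` in turn, every edge survives `|X| - 2` times. -/
lemma sum_wt_diff [Finite V] : ∑ᶠ x ∈ X, wt G w (X \ {x}) = (X.ncard - 2) * wt G w X := by
  classical
  have hfX : X.Finite := Set.toFinite _
  have hfE : (edgesIn G X).Finite := Set.toFinite _
  have h1 : ∀ x, wt G w (X \ {x}) = ∑ e ∈ hfE.toFinset, if x ∈ e then 0 else w e := by
    intro x
    have he : edgesIn G (X \ {x}) = ((hfE.toFinset.filter fun e => x ∉ e : Finset (Sym2 V)) :
        Set (Sym2 V)) := by
      ext e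
      induction e with | _ a b => ?_
      simp
      grind
    rw [wt, he, finsum_mem_coe_finset, Finset.sum_filter]
    apply Finset.sum_congr rfl
    intro e _
    split_ifs <;> tauto
  rw [finsum_mem_eq_finite_toFinset_sum _ hfX, Finset.sum_congr rfl fun x _ => h1 x,
    Finset.sum_comm, wt, finsum_mem_eq_finite_toFinset_sum _ hfE, Finset.mul_sum]
  apply Finset.sum_congr rfl
  intro e he
  induction e with | _ a b => ?_
  simp at he
  have h2 : hfX.toFinset.filter (fun x => x ∉ s(a, b)) = hfX.toFinset \ {a, b} := by
    ext x
    simp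
  have h3 : ({a, b} : Finset V) ⊆ hfX.toFinset := by
    intro x
    simp
    grind
  have h4 : ∀ x, (if x ∈ s(a, b) then 0 else w s(a, b)) = if x ∉ s(a, b) then w s(a, b) else 0 := by
    intro x
    split_ifs <;> rfl
  simp only [h4]
  rw [← Finset.sum_filter, h2, Finset.sum_const, Finset.card_sdiff_of_subset h3,
    Finset.card_pair he.1.ne, smul_eq_mul, Set.ncard_eq_toFinset_card _ hfX]

/-- If `X` has no two-vertex separation, all vertex-deleted subgraphs are good flats and the
equalities contradict each other. -/
lemma false_of_no_sep [Finite V] (hδ : 3 ≤ δ) (hW : Weak G X δ w) (hX : 4 ≤ X.ncard)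
    (hs : ∀ A p q, ¬ Sep G X A p q) : False := by
  have hflat : ∀ x ∈ X, FlatOn G X (X \ {x}) := by
    intro x hx
    refine ⟨Set.sdiff_subset, ⟨hW.two.2 x hx, fun y hy => ?_⟩, ?_⟩
    · by_contra hc
      have he : (X \ {x}) \ {y} = X \ {x, y} := by ext; simp; tauto
      rw [he] at hc
      have hne : (X \ {x, y}).Nonempty := by
        by_contra hcon
        rw [Set.not_nonempty_iff_eq_empty, Set.sdiff_eq_empty] at hcon
        have := Set.ncard_le_ncard hcon (Set.toFinite _)
        have := Set.ncard_insert_le x {y}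
        rw [Set.ncard_singleton] at this
        omega
      obtain ⟨f, hf, a, ha, b, hb, hab⟩ := exists_colouring hne hc
      exact hs _ _ _ (sep_of_colouring hx hy.1 (fun hh => hy.2 hh.symm) hf ha hb hab)
    · have he : X \ (X \ {x}) = {x} := by ext; simp; grind
      rw [he]
      exact connOn_singleton x
  obtain ⟨n, hn⟩ : ∃ n, X.ncard = n + 4 := ⟨X.ncard - 4, by omega⟩
  have h1 : ∀ x ∈ X, wt G w (X \ {x}) = δ * (n + 2) - 1 := by
    intro x hx
    have h2 : (X \ {x}).ncard = n + 3 := by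
      have := Set.ncard_sdiff_singleton_add_one hx (Set.toFinite _)
      omega
    have h3 := hW.flat _ (hflat x hx) (by omega)
    rw [h2, show n + 3 = (n + 2) + 1 by ring, mul_add, mul_one] at h3
    omega
  have h2 := sum_wt_diff (G := G) (w := w) (X := X)
  rw [finsum_mem_congr rfl h1, finsum_mem_eq_finite_toFinset_sum _ (Set.toFinite X),
    Finset.sum_const, smul_eq_mul, ← Set.ncard_eq_toFinset_card _ (Set.toFinite X)] at h2
  have h3 := hW.total
  rw [hn] at h2 h3
  have h4 : wt G w X = δ * (n + 3) := by
    rw [show n + 4 = (n + 3) + 1 by ring, mul_add, mul_one] at h3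
    omega
  rw [h4, show n + 4 - 2 = n + 2 by omega] at h2
  have h5 : δ * (n + 2) - 1 + 1 = δ * (n + 2) := by
    have : 0 < δ * (n + 2) := by positivity
    omega
  generalize δ * (n + 2) - 1 = t at h2 h5
  nlinarith

/-- Suppose that `A` is a smallest side containing `u` and `v` of a two-vertex separation and that
`uv` is deletable. Then no vertex `c'` of `A` separates `p` from `q` inside `A` with the edge `uv`
on the side of `p`. Otherwise `p`, `c'` give a smaller separation, or `uv` is the edge `pc'` and
deleting it makes `q` a cut vertex. -/
lemma Sep.false_of_min [Finite V] {c' : V} (h : Sep G X A p q) (hu : u ∈ A) (hv : v ∈ A)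
    (huv : G.Adj u v) (hdel : TwoConnOn (G.deleteEdges {s(u, v)}) X)
    (hmin : ∀ A' p' q', Sep G X A' p' q' → u ∈ A' → v ∈ A' → A.ncard ≤ A'.ncard)
    (hc : c' ∈ A \ {p, q}) {f : V → Prop}
    (hf : ∀ x ∈ A \ {c'}, ∀ y ∈ A \ {c'}, G.Adj x y → (f x ↔ f y)) (hpq : ¬ (f p ↔ f q))
    (hu' : u ≠ c' → (f u ↔ f p)) (hv' : v ≠ c' → (f v ↔ f p)) : False := by
  have hcp : p ≠ c' ∧ q ≠ c' := by
    have := hc.2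
    simp at this
    grind
  set A' := {z ∈ A | z ≠ c' → (f z ↔ f p)} with hA'
  have hpA' : p ∈ A' := ⟨h.hp, fun _ => Iff.rfl⟩
  have hcA' : c' ∈ A' := ⟨hc.1, fun hh => absurd rfl hh⟩
  by_cases hne : (A' \ {p, c'}).Nonempty
  · have hsep : Sep G X A' p c' := by
      refine ⟨fun z hz => h.sub hz.1, hpA', hcA', hcp.1, ?_, hne, ?_⟩
      · exact h.rest.mono fun z hz => ⟨hz.1, fun hh => hz.2 hh.1⟩
      · intro x hx y hy hxy
        by_cases hyA : y ∈ A
        · by_contra hcon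
          push Not at hcon
          have hyc : y ≠ c' := by
            rintro rfl
            exact hy.2 hcA'
          refine hy.2 ⟨hyA, fun _ => ?_⟩
          rw [← hf x ⟨hx.1, hcon.2⟩ y ⟨hyA, hyc⟩ hxy]
          exact hx.2 hcon.2
        · rcases h.cross x hx.1 y ⟨hy.1, hyA⟩ hxy with rfl | rfl
          · exact Or.inl rfl
          · exact absurd (hx.2 hcp.2).symm hpq
    have h1 := hmin A' p c' hsep ⟨hu, hu'⟩ ⟨hv, hv'⟩
    have h2 : A'.ncard < A.ncard := by
      apply Set.ncard_lt_ncard _ (Set.toFinite _)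
      refine ⟨fun z hz => hz.1, fun hh => ?_⟩
      exact hpq ((hh h.hq).2 hcp.2).symm
    omega
  · rw [Set.not_nonempty_iff_eq_empty, Set.sdiff_eq_empty] at hne
    -- then `uv` is the edge `pc'`, the only link between `p` and `A` minus `p`, `q`
    have hsuv : s(u, v) = s(p, c') := by
      have h1 := hne ⟨hu, hu'⟩
      have h2 := hne ⟨hv, hv'⟩
      have := huv.ne
      simp at h1 h2
      rw [Sym2.eq_iff]
      grind
    have := (hdel.2 q (h.sub h.hq)).2 (fun z => z ∈ A ∧ z ≠ p) (fun x hx y hy hxy => by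
      have hx2 : x ≠ q := hx.2
      have hy2 : y ≠ q := hy.2
      rw [deleteEdges_adj, hsuv] at hxy
      obtain ⟨hxy, hxy2⟩ := hxy
      have aux : ∀ x y, G.Adj x y → s(x, y) ∉ ({s(p, c')} : Set (Sym2 V)) → x ∈ X → y ∈ X →
          x ≠ q → y ≠ q → x ∈ A → x ≠ p → y ∈ A ∧ y ≠ p := by
        intro x y hxy hxy2 hxX hyX hx2 hy2 hxA hxp
        refine ⟨?_, ?_⟩
        · by_contra hyA
          rcases h.cross x hxA y ⟨hyX, hyA⟩ hxy <;> contradiction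
        · rintro rfl
          have hxc : x ≠ c' := by
            rintro rfl
            exact hxy2 Sym2.eq_swap
          have := hne ⟨hxA, fun _ => hf x ⟨hxA, hxc⟩ y ⟨h.hp, hcp.1⟩ hxy⟩
          simp at this
          tauto
      have h1 := aux x y hxy hxy2 hx.1 hy.1 hx2 hy2
      have h2 := aux y x hxy.symm (fun hh => hxy2 (Sym2.eq_swap.trans hh)) hy.1 hx.1 hy2 hx2
      tauto) p ⟨h.sub h.hp, h.ne⟩ c' ⟨h.sub hc.1, hcp.2.symm⟩
    exact (this.2 ⟨hc.1, hcp.1.symm⟩).2 rfl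

/-- In a graph satisfying the weak weighted condition, no edge is both deletable and
contractible If two vertices separate the graph, take a smallest side containing
`u` and `v` and replace the opposite side by an edge: `uv` stays deletable and contractible in this
smaller graph. -/
theorem Weak.not_deletable_contractible [Finite V] (hδ : 3 ≤ δ) : ∀ (n : ℕ) (G : SimpleGraph V)
    (X : Set V) (w : Sym2 V → ℕ) (u v : V), X.ncard = n → Weak G X δ w → u ∈ X → v ∈ X →
    G.Adj u v → TwoConnOn (G.deleteEdges {s(u, v)}) X → ConnOn G (X \ {u, v}) → False := by
  intro n
  induction n using Nat.strong_induction_on with | _ n ih => ?_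
  intro G X w u v hn hW hu hv huv hdel hcon
  have hne := huv.ne
  by_cases hsep : ∃ n A p q, Sep G X A p q ∧ u ∈ A ∧ v ∈ A ∧ A.ncard = n
  · classical
    obtain ⟨A, p, q, h, huA, hvA, hA⟩ := Nat.find_spec hsep
    have hmin : ∀ A' p' q', Sep G X A' p' q' → u ∈ A' → v ∈ A' → A.ncard ≤ A'.ncard := by
      intro A' p' q' h' hu' hv'
      rw [hA]
      exact Nat.find_min' hsep ⟨A', p', q', h', hu', hv', rfl⟩
    clear hA
    have hse : s(u, v) ≠ s(p, q) := by
      intro he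
      apply h.not_connOn
      rcases Sym2.eq_iff.1 he with ⟨rfl, rfl⟩ | ⟨rfl, rfl⟩
      · exact hcon
      · rw [Set.pair_comm]; exact hcon
    have hAc : ConnOn G (A \ {p, q}) := by
      by_contra hc
      obtain ⟨f, hf, a, ha, b, hb, hab⟩ := exists_colouring h.int hc
      obtain ⟨t, ht, htu⟩ : ∃ t ∈ A \ {p, q}, t = u ∨ t = v := by
        by_contra hcon2
        push Not at hcon2
        have h1 := fun hh => (hcon2 u ⟨huA, hh⟩).1 rfl
        have h2 := fun hh => (hcon2 v ⟨hvA, hh⟩).2 rfl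
        apply hse
        simp at h1 h2
        rw [Sym2.eq_iff]
        grind
      set A' := {z ∈ A \ {p, q} | f z ↔ f t} ∪ {p, q} with hA'
      have hsub : A' ⊆ A := by
        rintro x (hx | rfl | rfl)
        exacts [hx.1.1, h.hp, h.hq]
      have hlt : A'.ncard < A.ncard := by
        apply Set.ncard_lt_ncard _ (Set.toFinite _)
        refine ⟨hsub, fun hh => ?_⟩
        have aux : ∀ z ∈ A \ {p, q}, f z ↔ f t := by
          intro z hz
          rcases hh hz.1 with h1 | h1
          · exact h1.2
          · exact absurd h1 hz.2
        exact hab ((aux a ha).trans (aux b hb).symm)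
      have hmem : ∀ z ∈ A, (z = t ∨ G.Adj z t) → z ∈ A' := by
        intro z hz hzt
        by_cases hz2 : z ∈ ({p, q} : Set V)
        · exact Or.inr hz2
        · refine Or.inl ⟨⟨hz, hz2⟩, ?_⟩
          rcases hzt with rfl | hzt
          · rfl
          · exact hf z ⟨hz, hz2⟩ t ht hzt
      have h' : Sep G X A' p q := by
        refine ⟨hsub.trans h.sub, by simp [hA'], by simp [hA'], h.ne,
          h.rest.mono fun z hz => ⟨hz.1, fun hh => hz.2 (hsub hh)⟩,
          ⟨t, hmem t ht.1 (Or.inl rfl), ht.2⟩, ?_⟩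
        rintro x (hx | hx) y ⟨hyX, hy⟩ hxy
        · by_cases hyA : y ∈ A
          · exfalso
            have hy' : y ∈ A \ {p, q} := ⟨hyA, fun hh => hy (Or.inr hh)⟩
            exact hy (Or.inl ⟨hy', (hf x hx.1 y hy' hxy).symm.trans hx.2⟩)
          · exact h.cross x hx.1.1 y ⟨hyX, hyA⟩ hxy
        · exact hx
      have := hmin A' p q h' (hmem u huA (by rcases htu with rfl | rfl <;> tauto))
        (hmem v hvA (by rcases htu with rfl | rfl; exacts [Or.inr huv.symm, Or.inl rfl]))
      omega
    have hA2 : ¬ G.Adj p q → TwoConnOn G A := by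
      intro hpq
      by_contra hnot
      obtain ⟨c', hc', f, hf, hfpq⟩ := h.exists_cut hW.two hpq hnot
      have h1 : u ≠ c' → v ≠ c' → (f u ↔ f v) := fun h1 h2 => hf u ⟨huA, h1⟩ v ⟨hvA, h2⟩ huv
      by_cases hcase : (u ≠ c' → (f u ↔ f p)) ∧ (v ≠ c' → (f v ↔ f p))
      · exact h.false_of_min huA hvA huv hdel hmin hc' hf hfpq hcase.1 hcase.2
      · exact h.comm.false_of_min huA hvA huv hdel hmin (by rwa [Set.pair_comm]) hf
          (fun hh => hfpq hh.symm) (by tauto) (by tauto)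
    obtain ⟨c, hB, hc⟩ : ∃ c, wt G w (X \ A ∪ {p, q}) = c + δ * (X \ A).ncard ∧
        (¬ ConnOn G (A \ {p, q}) → c = 1) := by
      by_cases hB2 : TwoConnOn G (X \ A ∪ {p, q})
      · exact ⟨δ - 1, h.wt_rest_of_flat (by omega) hW hB2 hAc, fun hh => absurd hAc hh⟩
      · have hpq : ¬ G.Adj p q := fun hpq =>
          hB2 (h.other.descent_all hW.two (fun _ _ _ _ hxy => hxy) hpq)
        exact ⟨1, h.wt_rest_of_flat' hW hpq (hA2 hpq) (h.connOn_rest hW.two hpq hB2), fun _ => rfl⟩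
    refine ih A.ncard (hn ▸ h.ncard_lt) (G ⊔ edge p q) A _ u v rfl (h.weak hW hB hc) huA hvA
      (Or.inl huv) ?_ ?_
    · refine (h.mono (deleteEdges_le _)).descent_all hdel ?_ ?_
      · intro x _ y _ hxy
        rw [deleteEdges_adj] at hxy ⊢
        exact ⟨Or.inl hxy.1, hxy.2⟩
      · rw [deleteEdges_adj, sup_edge_adj']
        exact ⟨Or.inr ⟨rfl, h.ne⟩, fun hh => hse hh.symm⟩
    · exact (h.connOn_diff_sup_iff hW.two huA hvA hse).1 hcon
  · refine false_of_no_sep hδ hW ?_ ?_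
    · have h1 : 0 < (X \ {u, v}).ncard := (Set.ncard_pos (Set.toFinite _)).2 hcon.1
      have h2 : (X \ {u, v}).ncard + 2 = X.ncard := by
        rw [← Set.ncard_pair hne]
        exact Set.ncard_sdiff_add_ncard_of_subset (by rintro x (rfl | rfl) <;> assumption)
      by_contra hlt
      obtain ⟨z, hz⟩ := Set.ncard_eq_one.1 (show (X \ {u, v}).ncard = 1 by omega)
      have hzX : z ∈ X \ {u, v} := by rw [hz]; rfl
      have hz2 := hzX.2
      simp at hz2
      have := (hdel.2 z hzX.1).2 (fun x => x = u) (fun x hx y hy hxy => by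
        have hx2 : x ≠ z := hx.2
        have hy2 : y ≠ z := hy.2
        have hx3 : x = u ∨ x = v := by
          by_contra hh
          have : x ∈ X \ {u, v} := ⟨hx.1, by simpa using hh⟩
          rw [hz] at this
          exact hx2 this
        have hy3 : y = u ∨ y = v := by
          by_contra hh
          have : y ∈ X \ {u, v} := ⟨hy.1, by simpa using hh⟩
          rw [hz] at this
          exact hy2 this
        have h1 := hxy.ne
        rw [deleteEdges_adj] at hxy
        have h2 := hxy.2
        simp at h2
        grind) u ⟨hu, fun hh => hz2.1 hh.symm⟩ v ⟨hv, fun hh => hz2.2 hh.symm⟩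
      grind
    · intro A p q h
      by_cases huA : u ∈ A ∧ v ∈ A
      · exact hsep ⟨_, A, p, q, h, huA.1, huA.2, rfl⟩
      · have h1 := fun hh hh' => h.cross u hh v ⟨hv, hh'⟩ huv
        have h2 := fun hh hh' => h.cross v hh u ⟨hu, hh'⟩ huv.symm
        refine hsep ⟨_, _, p, q, h.other, ?_, ?_, rfl⟩
        · by_cases hh : u ∈ A
          · right; exact h1 hh (by tauto)
          · left; exact ⟨hu, hh⟩
        · by_cases hh : v ∈ A
          · right; exact h2 hh (by tauto)
          · left; exact ⟨hv, hh⟩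
end

/-! ### Ears -/

/-- The subgraph of `G` induced on `X` consists of the one induced on `A` and of an ear
`Q 0, …, Q s` with at least two edges, whose ends lie in `A`. -/
structure Ear {V : Type*} (G : SimpleGraph V) (X A : Set V) (s : ℕ) (Q : ℕ → V) : Prop where
  sub : A ⊆ X
  two_le : 2 ≤ s
  hp : Q 0 ∈ A
  hq : Q s ∈ A
  inj : ∀ i ≤ s, ∀ j ≤ s, Q i = Q j → i = j
  mem : ∀ i, 0 < i → i < s → Q i ∈ X \ A
  cover : ∀ z ∈ X \ A, ∃ i, 0 < i ∧ i < s ∧ Q i = z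
  edge : ∀ x ∈ X, ∀ y ∈ X, G.Adj x y → (x ∈ A ∧ y ∈ A) ∨ ∃ i < s, s(x, y) = s(Q i, Q (i + 1))
  adj : ∀ i < s, G.Adj (Q i) (Q (i + 1))

section
variable {V : Type*} {G G' H : SimpleGraph V} {X Y Z S T A : Set V} {δ c s : ℕ} {p q u v : V}
  {w w' : Sym2 V → ℕ} {Q : ℕ → V}

lemma iff_of_path {f : V → Prop} {a b : ℕ} (hab : a ≤ b)
    (h : ∀ k, a ≤ k → k < b → (f (Q k) ↔ f (Q (k + 1)))) : f (Q a) ↔ f (Q b) := by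
  induction b, hab using Nat.le_induction with
  | base => rfl
  | succ b hb ih => exact (ih fun k h1 h2 => h k h1 (by omega)).trans (h b hb (by omega))

/-- Adding an ear to a `2`-connected graph keeps it `2`-connected. -/
lemma TwoConnOn.add_ear (hT : TwoConnOn G T) (h0 : Q 0 ∈ T) (hs : Q s ∈ T)
    (inj : ∀ i ≤ s, ∀ j ≤ s, Q i = Q j → i = j) (adj : ∀ i < s, G.Adj (Q i) (Q (i + 1))) :
    TwoConnOn G (T ∪ {z | ∃ i ≤ s, Q i = z}) := by
  have hQ : ∀ i ≤ s, Q i ∈ T ∪ {z | ∃ i ≤ s, Q i = z} := fun i hi => Or.inr ⟨i, hi, rfl⟩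
  have key : ∀ v, ConnOn G (T \ {v}) → ConnOn G ((T ∪ {z | ∃ i ≤ s, Q i = z}) \ {v}) := by
    intro v hv
    refine ⟨hv.1.mono (Set.sdiff_subset_sdiff_left Set.subset_union_left), fun f hf => ?_⟩
    have h1 : ∀ z ∈ (T ∪ {z | ∃ i ≤ s, Q i = z}) \ {v}, ∃ t ∈ T \ {v}, f z ↔ f t := by
      rintro z ⟨hz | ⟨i, hi, rfl⟩, hzv⟩
      · exact ⟨z, ⟨hz, hzv⟩, Iff.rfl⟩
      · by_cases hj : ∀ j ≤ i, Q j ≠ v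
        · refine ⟨Q 0, ⟨h0, hj 0 (by omega)⟩, (iff_of_path (by omega) fun k _ hk => ?_).symm⟩
          exact hf _ ⟨hQ k (by omega), hj k (by omega)⟩ _ ⟨hQ (k + 1) (by omega), hj (k + 1) (by omega)⟩
            (adj k (by omega))
        · push Not at hj
          obtain ⟨j, hji, rfl⟩ := hj
          have hj' : ∀ k, i ≤ k → k ≤ s → Q k ≠ Q j := by
            intro k hk hks hkj
            have h2 := inj k hks j (by omega) hkj
            have h3 : i = j := by omega
            subst h3
            exact hzv rfl
          refine ⟨Q s, ⟨hs, hj' s hi le_rfl⟩, iff_of_path hi fun k hk hks => ?_⟩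
          exact hf _ ⟨hQ k (by omega), hj' k hk (by omega)⟩ _
            ⟨hQ (k + 1) (by omega), hj' (k + 1) (by omega) (by omega)⟩ (adj k hks)
    intro x hx y hy
    obtain ⟨a, ha, hxa⟩ := h1 x hx
    obtain ⟨b, hb, hyb⟩ := h1 y hy
    rw [hxa, hyb]
    exact hv.2 f (fun x hx y hy => hf x ⟨Or.inl hx.1, hx.2⟩ y ⟨Or.inl hy.1, hy.2⟩) a ha b hb
  refine ⟨⟨hT.1.1.mono Set.subset_union_left, fun f hf => ?_⟩, fun v _ => ?_⟩
  · have h1 : ∀ z ∈ T ∪ {z | ∃ i ≤ s, Q i = z}, f z ↔ f (Q 0) := by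
      rintro z (hz | ⟨i, hi, rfl⟩)
      · exact hT.1.2 f (fun x hx y hy => hf x (Or.inl hx) y (Or.inl hy)) z hz _ h0
      · exact (iff_of_path (by omega) fun k _ hk =>
          hf _ (hQ k (by omega)) _ (hQ (k + 1) (by omega)) (adj k (by omega))).symm
    intro x hx y hy
    rw [h1 x hx, h1 y hy]
  · apply key
    by_cases hvT : v ∈ T
    · exact hT.2 v hvT
    · rw [Set.sdiff_singleton_eq_self hvT]
      exact hT.1

lemma TwoConnOn.subset_pair_of_leaf {x y : V} (hS : TwoConnOn G S) (hx : x ∈ S)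
    (h : ∀ z ∈ S, G.Adj x z → z = y) : S ⊆ {x, y} := by
  intro z hz
  by_contra hzn
  simp at hzn
  by_cases hyx : y = x
  · subst hyx
    have := hS.1.2 (fun t => t = y) (fun a ha b hb hab => by
      have h1 := h a ha
      have h2 := h b hb
      have h3 := hab.symm
      grind) y hx z hz
    tauto
  have hc : ConnOn G (S \ {y}) := by
    by_cases hy : y ∈ S
    · exact hS.2 y hy
    · rw [Set.sdiff_singleton_eq_self hy]
      exact hS.1
  have := hc.2 (fun t => t = x) (fun a ha b hb hab => by
    have h1 := h a ha.1
    have h2 := h b hb.1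
    have h3 := hab.symm
    have h4 : a ≠ y := ha.2
    have h5 : b ≠ y := hb.2
    grind) x ⟨hx, fun hh => hyx hh.symm⟩ z ⟨hz, hzn.2⟩
  tauto

lemma Ear.ne (h : Ear G X A s Q) : Q 0 ≠ Q s := fun hh => by
  have := h.inj 0 (by omega) s le_rfl hh
  have := h.two_le
  omega

lemma Ear.cross (h : Ear G X A s Q) : ∀ x ∈ A, ∀ y ∈ X \ A, G.Adj x y → x = Q 0 ∨ x = Q s := by
  intro x hx y hy hxy
  rcases h.edge x (h.sub hx) y hy.1 hxy with h1 | ⟨i, hi, h1⟩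
  · exact absurd h1.2 hy.2
  · have h2 : x = Q i ∨ x = Q (i + 1) := by
      rcases Sym2.eq_iff.1 h1 with h1 | h1 <;> tauto
    have aux : ∀ j ≤ s, x = Q j → j = 0 ∨ j = s := by
      rintro j hj rfl
      by_contra hcon
      exact (h.mem j (by omega) (by omega)).2 hx
    rcases h2 with h2 | h2
    · rcases aux i (by omega) h2 with rfl | rfl <;> tauto
    · have := aux (i + 1) (by omega) h2
      obtain h3 : i + 1 = s := by omega
      rw [h3] at h2
      tauto

lemma Ear.sep (h : Ear G X A s Q) (hA : (A \ {Q 0, Q s}).Nonempty) : Sep G X A (Q 0) (Q s) :=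
  ⟨h.sub, h.hp, h.hq, h.ne, ⟨Q 1, h.mem 1 (by omega) h.two_le⟩, hA, h.cross⟩

lemma Ear.rest_eq (h : Ear G X A s Q) : X \ A = Q '' Set.Ioo 0 s := by
  ext z
  constructor
  · intro hz
    obtain ⟨i, h1, h2, rfl⟩ := h.cover z hz
    exact ⟨i, ⟨h1, h2⟩, rfl⟩
  · rintro ⟨i, ⟨h1, h2⟩, rfl⟩
    exact h.mem i h1 h2

lemma Ear.ncard_rest (h : Ear G X A s Q) : (X \ A).ncard = s - 1 := by
  rw [h.rest_eq, Set.InjOn.ncard_image]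
  · rw [← Finset.coe_Ioo, Set.ncard_coe_finset, Nat.card_Ioo]
    omega
  · intro i hi j hj hij
    exact h.inj i hi.2.le j hj.2.le hij

lemma Ear.restrict (h : Ear G X A s Q) :
    Ear G (X \ A ∪ {Q 0, Q s}) {Q 0, Q s} s Q := by
  have hd : ∀ i, 0 < i → i < s → Q i ∉ ({Q 0, Q s} : Set V) := by
    intro i h1 h2 h3
    have h4 := (h.mem i h1 h2).2
    rcases h3 with h3 | h3 <;> rw [h3] at h4
    exacts [h4 h.hp, h4 h.hq]
  refine ⟨Set.subset_union_right, h.two_le, by simp, by simp, h.inj,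
    fun i h1 h2 => ⟨Or.inl (h.mem i h1 h2), hd i h1 h2⟩, ?_, ?_, h.adj⟩
  · rintro z ⟨hz | hz, hz2⟩
    · exact h.cover z hz
    · exact absurd hz hz2
  · have hsub : X \ A ∪ {Q 0, Q s} ⊆ X := by
      rintro z (hz | rfl | rfl)
      exacts [hz.1, h.sub h.hp, h.sub h.hq]
    intro x hx y hy hxy
    rcases h.edge x (hsub hx) y (hsub hy) hxy with h1 | h1
    · left
      constructor
      · exact hx.resolve_left fun hh => hh.2 h1.1
      · exact hy.resolve_left fun hh => hh.2 h1.2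
    · exact Or.inr h1

lemma Ear.ear_edge_not_mem (h : Ear G X A s Q) {i : ℕ} (hi : i < s) :
    s(Q i, Q (i + 1)) ∉ edgesIn G A := by
  intro hh
  rw [mem_edgesIn] at hh
  have := h.two_le
  by_cases hi0 : i = 0
  · subst hi0
    exact (h.mem 1 (by omega) (by omega)).2 hh.2.2
  · exact (h.mem i (by omega) hi).2 hh.2.1

lemma Ear.wt_eq [Finite V] (h : Ear G X A s Q) {m : ℕ}
    (hw : ∀ i < s, w s(Q i, Q (i + 1)) = m) : wt G w X = wt G w A + s * m := by
  have he : edgesIn G X = edgesIn G A ∪ (fun i => s(Q i, Q (i + 1))) '' Set.Iio s := by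
    ext e
    induction e with | _ x y => ?_
    constructor
    · intro hxy
      rw [mem_edgesIn] at hxy
      rcases h.edge x hxy.2.1 y hxy.2.2 hxy.1 with h1 | ⟨i, hi, h1⟩
      · left; rw [mem_edgesIn]; tauto
      · right; exact ⟨i, hi, h1.symm⟩
    · rintro (hxy | ⟨i, hi, hxy⟩)
      · rw [mem_edgesIn] at hxy ⊢
        exact ⟨hxy.1, h.sub hxy.2.1, h.sub hxy.2.2⟩
      · have hX : ∀ j ≤ s, Q j ∈ X := by
          intro j hj
          by_cases h0 : j = 0
          · rw [h0]; exact h.sub h.hp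
          by_cases h1 : j = s
          · rw [h1]; exact h.sub h.hq
          · exact (h.mem j (by omega) (by omega)).1
        have hi' : i < s := hi
        rw [← hxy]
        rw [mem_edgesIn]
        exact ⟨h.adj i hi', hX i hi'.le, hX (i + 1) hi'⟩
  have hinj : Set.InjOn (fun i => s(Q i, Q (i + 1))) (Set.Iio s) := by
    intro i hi j hj hij
    have hi' : i < s := hi
    have hj' : j < s := hj
    rcases Sym2.eq_iff.1 hij with h1 | h1
    · exact h.inj i hi'.le j hj'.le h1.1
    · have := h.inj i hi'.le (j + 1) hj' h1.1
      have := h.inj (i + 1) hi' j hj'.le h1.2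
      omega
  rw [wt, he, finsum_mem_union _ (Set.toFinite _) (Set.toFinite _), finsum_mem_image hinj]
  · congr 1
    rw [finsum_mem_congr (g := fun _ => m) (t := Set.Iio s) rfl (fun i hi => hw i hi),
      ← Finset.coe_Iio, finsum_mem_coe_finset]
    simp
  · rw [Set.disjoint_right]
    rintro _ ⟨i, hi, rfl⟩
    exact h.ear_edge_not_mem hi

/-- The edges of an ear cannot be deleted. -/
lemma Ear.not_deletable (h : Ear G X A s Q) {i : ℕ} (hi : i < s) :
    ¬ TwoConnOn (G.deleteEdges {s(Q i, Q (i + 1))}) X := by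
  intro hd
  have h2 := h.two_le
  have hmemA : ∀ j ≤ s, Q j ∈ A → j = 0 ∨ j = s := by
    intro j hj hjA
    by_contra hcon
    exact (h.mem j (by omega) (by omega)).2 hjA
  by_cases hi0 : i = 0
  · subst hi0
    have := (hd.2 (Q s) (h.sub h.hq)).2 (fun z => z ∈ A) (fun x hx y hy hxy => by
      have hxs : x ≠ Q s := hx.2
      have hys : y ≠ Q s := hy.2
      rw [deleteEdges_adj] at hxy
      rcases h.edge x hx.1 y hy.1 hxy.1 with h1 | ⟨j, hj, h1⟩
      · tauto
      · have hj0 : j ≠ 0 := by rintro rfl; exact hxy.2 h1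
        have hjs : j + 1 ≠ s := by
          rintro rfl
          rcases Sym2.eq_iff.1 h1 with h1 | h1
          exacts [hys h1.2, hxs h1.1]
        have h3 := (h.mem j (by omega) hj).2
        have h4 := (h.mem (j + 1) (by omega) (by omega)).2
        rcases Sym2.eq_iff.1 h1 with ⟨rfl, rfl⟩ | ⟨rfl, rfl⟩ <;> tauto)
      (Q 0) ⟨h.sub h.hp, h.ne⟩ (Q 1) ⟨(h.mem 1 (by omega) (by omega)).1, fun hh => by
        have := h.inj 1 (by omega) s le_rfl hh
        omega⟩
    exact (h.mem 1 (by omega) (by omega)).2 (this.1 h.hp)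
  · have := (hd.2 (Q 0) (h.sub h.hp)).2 (fun z => ∃ j, 1 ≤ j ∧ j ≤ i ∧ Q j = z)
      (fun x hx y hy hxy => by
        have hx0 : x ≠ Q 0 := hx.2
        have hy0 : y ≠ Q 0 := hy.2
        have aux : ∀ j, 1 ≤ j → j ≤ i → Q j ∉ A := fun j h3 h4 => (h.mem j h3 (by omega)).2
        rw [deleteEdges_adj] at hxy
        rcases h.edge x hx.1 y hy.1 hxy.1 with h1 | ⟨j, hj, h1⟩
        · constructor
          · rintro ⟨j, h3, h4, rfl⟩
            exact absurd h1.1 (aux j h3 h4)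
          · rintro ⟨j, h3, h4, rfl⟩
            exact absurd h1.2 (aux j h3 h4)
        · have hji : j ≠ i := by rintro rfl; exact hxy.2 h1
          have hj0 : j ≠ 0 := by
            rintro rfl
            rcases Sym2.eq_iff.1 h1 with h1 | h1
            exacts [hx0 h1.1, hy0 h1.2]
          have key : (∃ k, 1 ≤ k ∧ k ≤ i ∧ Q k = Q j) ↔ ∃ k, 1 ≤ k ∧ k ≤ i ∧ Q k = Q (j + 1) := by
            constructor
            · rintro ⟨k, h3, h4, h5⟩
              have := h.inj k (by omega) j (by omega) h5
              exact ⟨j + 1, by omega, by omega, rfl⟩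
            · rintro ⟨k, h3, h4, h5⟩
              have := h.inj k (by omega) (j + 1) (by omega) h5
              exact ⟨j, by omega, by omega, rfl⟩
          rcases Sym2.eq_iff.1 h1 with ⟨rfl, rfl⟩ | ⟨rfl, rfl⟩
          exacts [key, key.symm])
      (Q 1) ⟨(h.mem 1 (by omega) (by omega)).1, fun hh => by
        have := h.inj 1 (by omega) 0 (by omega) hh
        omega⟩ (Q s) ⟨h.sub h.hq, fun hh => h.ne hh.symm⟩
    obtain ⟨j, h3, h4, h5⟩ := this.1 ⟨1, le_rfl, by omega, rfl⟩
    have := h.inj j (by omega) s le_rfl h5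
    omega

lemma Ear.contractible [Finite V] (h : Ear G X A s Q) (hX : TwoConnOn G X) {i : ℕ} (hi : i < s) :
    ConnOn G (X \ {Q i, Q (i + 1)}) := by
  have h2 := h.two_le
  have hX' : ∀ j ≤ s, Q j ∈ X := by
    intro j hj
    by_cases h0 : j = 0
    · rw [h0]; exact h.sub h.hp
    by_cases h1 : j = s
    · rw [h1]; exact h.sub h.hq
    · exact (h.mem j (by omega) (by omega)).1
  by_contra hc
  refine h.not_deletable hi (deletable_of_not_contractible hX (hX' i hi.le) (hX' (i + 1) hi)
    (h.adj i hi) ?_ hc)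
  by_cases hi0 : i = 0
  · subst hi0
    refine ⟨Q s, hX' s le_rfl, ?_⟩
    rintro (hh | hh)
    · exact h.ne hh.symm
    · have := h.inj s le_rfl 1 (by omega) hh
      omega
  · refine ⟨Q 0, hX' 0 (by omega), ?_⟩
    rintro (hh | hh)
    · have := h.inj 0 (by omega) i (by omega) hh
      omega
    · have := h.inj 0 (by omega) (i + 1) (by omega) hh
      omega

/-- The interior vertices of an ear have no other neighbours than the adjacent ear vertices. -/
lemma Ear.nbr (h : Ear G X A s Q) {i : ℕ} (hi0 : 0 < i) (his : i < s) {y : V} (hy : y ∈ X)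
    (hadj : G.Adj (Q i) y) : y = Q (i - 1) ∨ y = Q (i + 1) := by
  have hm := h.mem i hi0 his
  rcases h.edge _ hm.1 y hy hadj with h1 | ⟨j, hj, h1⟩
  · exact absurd h1.1 hm.2
  · rcases Sym2.eq_iff.1 h1 with ⟨h4, rfl⟩ | ⟨h4, rfl⟩
    · have := h.inj i his.le j hj.le h4
      subst this
      exact Or.inr rfl
    · have := h.inj i his.le (j + 1) hj h4
      subst this
      exact Or.inl rfl

/-- A `2`-connected set with at least three vertices that contains an interior vertex of the ear
contains the whole ear. -/
lemma Ear.twoConn_cases [Finite V] (h : Ear G X A s Q) (hSX : S ⊆ X) (hS : TwoConnOn G S)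
    (h3 : 3 ≤ S.ncard) (hSA : ¬ S ⊆ A) : ∀ i ≤ s, Q i ∈ S := by
  have hleaf : ∀ x ∈ S, ∀ y, (∀ z ∈ S, G.Adj x z → z = y) → False := by
    intro x hx y hxy
    have h1 := Set.ncard_le_ncard (hS.subset_pair_of_leaf hx hxy) (Set.toFinite _)
    have h2 := Set.ncard_insert_le x {y}
    rw [Set.ncard_singleton] at h2
    omega
  obtain ⟨z, hz, hzA⟩ := Set.not_subset.1 hSA
  obtain ⟨i, hi0, his, rfl⟩ := h.cover z ⟨hSX hz, hzA⟩
  have up : ∀ j, i ≤ j → j ≤ s → Q j ∈ S := by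
    intro j hij
    induction j, hij using Nat.le_induction with
    | base => exact fun _ => hz
    | succ j hj ih =>
      intro hjs
      have hjS := ih (by omega)
      by_contra hcon
      refine hleaf _ hjS (Q (j - 1)) fun z hzS hadj => ?_
      rcases h.nbr (by omega) (by omega) (hSX hzS) hadj with h1 | rfl
      · exact h1
      · exact absurd hzS hcon
  have down : ∀ k, k ≤ i → Q (i - k) ∈ S := by
    intro k
    induction k with
    | zero => exact fun _ => hz
    | succ k ih =>
      intro hk
      have hkS := ih (by omega)
      by_contra hcon
      refine hleaf _ hkS (Q (i - k + 1)) fun z hzS hadj => ?_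
      rcases h.nbr (by omega) (by omega) (hSX hzS) hadj with rfl | h1
      · exact absurd hzS hcon
      · exact h1
  intro j hj
  by_cases hij : i ≤ j
  · exact up j hij hj
  · have := down (i - j) (by omega)
    rwa [show i - (i - j) = j by omega] at this

/-- The position of a good flat with respect to an ear. -/
lemma Ear.flat_cases [Finite V] (h : Ear G X A s Q) (hS : FlatOn G X S) (h3 : 3 ≤ S.ncard) :
    S = A ∨ (S ⊆ A ∧ ¬ (Q 0 ∈ S ∧ Q s ∈ S)) ∨ (Q 0 ∈ S ∧ Q s ∈ S ∧ X \ S ⊆ A) := by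
  by_cases hSA : S ⊆ A
  · by_cases hpq : Q 0 ∈ S ∧ Q s ∈ S
    · left
      refine hSA.antisymm fun a ha => ?_
      by_contra haS
      have hm := h.mem 1 (by omega) h.two_le
      have := hS.2.2.2 (fun z => z ∈ A) (fun x hx y hy hxy => by
        have h1 := fun hh hh' => h.cross x hh y ⟨hy.1, hh'⟩ hxy
        have h2 := fun hh hh' => h.cross y hh x ⟨hx.1, hh'⟩ hxy.symm
        have h3 := hx.2
        have h4 := hy.2
        grind) a ⟨h.sub ha, haS⟩ (Q 1) ⟨hm.1, fun hh => hm.2 (hSA hh)⟩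
      exact hm.2 (this.1 ha)
    · exact Or.inr (Or.inl ⟨hSA, hpq⟩)
  · have hall := h.twoConn_cases hS.1 hS.2.1 h3 hSA
    refine Or.inr (Or.inr ⟨hall 0 (by omega), hall s le_rfl, fun z hz => ?_⟩)
    by_contra hzA
    obtain ⟨i, _, hi, rfl⟩ := h.cover z ⟨hz.1, hzA⟩
    exact hz.2 (hall i hi.le)
end

/-! ### Translation to induced subgraphs of an ambient graph -/

section
variable {V V' : Type*} {G : SimpleGraph V} {G' : SimpleGraph V'} {H : SimpleGraph V}
  {X Y Z S T A : Set V} {δ c s : ℕ} {p q u v : V} {w w' : Sym2 V → ℕ}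

lemma connected_iff_connOn : G.Connected ↔ ConnOn G Set.univ := by
  constructor
  · intro h
    have := h.nonempty
    refine ⟨Set.univ_nonempty, fun f hf x _ y _ => ?_⟩
    have hr := (reachable_iff_reflTransGen x y).1 (h.preconnected x y)
    exact Relation.ReflTransGen.head_induction_on
      (motive := fun z _ => f z ↔ f y) hr Iff.rfl
      fun hab _ ih => (hf _ trivial _ trivial hab).trans ih
  · intro h
    obtain ⟨x, -⟩ := h.1
    rw [connected_iff_exists_forall_reachable]
    refine ⟨x, fun y => ?_⟩
    refine (h.2 (fun z => G.Reachable x z) (fun a _ b _ hab => ?_) x trivial y trivial).1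
      (Reachable.refl x)
    exact ⟨fun hh => hh.trans hab.reachable, fun hh => hh.trans hab.symm.reachable⟩

lemma connOn_image {φ : V' → V} (hφ : Function.Injective φ) {S : Set V'}
    (hadj : ∀ x ∈ S, ∀ y ∈ S, (G'.Adj x y ↔ H.Adj (φ x) (φ y))) :
    ConnOn H (φ '' S) ↔ ConnOn G' S := by
  constructor
  · intro h
    refine ⟨Set.image_nonempty.1 h.1, fun f hf x hx y hy => ?_⟩
    have := h.2 (fun z => ∃ t ∈ S, φ t = z ∧ f t) ?_ (φ x) ⟨x, hx, rfl⟩ (φ y) ⟨y, hy, rfl⟩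
    · have aux : ∀ x ∈ S, (∃ t ∈ S, φ t = φ x ∧ f t) ↔ f x := fun x hx =>
        ⟨fun ⟨t, _, h1, h2⟩ => hφ h1 ▸ h2, fun hh => ⟨x, hx, rfl, hh⟩⟩
      rwa [aux x hx, aux y hy] at this
    · have aux : ∀ x ∈ S, (∃ t ∈ S, φ t = φ x ∧ f t) ↔ f x := fun x hx =>
        ⟨fun ⟨t, _, h1, h2⟩ => hφ h1 ▸ h2, fun hh => ⟨x, hx, rfl, hh⟩⟩
      rintro _ ⟨a, ha, rfl⟩ _ ⟨b, hb, rfl⟩ hab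
      rw [aux a ha, aux b hb]
      exact hf a ha b hb ((hadj a ha b hb).2 hab)
  · intro h
    refine ⟨h.1.image φ, fun f hf => ?_⟩
    rintro _ ⟨a, ha, rfl⟩ _ ⟨b, hb, rfl⟩
    exact h.2 (f ∘ φ) (fun x hx y hy hxy => hf _ ⟨x, hx, rfl⟩ _ ⟨y, hy, rfl⟩
      ((hadj x hx y hy).1 hxy)) a ha b hb

lemma twoConnOn_image {φ : V' → V} (hφ : Function.Injective φ) {S : Set V'}
    (hadj : ∀ x ∈ S, ∀ y ∈ S, (G'.Adj x y ↔ H.Adj (φ x) (φ y))) :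
    TwoConnOn H (φ '' S) ↔ TwoConnOn G' S := by
  have h1 : ∀ v, φ '' S \ {φ v} = φ '' (S \ {v}) := by
    intro v
    rw [Set.image_sdiff hφ, Set.image_singleton]
  have h2 : ∀ v, ConnOn H (φ '' S \ {φ v}) ↔ ConnOn G' (S \ {v}) := fun v => by
    rw [h1]
    exact connOn_image hφ fun x hx y hy => hadj x hx.1 y hy.1
  simp only [TwoConnOn, connOn_image hφ hadj, Set.forall_mem_image, h2]

lemma connected_induce_iff : (G.induce S).Connected ↔ ConnOn G S := by
  rw [connected_iff_connOn, ← connOn_image (φ := ((↑) : S → V)) (H := G)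
    Subtype.val_injective (fun x _ y _ => by simp)]
  simp

lemma isTwoConnected_iff : IsTwoConnected G ↔ TwoConnOn G Set.univ := by
  have h : ∀ v : V, {u : V | u ≠ v} = Set.univ \ {v} := by intro v; ext; simp
  simp only [IsTwoConnected, TwoConnOn, ← connected_iff_connOn, connected_induce_iff, h,
    Set.mem_univ, true_imp_iff]

lemma isTwoConnected_induce_iff : IsTwoConnected (G.induce S) ↔ TwoConnOn G S := by
  rw [isTwoConnected_iff, ← twoConnOn_image (φ := ((↑) : S → V)) (H := G)
    Subtype.val_injective (fun x _ y _ => by simp)]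
  simp

lemma connOn_contractEdges {F : Set (Sym2 V)} (hF : F ⊆ G.edgeSet)
    {Y : Set (SimpleGraph.fromEdgeSet F).ConnectedComponent} :
    ConnOn (contractEdges G F) Y ↔
      ConnOn G ((SimpleGraph.fromEdgeSet F).connectedComponentMk ⁻¹' Y) := by
  set π := (SimpleGraph.fromEdgeSet F).connectedComponentMk with hπ
  have hsurj : ∀ c, ∃ x, π x = c := fun c => c.exists_rep
  constructor
  · intro h
    refine ⟨?_, fun f hf x hx y hy => ?_⟩
    · obtain ⟨c, hc⟩ := h.1
      obtain ⟨x, rfl⟩ := hsurj c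
      exact ⟨x, hc⟩
    · have hconst : ∀ x y, π x = π y → π x ∈ Y → (f x ↔ f y) := by
        intro x y hxy hx
        have hr := (reachable_iff_reflTransGen x y).1 (ConnectedComponent.exact hxy)
        clear hxy hy
        induction hr with
        | refl => rfl
        | @tail b c hab hbc ih =>
          have hb : π x = π b :=
            ConnectedComponent.sound ((reachable_iff_reflTransGen x b).2 hab)
          have hc : π b = π c := ConnectedComponent.sound hbc.reachable
          refine ih.trans (hf b ?_ c ?_ ?_)
          · change π b ∈ Y; rwa [← hb]
          · change π c ∈ Y; rwa [← hc, ← hb]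
          · rw [fromEdgeSet_adj] at hbc
            exact hF hbc.1
      have aux : ∀ x, π x ∈ Y → ((∃ z, π z = π x ∧ f z) ↔ f x) := fun x hx =>
        ⟨fun ⟨z, h1, h2⟩ => (hconst x z h1.symm hx).2 h2, fun hh => ⟨x, rfl, hh⟩⟩
      have := h.2 (fun c => ∃ z, π z = c ∧ f z) ?_ (π x) hx (π y) hy
      · rwa [aux x hx, aux y hy] at this
      · have key : ∀ a b, π a ∈ Y → π b ∈ Y → G.Adj a b →
            ((∃ z, π z = π a ∧ f z) ↔ ∃ z, π z = π b ∧ f z) := by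
          intro a b ha hb hab
          rw [aux a ha, aux b hb]
          exact hf a ha b hb hab
        rintro c hc d hd ⟨-, ⟨a, b, hab, rfl, rfl⟩ | ⟨a, b, hab, rfl, rfl⟩⟩
        · exact key a b hc hd hab
        · exact (key a b hd hc hab).symm
  · intro h
    refine ⟨?_, fun f hf c hc d hd => ?_⟩
    · obtain ⟨x, hx⟩ := h.1
      exact ⟨_, hx⟩
    · obtain ⟨x, rfl⟩ := hsurj c
      obtain ⟨y, rfl⟩ := hsurj d
      refine h.2 (fun z => f (π z)) (fun a ha b hb hab => ?_) x hc y hd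
      by_cases hne : π a = π b
      · rw [hne]
      · exact hf _ ha _ hb ⟨hne, Or.inl ⟨a, b, hab, rfl, rfl⟩⟩

/-- Contracting a connected set `S` of a `2`-connected graph gives a `2`-connected graph exactly
when the complement of `S` is connected. -/
lemma isTwoConnected_contractEdges (hG : TwoConnOn G Set.univ) (hS : ConnOn G S) :
    IsTwoConnected (contractEdges G (edgesIn G S)) ↔ ConnOn G (Set.univ \ S) := by
  have hF : edgesIn G S ⊆ G.edgeSet := fun e he => he.1
  rw [isTwoConnected_iff]
  simp only [TwoConnOn, connOn_contractEdges hF, Set.mem_univ, true_imp_iff, Set.preimage_univ]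
  set π := (SimpleGraph.fromEdgeSet (edgesIn G S)).connectedComponentMk with hπ
  have hsurj : ∀ c, ∃ x, π x = c := fun c => c.exists_rep
  have h1 : ∀ x ∈ S, ∀ y ∈ S, π x = π y := by
    intro x hx y hy
    refine (hS.2 (fun z => π x = π z) (fun a ha b hb hab => ?_) x hx y hy).1 rfl
    have : π a = π b := ConnectedComponent.sound (Adj.reachable (by simp [hab, ha, hb, hab.ne]))
    simp only [this]
  have h2 : ∀ x y, π x = π y → x = y ∨ (x ∈ S ∧ y ∈ S) := by
    intro x y hxy
    have hr := (reachable_iff_reflTransGen x y).1 (ConnectedComponent.exact hxy)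
    clear hxy
    induction hr with
    | refl => left; rfl
    | @tail b c hab hbc ih =>
      simp at hbc
      grind
  obtain ⟨s, hs⟩ := hS.1
  have h3 : π ⁻¹' (Set.univ \ {π s}) = Set.univ \ S := by
    ext z
    have := h1 s hs z
    have := h2 z s
    simp
    grind
  constructor
  · intro h
    rw [← h3]
    exact h.2 _
  · intro h
    refine ⟨hG.1, fun c => ?_⟩
    obtain ⟨x, rfl⟩ := hsurj c
    by_cases hx : x ∈ S
    · rw [h1 x hx s hs, h3]; exact h
    · have h4 : π ⁻¹' (Set.univ \ {π x}) = Set.univ \ {x} := by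
        ext z
        have := h2 z x
        simp
        grind
      rw [h4]
      exact hG.2 x trivial

lemma isGoodFlat_iff (hG : TwoConnOn G Set.univ) : IsGoodFlat G S ↔ FlatOn G Set.univ S := by
  rw [IsGoodFlat, isTwoConnected_induce_iff, FlatOn]
  constructor
  · exact fun h => ⟨Set.subset_univ _, h.1, (isTwoConnected_contractEdges hG h.1.1).1 h.2⟩
  · exact fun h => ⟨h.2.1, (isTwoConnected_contractEdges hG h.2.1.1).2 h.2.2⟩

lemma edgesIn_pair (h : G.Adj u v) : edgesIn G {u, v} = {s(u, v)} := by
  ext e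
  induction e with | _ x y => ?_
  have := h.symm
  have := fun x => G.irrefl (v := x)
  simp
  grind

lemma isTwoConnected_contract_edge (hG : TwoConnOn G Set.univ) (h : G.Adj u v) :
    IsTwoConnected (contractEdges G {s(u, v)}) ↔ ConnOn G (Set.univ \ {u, v}) := by
  rw [← edgesIn_pair h]
  exact isTwoConnected_contractEdges hG (connOn_pair h)

lemma wt_univ : wt G w Set.univ = ∑ᶠ e ∈ G.edgeSet, w e := by
  have : edgesIn G Set.univ = G.edgeSet := by ext e; simp [edgesIn]
  rw [wt, this]

/-- The condition `(♠)_δ` in terms of `RSp`.  Non-contractible edges are deletable, hence of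
weight `1`. -/
lemma SatisfiesSpade.rsp [Finite V] (hδ : 3 ≤ δ) (h : SatisfiesSpade G δ w) :
    RSp G Set.univ δ w := by
  obtain ⟨h1, ⟨h2, h3, h4⟩, h5, h6⟩ := h
  have hG := isTwoConnected_iff.1 h1
  have hn := hG.two_le
  have aux : ∀ n, 2 ≤ n → δ * (n - 1) + δ = δ * n := by
    intro n hn
    obtain ⟨k, rfl⟩ := Nat.exists_eq_add_of_le hn
    rw [show 2 + k - 1 = k + 1 by omega]
    ring
  have htot : wt G w Set.univ + δ = δ * (Set.univ : Set V).ncard := by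
    rw [wt_univ, h5, ← Set.ncard_univ, aux _ hn]
  refine ⟨⟨hG, htot, fun S hS _ => ?_, fun u _ v _ huv hc => ?_⟩, fun u _ v _ huv hc => ?_⟩
  · have := h6 S ((isGoodFlat_iff hG).2 hS)
    rw [wt, this, aux _ hS.2.1.two_le]
  · by_cases hne : (Set.univ \ {u, v}).Nonempty
    · exact h3 _ huv (isTwoConnected_iff.2
        (deletable_of_not_contractible hG trivial trivial huv hne hc))
    · exfalso
      have he : (Set.univ : Set V) = {u, v} := by
        rw [Set.not_nonempty_iff_eq_empty, Set.sdiff_eq_empty] at hne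
        exact hne.antisymm (Set.subset_univ _)
      rw [he, wt_pair huv, Set.ncard_pair huv.ne] at htot
      have := h2 s(u, v) huv
      omega
  · exact h4 _ huv ((isTwoConnected_contract_edge hG huv).2 hc)

lemma RSp.spade [Finite V] (hδ : 3 ≤ δ) (h : RSp G Set.univ δ w) : SatisfiesSpade G δ w := by
  have hn := h.two.two_le
  have aux : ∀ n, 2 ≤ n → δ * (n - 1) + δ = δ * n := by
    intro n hn
    obtain ⟨k, rfl⟩ := Nat.exists_eq_add_of_le hn
    rw [show 2 + k - 1 = k + 1 by omega]
    ring
  refine ⟨isTwoConnected_iff.2 h.two, ⟨?_, ?_, ?_⟩, ?_, ?_⟩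
  · intro e he
    induction e with | _ u v => ?_
    by_cases hc : ConnOn G (Set.univ \ {u, v})
    · exact Or.inr (h.con u trivial v trivial he hc)
    · exact Or.inl (h.nonc u trivial v trivial he hc)
  · intro e he hd
    induction e with | _ u v => ?_
    refine h.nonc u trivial v trivial he fun hc => ?_
    exact h.toWeak.not_deletable_contractible hδ _ G _ _ u v rfl trivial trivial he
      (isTwoConnected_iff.1 hd) hc
  · intro e he hc
    induction e with | _ u v => ?_
    exact h.con u trivial v trivial he ((isTwoConnected_contract_edge h.two he).1 hc)
  · have := h.total
    rw [wt_univ, ← aux _ hn] at this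
    rw [← Set.ncard_univ]
    omega
  · intro S hS
    have hS' := (isGoodFlat_iff h.two).1 hS
    have := h.flat_eq (by omega) hS'
    rw [← aux _ hS'.2.1.two_le] at this
    rw [wt] at this
    omega

lemma wt_image {φ : V' → V} (hφ : Function.Injective φ) {S : Set V'}
    (hadj : ∀ x ∈ S, ∀ y ∈ S, (G'.Adj x y ↔ H.Adj (φ x) (φ y))) :
    wt H w (φ '' S) = wt G' (w ∘ Sym2.map φ) S := by
  have he : edgesIn H (φ '' S) = Sym2.map φ '' edgesIn G' S := by
    ext e
    constructor
    · intro h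
      induction e with | _ x y => ?_
      rw [mem_edgesIn] at h
      obtain ⟨h1, ⟨a, ha, rfl⟩, ⟨b, hb, rfl⟩⟩ := h
      exact ⟨s(a, b), mem_edgesIn.2 ⟨(hadj a ha b hb).2 h1, ha, hb⟩, rfl⟩
    · rintro ⟨e, he, rfl⟩
      induction e with | _ a b => ?_
      rw [mem_edgesIn] at he
      exact mem_edgesIn.2 ⟨(hadj a he.2.1 b he.2.2).1 he.1, ⟨a, he.2.1, rfl⟩, ⟨b, he.2.2, rfl⟩⟩
  rw [wt, he, finsum_mem_image (Sym2.map.injective hφ).injOn]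
  rfl

/-- The condition `RSp` is invariant under embeddings as induced subgraphs. -/
lemma rsp_image {φ : V' → V} (hφ : Function.Injective φ) {X : Set V'}
    (hadj : ∀ x ∈ X, ∀ y ∈ X, (G'.Adj x y ↔ H.Adj (φ x) (φ y))) :
    RSp H (φ '' X) δ w ↔ RSp G' X δ (w ∘ Sym2.map φ) := by
  have hadj' : ∀ S ⊆ X, ∀ x ∈ S, ∀ y ∈ S, (G'.Adj x y ↔ H.Adj (φ x) (φ y)) :=
    fun S hS x hx y hy => hadj x (hS hx) y (hS hy)
  have hdiff : ∀ S, φ '' X \ φ '' S = φ '' (X \ S) := fun S => (Set.image_sdiff hφ X S).symm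
  have hpair : ∀ u v, ({φ u, φ v} : Set V) = φ '' {u, v} := fun u v => (Set.image_pair φ u v).symm
  have hcd : ∀ S, ConnOn H (φ '' X \ φ '' S) ↔ ConnOn G' (X \ S) := fun S => by
    rw [hdiff]
    exact connOn_image hφ (hadj' _ Set.sdiff_subset)
  have hflat : ∀ S ⊆ X, (FlatOn H (φ '' X) (φ '' S) ↔ FlatOn G' X S) := fun S hS => by
    rw [FlatOn, FlatOn, hcd, twoConnOn_image hφ (hadj' _ hS), Set.image_subset_image_iff hφ]
  constructor
  · intro h
    refine ⟨⟨(twoConnOn_image hφ hadj).1 h.two, ?_, ?_, ?_⟩, ?_⟩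
    · rw [← wt_image hφ hadj, h.total, Set.ncard_image_of_injective _ hφ]
    · intro S hS h3
      rw [← wt_image hφ (hadj' S hS.1), ← Set.ncard_image_of_injective S hφ]
      exact h.flat _ ((hflat S hS.1).2 hS) (by rwa [Set.ncard_image_of_injective _ hφ])
    · intro u hu v hv huv hc
      exact h.nonc _ ⟨u, hu, rfl⟩ _ ⟨v, hv, rfl⟩ ((hadj u hu v hv).1 huv)
        (by rwa [hpair, hcd])
    · intro u hu v hv huv hc
      exact h.con _ ⟨u, hu, rfl⟩ _ ⟨v, hv, rfl⟩ ((hadj u hu v hv).1 huv)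
        (by rwa [hpair, hcd])
  · intro h
    refine ⟨⟨(twoConnOn_image hφ hadj).2 h.two, ?_, ?_, ?_⟩, ?_⟩
    · rw [wt_image hφ hadj, h.total, Set.ncard_image_of_injective _ hφ]
    · intro S hS h3
      obtain ⟨S, hSX, rfl⟩ := Set.subset_image_iff.1 hS.1
      rw [wt_image hφ (hadj' S hSX)]
      rw [Set.ncard_image_of_injective _ hφ] at h3 ⊢
      exact h.flat _ ((hflat S hSX).1 hS) h3
    · rintro _ ⟨u, hu, rfl⟩ _ ⟨v, hv, rfl⟩ huv hc
      exact h.nonc u hu v hv ((hadj u hu v hv).2 huv) (by rwa [hpair, hcd] at hc)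
    · rintro _ ⟨u, hu, rfl⟩ _ ⟨v, hv, rfl⟩ huv hc
      exact h.con u hu v hv ((hadj u hu v hv).2 huv) (by rwa [hpair, hcd] at hc)

lemma RSp.induce_spade [Finite V] (hδ : 3 ≤ δ) (h : RSp H X δ w) :
    SatisfiesSpade (H.induce X) δ (w ∘ Sym2.map ((↑) : X → V)) := by
  refine RSp.spade hδ ((rsp_image (H := H) Subtype.val_injective (fun x _ y _ => by simp)).1 ?_)
  simpa using h

/-- The weights of a graph satisfying `(♠)_δ`, transported along an embedding. -/
lemma SatisfiesSpade.rsp_range [Finite V] {w' : Sym2 V' → ℕ} (hδ : 3 ≤ δ)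
    (h : SatisfiesSpade G' δ w') {φ : V' → V} (hφ : Function.Injective φ)
    (hadj : ∀ x y, G'.Adj x y ↔ H.Adj (φ x) (φ y)) :
    RSp H (Set.range φ) δ (Function.extend (Sym2.map φ) w' 0) := by
  have := Finite.of_injective φ hφ
  rw [← Set.image_univ, rsp_image hφ fun x _ y _ => hadj x y]
  have h1 : Function.extend (Sym2.map φ) w' 0 ∘ Sym2.map φ = w' := by
    ext e
    exact (Sym2.map.injective hφ).extend_apply _ _ _
  rw [h1]
  exact h.rsp hδ
end

/-! ### Gluings along an edge -/

/-- The graph `G` is the union of its subgraphs induced on the sets `A i`, any two of which meet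
exactly in the two ends of the edge `ab`. -/
structure Glued {V ι : Type*} (G : SimpleGraph V) (A : ι → Set V) (a b : V) : Prop where
  adj : G.Adj a b
  ha : ∀ i, a ∈ A i
  hb : ∀ i, b ∈ A i
  inter : ∀ i j, i ≠ j → ∀ x ∈ A i, x ∈ A j → x = a ∨ x = b
  cover : ∀ x, ∃ i, x ∈ A i
  edge : ∀ x y, G.Adj x y → ∃ i, x ∈ A i ∧ y ∈ A i

section
variable {V ι : Type*} {G : SimpleGraph V} {A : ι → Set V} {a b : V} {w : Sym2 V → ℕ} {S : Set V}
  {δ c : ℕ}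

lemma Glued.sep (h : Glued G A a b) (hne : ∀ i, (A i \ {a, b}).Nonempty) {i j : ι} (hij : i ≠ j) :
    Sep G Set.univ (A i) a b := by
  refine ⟨Set.subset_univ _, h.ha i, h.hb i, h.adj.ne, ?_, hne i, ?_⟩
  · obtain ⟨z, hz, hzn⟩ := hne j
    exact ⟨z, trivial, fun hzi => hzn (h.inter i j hij z hzi hz)⟩
  · intro x hx y hy hxy
    obtain ⟨k, hxk, hyk⟩ := h.edge x y hxy
    exact h.inter i k (by rintro rfl; exact hy.2 hyk) x hx hxk

lemma Glued.ncard_univ [Finite V] [Fintype ι] (h : Glued G A a b) :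
    (Set.univ : Set V).ncard = 2 + ∑ i, (A i \ {a, b}).ncard := by
  have h1 : (Set.univ : Set V) = {a, b} ∪ ⋃ i, A i \ {a, b} := by
    ext x
    obtain ⟨i, hi⟩ := h.cover x
    simp only [Set.mem_univ, Set.mem_union, Set.mem_iUnion, Set.mem_sdiff, true_iff]
    by_cases hx : x ∈ ({a, b} : Set V)
    · exact Or.inl hx
    · exact Or.inr ⟨i, hi, hx⟩
  have h2 : Disjoint ({a, b} : Set V) (⋃ i, A i \ {a, b}) := by
    rw [Set.disjoint_iUnion_right]
    exact fun i => Set.disjoint_sdiff_right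
  have h3 : Pairwise (Function.onFun Disjoint fun i => A i \ {a, b}) := by
    intro i j hij
    refine Set.disjoint_left.2 fun x hx hx' => ?_
    exact hx.2 (h.inter i j hij x hx.1 hx'.1)
  rw [h1, Set.ncard_union_eq h2, Set.ncard_pair h.adj.ne]
  have h4 : ∀ s : Set V, s.ncard = ∑ᶠ x ∈ s, 1 := fun s => by
    rw [finsum_mem_eq_finite_toFinset_sum _ (Set.toFinite s), Finset.sum_const, smul_eq_mul,
      mul_one, Set.ncard_eq_toFinset_card s]
  simp only [h4]
  rw [finsum_mem_iUnion h3 (fun i => Set.toFinite _), finsum_eq_sum_of_fintype]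

lemma Glued.wt_eq [Finite V] [Fintype ι] (h : Glued G A a b) (ha : a ∈ S) (hb : b ∈ S) :
    wt G w S = w s(a, b) + ∑ i, ∑ᶠ e ∈ edgesIn G (S ∩ A i) \ {s(a, b)}, w e := by
  have h1 : edgesIn G S = {s(a, b)} ∪ ⋃ i, edgesIn G (S ∩ A i) \ {s(a, b)} := by
    ext e
    by_cases he : e = s(a, b)
    · simp [he, h.adj, ha, hb]
    induction e with | _ x y => ?_
    simp only [mem_edgesIn, Set.mem_union, Set.mem_iUnion, Set.mem_sdiff, Set.mem_singleton_iff,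
      he, false_or, not_false_eq_true, and_true]
    constructor
    · rintro ⟨hxy, hx, hy⟩
      obtain ⟨i, hxi, hyi⟩ := h.edge x y hxy
      exact ⟨i, hxy, ⟨hx, hxi⟩, hy, hyi⟩
    · rintro ⟨i, hxy, hx, hy⟩
      exact ⟨hxy, hx.1, hy.1⟩
  have h2 : Disjoint ({s(a, b)} : Set (Sym2 V)) (⋃ i, edgesIn G (S ∩ A i) \ {s(a, b)}) := by
    rw [Set.disjoint_iUnion_right]
    exact fun i => Set.disjoint_sdiff_right
  have h3 : Pairwise (Function.onFun Disjoint fun i => edgesIn G (S ∩ A i) \ {s(a, b)}) := by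
    intro i j hij
    refine Set.disjoint_left.2 fun e he he' => ?_
    induction e with | _ x y => ?_
    have h4 := he.2
    have h5 := mem_edgesIn.1 he.1
    have h6 := mem_edgesIn.1 he'.1
    have h7 := h.inter i j hij x h5.2.1.2 h6.2.1.2
    have h8 := h.inter i j hij y h5.2.2.2 h6.2.2.2
    have h9 := h5.1.ne
    rcases h7 with rfl | rfl <;> rcases h8 with rfl | rfl
    · exact h9 rfl
    · exact h4 rfl
    · exact h4 Sym2.eq_swap
    · exact h9 rfl
  rw [wt, h1, finsum_mem_union h2 (Set.toFinite _) (Set.toFinite _), finsum_mem_singleton,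
    finsum_mem_iUnion h3 (fun i => Set.toFinite _), finsum_eq_sum_of_fintype]

lemma wt_setWt [Finite V] (h : G.Adj a b) (ha : a ∈ S) (hb : b ∈ S) :
    wt G (setWt w s(a, b) c) S = c + ∑ᶠ e ∈ edgesIn G S \ {s(a, b)}, w e := by
  have := wt_sup_edge (G := G) (w := w) (c := c) h.ne ha hb
  rwa [sup_edge_of_adj _ h] at this

lemma ncard_eq_add_two [Finite V] (h : a ≠ b) (ha : a ∈ S) (hb : b ∈ S) :
    S.ncard = (S \ {a, b}).ncard + 2 := by
  rw [← Set.ncard_sdiff_add_ncard_of_subset (s := {a, b}) (t := S) (by rintro x (rfl | rfl) <;> assumption),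
    Set.ncard_pair h]

/-- The equality for the whole graph and those for the pieces of a gluing together say that there
are `δ - 1` pieces. -/
lemma Glued.card_iff [Finite V] [Fintype ι] (h : Glued G A a b) (hδ : 3 ≤ δ)
    (hw : w s(a, b) = 1)
    (hA : ∀ i, wt G (setWt w s(a, b) (δ - 1)) (A i) + δ = δ * (A i).ncard) :
    wt G w Set.univ + δ = δ * (Set.univ : Set V).ncard ↔ Fintype.card ι = δ - 1 := by
  have h1 : ∀ i, ∑ᶠ e ∈ edgesIn G (A i) \ {s(a, b)}, w e = δ * (A i \ {a, b}).ncard + 1 := by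
    intro i
    have := hA i
    rw [wt_setWt h.adj (h.ha i) (h.hb i), ncard_eq_add_two h.adj.ne (h.ha i) (h.hb i), mul_add]
      at this
    omega
  rw [h.wt_eq (Set.mem_univ a) (Set.mem_univ b), h.ncard_univ, hw]
  simp only [Set.univ_inter, h1]
  rw [Finset.sum_add_distrib, ← Finset.mul_sum, mul_add, Finset.sum_const, smul_eq_mul, mul_one,
    Finset.card_univ]
  omega
end

/-! ### Decomposing a graph satisfying `(♠)_δ` -/

section
variable {V : Type} {G : SimpleGraph V} {δ : ℕ} {w : Sym2 V → ℕ} {a b : V}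

/-- A graph with a non-contractible edge `ab` is the gluing along `ab` of its `δ - 1`
bridges with respect to `a`, `b`. -/
lemma RSp.obtainable_of_not_contractible [Finite V] (hδ : 3 ≤ δ) (h : RSp G Set.univ δ w)
    (hab : G.Adj a b) (hc : ¬ ConnOn G (Set.univ \ {a, b}))
    (ih : ∀ (A : Set V) (w' : Sym2 V → ℕ), A ≠ Set.univ → RSp G A δ w' →
      Obtainable δ (G.induce A)) : Obtainable δ G := by
  classical
  have hwab : w s(a, b) = 1 := h.nonc a trivial b trivial hab hc
  have hne : (Set.univ \ {a, b}).Nonempty := by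
    by_contra hne
    have he : (Set.univ : Set V) = {a, b} := by
      rw [Set.not_nonempty_iff_eq_empty, Set.sdiff_eq_empty] at hne
      exact hne.antisymm (Set.subset_univ _)
    have htot := h.total
    rw [he, wt_pair hab, Set.ncard_pair hab.ne, hwab] at htot
    omega
  set D := G.induce (Set.univ \ {a, b}) with hD
  have := Fintype.ofFinite D.ConnectedComponent
  set A : D.ConnectedComponent → Set V := fun K => Subtype.val '' K.supp ∪ {a, b} with hA
  have hAmem : ∀ K x (hx : x ∈ Set.univ \ {a, b}), x ∈ A K ↔ D.connectedComponentMk ⟨x, hx⟩ = K := by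
    intro K x hx
    constructor
    · rintro (⟨⟨z, hz⟩, h1, rfl⟩ | h1)
      · exact h1
      · exact absurd h1 hx.2
    · intro h1
      exact Or.inl ⟨⟨x, hx⟩, h1, rfl⟩
  have hAd : ∀ K, A K \ {a, b} = Subtype.val '' K.supp := by
    intro K
    rw [hA]
    refine Set.union_sdiff_cancel_right ?_
    rintro x ⟨⟨⟨z, hz⟩, h1, rfl⟩, h2⟩
    exact hz.2 h2
  have hglued : Glued G A a b := by
    refine ⟨hab, fun K => by simp [hA], fun K => by simp [hA], ?_, ?_, ?_⟩
    · intro K L hKL x hxK hxL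
      by_contra hx
      have hx' : x ∈ Set.univ \ {a, b} := ⟨trivial, hx⟩
      rw [hAmem _ x hx'] at hxK hxL
      exact hKL (hxK.symm.trans hxL)
    · intro x
      by_cases hx : x ∈ ({a, b} : Set V)
      · obtain ⟨z, hz⟩ := hne
        exact ⟨D.connectedComponentMk ⟨z, hz⟩, Or.inr hx⟩
      · exact ⟨D.connectedComponentMk ⟨x, trivial, hx⟩, (hAmem _ x ⟨trivial, hx⟩).2 rfl⟩
    · intro x y hxy
      by_cases hx : x ∈ ({a, b} : Set V)
      · by_cases hy : y ∈ ({a, b} : Set V)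
        · obtain ⟨z, hz⟩ := hne
          exact ⟨D.connectedComponentMk ⟨z, hz⟩, Or.inr hx, Or.inr hy⟩
        · exact ⟨D.connectedComponentMk ⟨y, trivial, hy⟩, Or.inr hx, (hAmem _ y ⟨trivial, hy⟩).2 rfl⟩
      · refine ⟨D.connectedComponentMk ⟨x, trivial, hx⟩, (hAmem _ x ⟨trivial, hx⟩).2 rfl, ?_⟩
        by_cases hy : y ∈ ({a, b} : Set V)
        · exact Or.inr hy
        · refine (hAmem _ y ⟨trivial, hy⟩).2 (ConnectedComponent.sound (Adj.reachable ?_))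
          exact hxy.symm
  have hnonempty : ∀ K, (A K \ {a, b}).Nonempty := by
    intro K
    rw [hAd]
    exact K.nonempty_supp.image _
  have hother : ∀ K : D.ConnectedComponent, ∃ L, K ≠ L := by
    intro K
    by_contra hcon
    push Not at hcon
    refine hc (connected_induce_iff.1 ?_)
    have : Nonempty (Set.univ \ {a, b} : Set V) := hne.to_subtype
    refine (connected_iff _).2 ⟨fun x y => ?_, this⟩
    exact ConnectedComponent.exact ((hcon _).symm.trans (hcon _))
  have hsep : ∀ K, Sep G Set.univ (A K) a b := fun K =>
    hglued.sep hnonempty (hother K).choose_spec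
  have hrsp : ∀ K, RSp G (A K) δ (setWt w s(a, b) (δ - 1)) := by
    intro K
    have hconn : ConnOn G (A K \ {a, b}) := by
      rw [hAd]
      refine (connOn_image (G' := D) Subtype.val_injective (fun x _ y _ => by simp [hD])).2 ?_
      exact connected_induce_iff.1 K.maximal_connected_induce_supp.prop
    have h1 := (hsep K).other.descent_all h.two (fun _ _ _ _ hh => hh) hab
    have h2 := (hsep K).wt_rest_of_flat (by omega) h.toWeak h1 hconn
    have h3 := (hsep K).rsp h.toWeak (fun u _ v _ huv _ hh => h.con u trivial v trivial huv hh) h2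
      (fun hh => absurd hconn hh) (fun _ => rfl)
    rwa [sup_edge_of_adj _ hab] at h3
  have hcard : Fintype.card D.ConnectedComponent = δ - 1 :=
    (hglued.card_iff hδ hwab fun K => (hrsp K).total).1 h.total
  let e : Fin (δ - 1) ≃ D.ConnectedComponent := (Fintype.equivFinOfCardEq hcard).symm
  refine Obtainable.glue (fun i => G.induce (A (e i)))
    (fun i => setWt w s(a, b) (δ - 1) ∘ Sym2.map Subtype.val)
    (fun i => s(⟨a, hglued.ha _⟩, ⟨b, hglued.hb _⟩)) G a b
    (fun i => ih _ _ ?_ (hrsp (e i))) (fun i => (hrsp (e i)).induce_spade hδ) (fun i => ?_)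
    (fun i => ?_) ⟨hab.ne, hab, fun i => Subtype.val, ?_, ?_, ?_, ?_, ?_⟩
  · intro he
    obtain ⟨z, hz⟩ := (hsep (e i)).rest
    rw [he] at hz
    exact hz.2 trivial
  · exact hab
  · simp [setWt_self]
  · exact fun i => Subtype.val_injective
  · intro x
    obtain ⟨K, hK⟩ := hglued.cover x
    exact ⟨e.symm K, by simpa using hK⟩
  · exact fun i => rfl
  · intro i j hij
    rw [Subtype.range_coe, Subtype.range_coe]
    ext x
    constructor
    · rintro ⟨h1, h2⟩
      exact hglued.inter _ _ (fun hh => hij (e.injective hh)) x h1 h2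
    · rintro (rfl | rfl)
      exacts [⟨hglued.ha _, hglued.ha _⟩, ⟨hglued.hb _, hglued.hb _⟩]
  · intro x y
    constructor
    · intro hxy
      obtain ⟨K, hx, hy⟩ := hglued.edge x y hxy
      refine ⟨e.symm K, ⟨x, by simpa using hx⟩, ⟨y, by simpa using hy⟩, hxy, rfl, rfl⟩
    · rintro ⟨i, u, v, huv, rfl, rfl⟩
      exact huv
end

section
variable {V : Type*} {G : SimpleGraph V} {X A : Set V} {δ s : ℕ} {w : Sym2 V → ℕ} {Q : ℕ → V}

lemma Ear.connOn_rest (h : Ear G X A s Q) : ConnOn G (X \ A) := by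
  have h2 := h.two_le
  refine ⟨⟨Q 1, h.mem 1 (by omega) (by omega)⟩, fun f hf => ?_⟩
  have h1 : ∀ z ∈ X \ A, (f z ↔ f (Q 1)) := by
    intro z hz
    obtain ⟨i, h0, hi, rfl⟩ := h.cover z hz
    exact (iff_of_path (by omega) fun k hk1 hk2 =>
      hf _ (h.mem k (by omega) (by omega)) _ (h.mem (k + 1) (by omega) (by omega))
        (h.adj k (by omega))).symm
  intro x hx y hy
  rw [h1 x hx, h1 y hy]

/-- A `2`-connected graph with at least three vertices in which no edge can be deleted arises from
a smaller `2`-connected graph by adding an ear: take a maximal proper `2`-connected induced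
subgraph and a shortest path joining two of its vertices outside of it. -/
lemma exists_ear [Finite V] (hG : TwoConnOn G Set.univ) (h3 : 3 ≤ (Set.univ : Set V).ncard)
    (hdel : ∀ u v, G.Adj u v → ¬ TwoConnOn (G.deleteEdges {s(u, v)}) Set.univ) :
    ∃ T s Q, TwoConnOn G T ∧ Ear G Set.univ T s Q := by
  obtain ⟨x, -⟩ := hG.1.1
  have hxy : ∃ y, G.Adj x y := by
    by_contra hcon
    push Not at hcon
    have := Set.ncard_le_ncard (hG.subset_pair_of_leaf (y := x) (Set.mem_univ x)
      fun z _ hz => absurd hz (hcon z)) (Set.toFinite _)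
    have := Set.ncard_insert_le x {x}
    rw [Set.ncard_singleton] at this
    omega
  obtain ⟨y, hxy⟩ := hxy
  obtain ⟨T, -, hT⟩ := (Set.toFinite {T : Set V | TwoConnOn G T ∧ T ≠ Set.univ}).exists_le_maximal
    (a := {x, y}) ⟨twoConnOn_pair hxy, fun hh => by
      rw [← hh, Set.ncard_pair hxy.ne] at h3
      omega⟩
  obtain ⟨⟨hT2, hTne⟩, hTmax⟩ := hT
  obtain ⟨z, hz⟩ := (Set.ne_univ_iff_exists_notMem T).1 hTne
  let K : SimpleGraph V :=
    { Adj := fun x y => G.Adj x y ∧ ¬ (x ∈ T ∧ y ∈ T)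
      symm := ⟨fun x y h => ⟨h.1.symm, fun hh => h.2 hh.symm⟩⟩
      loopless := ⟨fun x h => G.irrefl h.1⟩ }
  have hKiff : ∀ x y, K.Adj x y → (K.Reachable z x ↔ K.Reachable z y) := fun x y h =>
    ⟨fun hh => hh.trans h.reachable, fun hh => hh.trans h.symm.reachable⟩
  obtain ⟨p, hp, hpr⟩ : ∃ p ∈ T, K.Reachable z p := by
    by_contra hcon
    push Not at hcon
    obtain ⟨t, ht⟩ := hT2.1.1
    refine hcon t ht ((hG.1.2 (fun x => K.Reachable z x) (fun x _ y _ hxy => ?_) z trivial t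
      trivial).1 (Reachable.refl z))
    by_cases hh : x ∈ T ∧ y ∈ T
    · simp only [hcon x hh.1, hcon y hh.2]
    · exact hKiff x y ⟨hxy, hh⟩
  obtain ⟨q, hq, hqp, hqr⟩ : ∃ q ∈ T, q ≠ p ∧ K.Reachable z q := by
    by_contra hcon
    push Not at hcon
    obtain ⟨t, ht, htp⟩ := hT2.exists_ne hp
    refine hcon t ht htp (((hG.2 p trivial).2 (fun x => K.Reachable z x) (fun x hx y hy hxy => ?_) z
      ⟨trivial, fun hh => hz (hh ▸ hp)⟩ t ⟨trivial, htp⟩).1 (Reachable.refl z))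
    by_cases hh : x ∈ T ∧ y ∈ T
    · simp only [hcon x hh.1 hx.2, hcon y hh.2 hy.2]
    · exact hKiff x y ⟨hxy, hh⟩
  classical
  have hex : ∃ n, ∃ p q, p ∈ T ∧ q ∈ T ∧ p ≠ q ∧ ∃ W : K.Walk p q, W.length = n := by
    obtain ⟨W⟩ := hpr.symm.trans hqr
    exact ⟨_, p, q, hp, hq, hqp.symm, W, rfl⟩
  obtain ⟨p, q, hp, hq, hpq, W, hW⟩ := Nat.find_spec hex
  have hmin := fun m (hm : m < Nat.find hex) => Nat.find_min hex hm
  set n := Nat.find hex with hn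
  have hpath : W.IsPath := by
    apply W.isPath_of_length_eq_dist
    refine le_antisymm ?_ (dist_le W)
    obtain ⟨W', hW'⟩ := W.reachable.exists_walk_length_eq_dist
    rw [hW, ← hW']
    by_contra hlt
    exact hmin _ (by omega) ⟨p, q, hp, hq, hpq, W', rfl⟩
  let Q := W.getVert
  have hQ0 : Q 0 = p := W.getVert_zero
  have hQn : Q n = q := by rw [← hW]; exact W.getVert_length
  have hinj : ∀ i ≤ n, ∀ j ≤ n, Q i = Q j → i = j := fun i hi j hj hij =>
    hpath.getVert_injOn (by simpa [hW] using hi) (by simpa [hW] using hj) hij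
  have hadjK : ∀ i < n, K.Adj (Q i) (Q (i + 1)) := fun i hi =>
    W.adj_getVert_succ (by rw [hW]; exact hi)
  have hadj : ∀ i < n, G.Adj (Q i) (Q (i + 1)) := fun i hi => (hadjK i hi).1
  have hinner : ∀ i, 0 < i → i < n → Q i ∉ T := by
    intro i h0 hi hiT
    refine hmin i hi ⟨p, Q i, hp, hiT, ?_, W.take i, ?_⟩
    · intro hh
      have := hinj 0 (by omega) i hi.le (hQ0.trans hh)
      omega
    · rw [Walk.take_length, hW]
      omega
  have hn2 : 2 ≤ n := by
    by_contra hlt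
    have hn0 : n ≠ 0 := by
      intro hn0
      rw [hn0, hQ0] at hQn
      exact hpq hQn
    have hn1 : n = 1 := by omega
    refine (hadjK 0 (by omega)).2 ⟨?_, ?_⟩
    · rw [hQ0]; exact hp
    · rw [zero_add, ← hn1, hQn]; exact hq
  have hall : T ∪ {z | ∃ i ≤ n, Q i = z} = Set.univ := by
    by_contra hne
    have h1 := hT2.add_ear (Q := Q) (s := n) (hQ0 ▸ hp) (hQn ▸ hq) hinj hadj
    exact hinner 1 (by omega) (by omega)
      (hTmax ⟨h1, hne⟩ Set.subset_union_left (Or.inr ⟨1, by omega, rfl⟩))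
  refine ⟨T, n, Q, hT2, Set.subset_univ _, hn2, hQ0 ▸ hp, hQn ▸ hq, hinj,
    fun i h0 hi => ⟨trivial, hinner i h0 hi⟩, fun z hz => ?_, fun x _ y _ hxy => ?_, hadj⟩
  · have hz1 : z ∈ T ∪ {z | ∃ i ≤ n, Q i = z} := hall ▸ trivial
    obtain hz1 | ⟨i, hi, rfl⟩ := hz1
    · exact absurd hz1 hz.2
    · refine ⟨i, Nat.pos_of_ne_zero ?_, lt_of_le_of_ne hi ?_, rfl⟩
      · rintro rfl; exact hz.2 (hQ0 ▸ hp)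
      · rintro rfl; exact hz.2 (hQn ▸ hq)
  · by_contra hcon
    push Not at hcon
    refine hdel x y hxy ?_
    rw [← hall]
    refine TwoConnOn.add_ear (hT2.congr fun a ha b hb hab => ?_) (hQ0 ▸ hp) (hQn ▸ hq) hinj
      fun i hi => ?_
    · refine (deleteEdges_adj).2 ⟨hab, fun hh => ?_⟩
      rcases Sym2.eq_iff.1 hh with ⟨rfl, rfl⟩ | ⟨rfl, rfl⟩
      · exact hcon.1 ha hb
      · exact hcon.1 hb ha
    · exact (deleteEdges_adj).2 ⟨hadj i hi, fun hh => hcon.2 i hi hh.symm⟩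

/-- A graph consisting of an edge and an ear with `δ - 1` edges joining its ends is a cycle of
length `δ`. -/
lemma Ear.nonempty_iso (h : Ear G Set.univ {Q 0, Q s} s Q) (hδ : 3 ≤ δ) (hs : s = δ - 1)
    (hadj : G.Adj (Q 0) (Q s)) : Nonempty (G ≃g cycleGraph δ) := by
  have hbij : Function.Bijective (fun i : Fin δ => Q i) := by
    constructor
    · intro i j hij
      exact Fin.ext (h.inj i (by omega) j (by omega) hij)
    · intro z
      by_cases hz : z ∈ ({Q 0, Q s} : Set V)
      · rcases hz with rfl | rfl
        · exact ⟨⟨0, by omega⟩, rfl⟩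
        · exact ⟨⟨s, by omega⟩, rfl⟩
      · obtain ⟨i, -, hi, rfl⟩ := h.cover z ⟨trivial, hz⟩
        exact ⟨⟨i, by omega⟩, rfl⟩
  refine ⟨RelIso.symm ⟨Equiv.ofBijective _ hbij, ?_⟩⟩
  intro i j
  have hi := i.isLt
  have hj := j.isLt
  rw [cycleGraph_adj']
  simp only [Equiv.ofBijective_apply, Fin.val_sub]
  have hmod : ∀ a b : ℕ, a < δ → b < δ →
      ((δ - b + a) % δ = 1 ↔ a = b + 1 ∨ (a = 0 ∧ b = s)) := by
    intro a b ha hb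
    by_cases hab : b ≤ a
    · rw [show δ - b + a = (a - b) + δ by omega, Nat.add_mod_right, Nat.mod_eq_of_lt (by omega)]
      omega
    · rw [Nat.mod_eq_of_lt (by omega)]
      omega
  rw [hmod _ _ hi hj, hmod _ _ hj hi]
  constructor
  · intro hij
    rcases h.edge _ trivial _ trivial hij with ⟨h1, h2⟩ | ⟨k, hk, h1⟩
    · have aux : ∀ k : Fin δ, Q k ∈ ({Q 0, Q s} : Set V) → k.val = 0 ∨ k.val = s := by
        rintro k (hk | hk)
        · exact Or.inl (h.inj k (by omega) 0 (by omega) hk)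
        · exact Or.inr (h.inj k (by omega) s (by omega) hk)
      have h3 := aux i h1
      have h4 := aux j h2
      have h5 : i.val ≠ j.val := fun hh => hij.ne (by rw [hh])
      omega
    · rcases Sym2.eq_iff.1 h1 with ⟨h1, h2⟩ | ⟨h1, h2⟩
      · have := h.inj _ (by omega) _ (by omega) h1
        have := h.inj _ (by omega) _ (by omega) h2
        omega
      · have := h.inj _ (by omega) _ (by omega) h1
        have := h.inj _ (by omega) _ (by omega) h2
        omega
  · rintro ((h1 | ⟨h1, h2⟩) | (h1 | ⟨h1, h2⟩))
    · rw [h1]; exact (h.adj _ (by omega)).symm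
    · rw [h1, h2]; exact hadj
    · rw [h1]; exact h.adj _ (by omega)
    · rw [h1, h2]; exact hadj.symm
end

section
variable {V : Type} {G : SimpleGraph V} {δ : ℕ} {w : Sym2 V → ℕ}

/-- A graph all of whose edges are contractible is a cycle of length `δ` or arises by
subdivision. -/
lemma RSp.obtainable_of_contractible [Finite V] (hδ : 3 ≤ δ) (h : RSp G Set.univ δ w)
    (hc : ∀ u v, G.Adj u v → ConnOn G (Set.univ \ {u, v}))
    (ih : ∀ (H : SimpleGraph V) (A : Set V) (w' : Sym2 V → ℕ), A ≠ Set.univ → RSp H A δ w' →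
      Obtainable δ (H.induce A)) : Obtainable δ G := by
  have hw : ∀ u v, G.Adj u v → w s(u, v) = δ - 1 := fun u v huv =>
    h.con u trivial v trivial huv (hc u v huv)
  have h3 : 3 ≤ (Set.univ : Set V).ncard := by
    by_contra hlt
    obtain ⟨u, v, huv, he⟩ := h.two.eq_pair (by omega)
    have := (hc u v huv).1
    rw [he] at this
    simp at this
  obtain ⟨T, s, Q, hT, hE⟩ := exists_ear h.two h3 fun u v huv hd =>
    h.toWeak.not_deletable_contractible hδ _ G _ _ u v rfl trivial trivial huv hd (hc u v huv)
  have hs2 := hE.two_le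
  have hTf : FlatOn G Set.univ T := ⟨hE.sub, hT, hE.connOn_rest⟩
  have hs : s = δ - 1 := by
    have h1 := h.flat_eq (by omega) hTf
    have h2 := h.total
    rw [hE.wt_eq fun i hi => hw _ _ (hE.adj i hi), ← Set.ncard_sdiff_add_ncard_of_subset hE.sub,
      hE.ncard_rest] at h2
    obtain ⟨t, rfl⟩ : ∃ t, s = t + 1 := ⟨s - 1, by omega⟩
    obtain ⟨d, rfl⟩ : ∃ d, δ = d + 1 := ⟨δ - 1, by omega⟩
    simp only [Nat.add_sub_cancel] at *
    nlinarith
  have hTne : T ≠ Set.univ := by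
    rintro rfl
    obtain ⟨z, hz⟩ := hE.connOn_rest.1
    exact hz.2 trivial
  have hpqT : ({Q 0, Q s} : Set V) ⊆ T := by
    rintro x (rfl | rfl)
    exacts [hE.hp, hE.hq]
  by_cases hT3 : T.ncard < 3
  · have hTe : {Q 0, Q s} = T := Set.eq_of_subset_of_ncard_le hpqT
      (by rw [Set.ncard_pair hE.ne]; omega) (Set.toFinite _)
    subst hTe
    have hadj : G.Adj (Q 0) (Q s) := by
      obtain ⟨u, v, huv, he⟩ := hT.eq_pair hT3
      have h0 : Q 0 ∈ ({u, v} : Set V) := he ▸ hE.hp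
      have h1 : Q s ∈ ({u, v} : Set V) := he ▸ hE.hq
      have h2 := hE.ne
      have h4 := huv.symm
      simp only [Set.mem_insert_iff, Set.mem_singleton_iff] at h0 h1
      grind
    exact Obtainable.cycle G (hE.nonempty_iso hδ hs hadj).some
  · have hne : (T \ {Q 0, Q s}).Nonempty := by
      rw [← Set.ncard_pos (Set.toFinite _)]
      have := Set.ncard_sdiff_add_ncard_of_subset hpqT
      rw [Set.ncard_pair hE.ne] at this
      omega
    have hsep := hE.sep hne
    have hnadj : ¬ G.Adj (Q 0) (Q s) := fun hh => hsep.not_connOn (hc _ _ hh)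
    have hB := hsep.wt_rest_of_flat' h.toWeak hnadj hT hE.connOn_rest
    have hweak := hsep.weak h.toWeak hB fun _ => rfl
    have hHadj : (G ⊔ edge (Q 0) (Q s)).Adj (Q 0) (Q s) :=
      sup_edge_adj'.2 (Or.inr ⟨rfl, hE.ne⟩)
    have hnc : ¬ ConnOn G (T \ {Q 0, Q s}) := by
      intro hcon
      refine hweak.not_deletable_contractible hδ _ _ _ _ (Q 0) (Q s) rfl hE.hp hE.hq hHadj
        (hT.congr fun x hx y hy hxy => deleteEdges_adj.2 ⟨sup_edge_adj'.2 (Or.inl hxy), fun hh => ?_⟩)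
        (hcon.congr fun x _ y _ hxy => sup_edge_adj'.2 (Or.inl hxy))
      rcases Sym2.eq_iff.1 hh with ⟨rfl, rfl⟩ | ⟨rfl, rfl⟩
      · exact hnadj hxy
      · exact hnadj hxy.symm
    have hR := hsep.rsp h.toWeak (fun u _ v _ huv _ _ => hw u v huv) hB (fun _ => rfl)
      (fun hh => absurd hh hnc)
    subst hs
    refine Obtainable.subdivide _ _ ⟨Q 0, hE.hp⟩ ⟨Q (δ - 1), hE.hq⟩ G (fun i => Q i)
      (ih _ T _ hTne hR) (hR.induce_spade hδ) (by exact hHadj) (by simp [setWt_self])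
      ⟨Subtype.val, Subtype.val_injective, ?_, rfl, rfl, ?_, ?_, ?_⟩
    · intro i j hij
      exact Fin.ext (hE.inj i (by omega) j (by omega) hij)
    · intro i h0 h1
      rw [Subtype.range_coe]
      refine (hE.mem i (Nat.pos_of_ne_zero fun hh => h0 (Fin.ext hh)) ?_).2
      have := Fin.lt_last_iff_ne_last.2 h1
      exact this
    · intro x
      by_cases hx : x ∈ T
      · left; simpa using hx
      · obtain ⟨i, _, hi, rfl⟩ := hE.cover x ⟨trivial, hx⟩
        exact Or.inr ⟨⟨i, by omega⟩, rfl⟩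
    · intro x y
      constructor
      · intro hxy
        rcases hE.edge x trivial y trivial hxy with ⟨hx, hy⟩ | ⟨i, hi, he⟩
        · refine Or.inl ⟨⟨x, hx⟩, ⟨y, hy⟩, sup_edge_adj'.2 (Or.inl hxy), ?_, rfl, rfl⟩
          intro hh
          rcases Sym2.eq_iff.1 hh with ⟨h1, h2⟩ | ⟨h1, h2⟩ <;>
            rw [Subtype.mk.injEq] at h1 h2 <;> subst h1 <;> subst h2
          · exact hnadj hxy
          · exact hnadj hxy.symm
        · exact Or.inr ⟨⟨i, hi⟩, he⟩
      · rintro (⟨a, b, hab, hne', rfl, rfl⟩ | ⟨i, he⟩)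
        · have h1 : (G ⊔ edge (Q 0) (Q (δ - 1))).Adj a b := hab
          rcases sup_edge_adj'.1 h1 with h1 | ⟨h1, -⟩
          · exact h1
          · exfalso
            apply hne'
            rcases Sym2.eq_iff.1 h1 with ⟨h1, h2⟩ | ⟨h1, h2⟩
            · exact Sym2.eq_iff.2 (Or.inl ⟨Subtype.ext h1, Subtype.ext h2⟩)
            · exact Sym2.eq_iff.2 (Or.inr ⟨Subtype.ext h1, Subtype.ext h2⟩)
        · have := hE.adj i i.isLt
          rcases Sym2.eq_iff.1 he with ⟨rfl, rfl⟩ | ⟨rfl, rfl⟩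
          · exact this
          · exact this.symm

/-- Graphs satisfying `(♠)_δ` are obtainable. -/
theorem RSp.obtainable (hδ : 3 ≤ δ) : ∀ (n : ℕ) (V : Type) [Finite V] (G : SimpleGraph V)
    (w : Sym2 V → ℕ), Nat.card V = n → RSp G Set.univ δ w → Obtainable δ G := by
  intro n
  induction n using Nat.strong_induction_on with
  | _ n ih =>
    intro V _ G w hn h
    have ih' : ∀ (H : SimpleGraph V) (A : Set V) (w' : Sym2 V → ℕ), A ≠ Set.univ → RSp H A δ w' →
        Obtainable δ (H.induce A) := by
      intro H A w' hA hR
      refine ih (Nat.card A) ?_ A (H.induce A) _ rfl ((hR.induce_spade hδ).rsp hδ)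
      rw [← hn, ← Set.ncard_univ V, Nat.card_coe_set_eq]
      exact Set.ncard_lt_ncard (Set.ssubset_univ_iff.2 hA)
    by_cases hc : ∀ u v, G.Adj u v → ConnOn G (Set.univ \ {u, v})
    · exact h.obtainable_of_contractible hδ hc ih'
    · push Not at hc
      obtain ⟨a, b, hab, hc⟩ := hc
      exact h.obtainable_of_not_contractible hδ hab hc (ih' G)
end

/-! ### Building graphs satisfying `(♠)_δ` -/

open Classical in
/-- The weight function forced by `(♠)_δ`: contractible edges get weight `δ - 1`, the others `1`. -/
noncomputable def cw {V : Type*} (G : SimpleGraph V) (δ : ℕ) (e : Sym2 V) : ℕ :=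
  if ConnOn G {z | z ∉ e} then δ - 1 else 1

section
variable {V : Type*} {G H : SimpleGraph V} {X S A : Set V} {δ c s : ℕ} {p q u v a b : V}
  {w w' : Sym2 V → ℕ} {Q : ℕ → V}

lemma cw_of_connOn (h : ConnOn G (Set.univ \ {u, v})) : cw G δ s(u, v) = δ - 1 := by
  have he : {z | z ∉ s(u, v)} = Set.univ \ {u, v} := by ext; simp
  rw [cw, he, if_pos h]

lemma cw_of_not_connOn (h : ¬ ConnOn G (Set.univ \ {u, v})) : cw G δ s(u, v) = 1 := by
  have he : {z | z ∉ s(u, v)} = Set.univ \ {u, v} := by ext; simp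
  rw [cw, he, if_neg h]

lemma RSp.of_cw (hG : TwoConnOn G Set.univ)
    (ht : wt G (cw G δ) Set.univ + δ = δ * (Set.univ : Set V).ncard)
    (hf : ∀ S, FlatOn G Set.univ S → 3 ≤ S.ncard → wt G (cw G δ) S + 1 + δ = δ * S.ncard) :
    RSp G Set.univ δ (cw G δ) :=
  ⟨⟨hG, ht, hf, fun _ _ _ _ _ h => cw_of_not_connOn h⟩, fun _ _ _ _ _ h => cw_of_connOn h⟩

/-- A single edge does not satisfy the condition. -/
lemma RSp.three_le [Finite V] (hδ : 3 ≤ δ) (h : RSp G X δ w) : 3 ≤ X.ncard := by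
  by_contra hcon
  obtain ⟨u, v, huv, rfl⟩ := h.two.eq_pair (by omega)
  have h1 := h.total
  rw [wt_pair huv, Set.ncard_pair huv.ne,
    h.nonc u (by simp) v (by simp) huv fun hc => by simpa using hc.1] at h1
  omega

lemma RSp.sdiff_nonempty [Finite V] (hδ : 3 ≤ δ) (h : RSp G X δ w) (p q : V) :
    (X \ {p, q}).Nonempty := by
  by_contra hcon
  rw [Set.not_nonempty_iff_eq_empty, Set.sdiff_eq_empty] at hcon
  have h1 := Set.ncard_le_ncard hcon (Set.toFinite _)
  have h2 := Set.ncard_insert_le p {q}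
  rw [Set.ncard_singleton] at h2
  have := h.three_le hδ
  omega

/-- The forced weights restrict, away from the edge `pq`, to those of a side of a separation. -/
lemma Sep.rsp_cw (h : Sep G Set.univ A p q) (hX : TwoConnOn G Set.univ) (hR : RSp H A δ w')
    (hadj : ∀ x ∈ A, ∀ y ∈ A, (H.Adj x y ↔ (G ⊔ edge p q).Adj x y)) :
    RSp (G ⊔ edge p q) A δ (setWt (cw G δ) s(p, q) (w' s(p, q))) := by
  refine hR.congr hadj fun u hu v hv huv => ?_
  by_cases he : s(u, v) = s(p, q)
  · rw [he, setWt_self]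
  have h1 : ConnOn H (A \ {u, v}) ↔ ConnOn (G ⊔ edge p q) (A \ {u, v}) :=
    ⟨fun hc => hc.congr fun x hx y hy => (hadj x hx.1 y hy.1).1,
      fun hc => hc.congr fun x hx y hy => (hadj x hx.1 y hy.1).2⟩
  rw [setWt_of_ne he]
  by_cases hc : ConnOn H (A \ {u, v})
  · rw [hR.con u hu v hv huv hc, cw_of_connOn]
    rwa [h.connOn_diff_sup_iff hX hu hv he, ← h1]
  · rw [hR.nonc u hu v hv huv hc, cw_of_not_connOn]
    rwa [h.connOn_diff_sup_iff hX hu hv he, ← h1]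

/-- If the equality holds for the whole graph and for one side of a separation, the weight of the
opposite side is as required for trading it for an edge. -/
lemma Sep.wt_rest_of_total [Finite V] (h : Sep G X A p q) (hG : wt G w X + δ = δ * X.ncard)
    (hA : wt (G ⊔ edge p q) (setWt w s(p, q) c) A + δ = δ * A.ncard) :
    wt G w (X \ A ∪ {p, q}) = c + δ * (X \ A).ncard := by
  have h2 : A ∪ X \ A = X := Set.union_sdiff_cancel h.sub
  -- with `c` the weight of the opposite side and no vertex of it counted, the weights add up
  have h3 := h.wt_union (δ := 0) (c := wt G w (X \ A ∪ {p, q})) (w := w) subset_rfl h.hp h.hq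
    (by simp)
  have h4 := h.union_rest_ncard subset_rfl
  rw [wt_sup_edge h.ne h.hp h.hq] at h3 hA
  rw [h2] at h3 h4
  rw [h4, mul_add] at hG
  omega

/-- The equality for a flat on one side of a separation. -/
lemma Sep.flat_eq_of_subset [Finite V] (h : Sep G X A p q) (hδ : 1 ≤ δ)
    (hR : RSp (G ⊔ edge p q) A δ (setWt w s(p, q) c)) (hS : FlatOn G X S) (hSA : S ⊆ A)
    (hpq : ¬ (p ∈ S ∧ q ∈ S)) : wt G w S + 1 + δ = δ * S.ncard := by
  rw [← wt_sup_edge_of_not (c := c) hpq]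
  refine hR.flat_eq hδ ⟨hSA, hS.2.1.congr fun x _ y _ hxy => Or.inl hxy, ?_⟩
  have he : (X \ S) ∩ A = A \ S := by
    have := h.sub
    ext z; simp; grind
  rw [← he]
  refine h.descent hS.2.2 Set.sdiff_subset ?_ (fun x _ y _ hxy => Or.inl hxy)
    (sup_edge_adj'.2 (Or.inr ⟨rfl, h.ne⟩))
  rw [he]
  have h1 := h.hp
  have h2 := h.hq
  by_cases hp : p ∈ S
  · exact ⟨q, h2, fun hq => hpq ⟨hp, hq⟩⟩
  · exact ⟨p, h1, hp⟩

/-- The equality for a flat that contains `p`, `q` and the side opposite to `A`. -/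
lemma Sep.flat_eq_of_compl [Finite V] (h : Sep G X A p q) (hδ : 1 ≤ δ)
    (hR : RSp (G ⊔ edge p q) A δ (setWt w s(p, q) c)) (hG : wt G w X + δ = δ * X.ncard)
    (hS : FlatOn G X S) (hp : p ∈ S) (hq : q ∈ S) (hXS : X \ S ⊆ A) :
    wt G w S + 1 + δ = δ * S.ncard := by
  have hB := h.wt_rest_of_total hG hR.total
  have hSX := hS.1
  have he : S ∩ A ∪ X \ A = S := by
    have := h.sub
    ext z
    have : z ∈ X \ S → z ∈ A := @hXS z
    have : z ∈ S → z ∈ X := @hSX z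
    simp at *
    tauto
  have he' : A \ (S ∩ A) = X \ S := by
    have h1 := h.sub
    ext z
    have : z ∈ X \ S → z ∈ A := @hXS z
    have : z ∈ A → z ∈ X := @h1 z
    simp at *
    tauto
  have h1 := h.wt_union (w := w) (Set.inter_subset_right (s := S)) ⟨hp, h.hp⟩ ⟨hq, h.hq⟩ hB
  have h2 := h.union_rest_ncard (Set.inter_subset_right (s := S))
  rw [he] at h1 h2
  have h3 : FlatOn (G ⊔ edge p q) A (S ∩ A) := by
    refine ⟨Set.inter_subset_right, h.descent₂ hS.2.1 hS.1 (fun z => ?_)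
      (fun x _ y _ hxy => Or.inl hxy) (sup_edge_adj'.2 (Or.inr ⟨rfl, h.ne⟩)), ?_⟩
    · by_cases hz : p = z
      · exact ⟨q, ⟨hq, h.hq⟩, by rintro rfl; exact h.ne hz⟩
      · exact ⟨p, ⟨hp, h.hp⟩, hz⟩
    · rw [he']
      exact hS.2.2.congr fun x _ y _ hxy => Or.inl hxy
  have h4 := hR.flat_eq hδ h3
  rw [h2, mul_add]
  omega

/-! ### The three constructions -/

/-- A cycle of length `δ`, written as an ear with `δ - 1` edges whose ends are adjacent. -/
lemma Ear.rsp_cycle [Finite V] (hδ : 3 ≤ δ) (hG : TwoConnOn G Set.univ)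
    (h : Ear G Set.univ {Q 0, Q s} s Q) (hs : s = δ - 1) (hadj : G.Adj (Q 0) (Q s)) :
    RSp G Set.univ δ (cw G δ) := by
  have hn : (Set.univ : Set V).ncard = δ := by
    have h1 := h.ncard_rest
    have h2 := Set.ncard_sdiff_add_ncard_of_subset h.sub (Set.toFinite _)
    rw [Set.ncard_pair h.ne] at h2
    omega
  refine RSp.of_cw hG ?_ ?_
  · rw [h.wt_eq (m := δ - 1) fun i hi => cw_of_connOn (h.contractible hG hi), wt_pair hadj,
      cw_of_connOn h.connOn_rest, hn, hs]
    obtain ⟨m, rfl⟩ : ∃ m, δ = m + 1 := ⟨δ - 1, by omega⟩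
    simp
    ring
  · intro S hS h3
    exfalso
    have hle : ∀ T : Set V, T ⊆ {Q 0, Q s} → T.ncard < 3 := fun T hT => by
      have := Set.ncard_le_ncard hT (Set.toFinite _)
      rw [Set.ncard_pair h.ne] at this
      omega
    rcases h.flat_cases hS h3 with h1 | ⟨h1, -⟩ | ⟨h1, h2, h4⟩
    · have := hle S h1.subset
      omega
    · have := hle S h1
      omega
    · obtain ⟨z, hz⟩ := hS.2.2.1
      rcases h4 hz with rfl | rfl
      exacts [hz.2 h1, hz.2 h2]

/-- Gluing along edges of weight `δ - 1`. -/
lemma Glued.rsp [Finite V] {ι : Type*} [Fintype ι] {A : ι → Set V} {w' : ι → Sym2 V → ℕ}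
    (hδ : 3 ≤ δ) (hG : TwoConnOn G Set.univ) (h : Glued G A a b) (hι : Fintype.card ι = δ - 1)
    (hR : ∀ i, RSp G (A i) δ (w' i)) (hw : ∀ i, w' i s(a, b) = δ - 1) :
    RSp G Set.univ δ (cw G δ) := by
  have hsep : ∀ i, Sep G Set.univ (A i) a b := by
    intro i
    have : Nontrivial ι := Fintype.one_lt_card_iff_nontrivial.1 (by omega)
    obtain ⟨j, hj⟩ := exists_ne i
    exact h.sep (fun i => (hR i).sdiff_nonempty hδ a b) hj.symm
  have hE : G ⊔ SimpleGraph.edge a b = G := sup_edge_of_adj _ h.adj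
  have hR' : ∀ i, RSp (G ⊔ SimpleGraph.edge a b) (A i) δ (setWt (cw G δ) s(a, b) (δ - 1)) := by
    intro i
    have := (hsep i).rsp_cw hG (hR i) (by simp [hE])
    rwa [hw i] at this
  obtain ⟨i₀⟩ : Nonempty ι := Fintype.card_pos_iff.1 (by omega)
  have htot : wt G (cw G δ) Set.univ + δ = δ * (Set.univ : Set V).ncard := by
    refine (h.card_iff hδ (cw_of_not_connOn (hsep i₀).not_connOn) fun i => ?_).2 hι
    have := (hR' i).total
    rwa [hE] at this
  refine RSp.of_cw hG htot fun S hS h3 => ?_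
  -- a connected set that contains neither `a` nor `b` lies inside a piece: this is applied to the
  -- complement of `S` if `S` contains both, and otherwise to `S` without `a` and `b`
  by_cases hab : a ∈ S ∧ b ∈ S
  · obtain ⟨z, hz⟩ := hS.2.2.1
    obtain ⟨i, hi⟩ := h.cover z
    refine (hsep i).flat_eq_of_compl (by omega) (hR' i) htot hS hab.1 hab.2 fun y hy => ?_
    refine (hS.2.2.2 (fun x => x ∈ A i) (fun x hx y hy hxy => ?_) z hz y hy).1 hi
    have h1 := fun hh hh' => (hsep i).cross x hh y ⟨hy.1, hh'⟩ hxy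
    have h2 := fun hh hh' => (hsep i).cross y hh x ⟨hx.1, hh'⟩ hxy.symm
    have h5 := hx.2
    have h4 := hy.2
    grind
  · -- `c` is one of `a`, `b`, the only one that can lie in `S`
    obtain ⟨c, hcab, hc⟩ : ∃ c, (c = a ∨ c = b) ∧ ∀ x ∈ S, x = a ∨ x = b → x = c := by
      by_cases ha : a ∈ S
      · exact ⟨a, Or.inl rfl, by rintro x hx (rfl | rfl) <;> tauto⟩
      · exact ⟨b, Or.inr rfl, by rintro x hx (rfl | rfl) <;> tauto⟩
    have hconn : ConnOn G (S \ {c}) := by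
      by_cases hcS : c ∈ S
      · exact hS.2.1.2 c hcS
      · rw [Set.sdiff_singleton_eq_self hcS]
        exact hS.2.1.1
    obtain ⟨z, hz⟩ := hconn.1
    obtain ⟨i, hi⟩ := h.cover z
    have hsub : S \ {c} ⊆ A i := fun y hy => by
      refine (hconn.2 (fun x => x ∈ A i) (fun x hx y hy hxy => ?_) z hz y hy).1 hi
      have h1 := fun hh hh' => (hsep i).cross x hh y ⟨trivial, hh'⟩ hxy
      have h2 := fun hh hh' => (hsep i).cross y hh x ⟨trivial, hh'⟩ hxy.symm
      have h5 := hc x hx.1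
      have h6 := hc y hy.1
      have h7 : x ≠ c := hx.2
      have h8 : y ≠ c := hy.2
      grind
    refine (hsep i).flat_eq_of_subset (by omega) (hR' i) hS (fun y hy => ?_) hab
    by_contra hyA
    have hyc : y = c := by
      by_contra hyc
      exact hyA (hsub ⟨hy, hyc⟩)
    apply hyA
    rcases hcab with h1 | h1 <;> rw [hyc, h1]
    exacts [h.ha i, h.hb i]

/-- Subdividing an edge of weight `1` into `δ - 1` edges. -/
lemma Ear.rsp_subdivide [Finite V] (hδ : 3 ≤ δ) (hG : TwoConnOn G Set.univ)
    (h : Ear G Set.univ A s Q) (hs : s = δ - 1) (hpq : ¬ G.Adj (Q 0) (Q s)) (hR : RSp H A δ w')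
    (hadj : ∀ x ∈ A, ∀ y ∈ A, (H.Adj x y ↔ (G ⊔ SimpleGraph.edge (Q 0) (Q s)).Adj x y))
    (hw : w' s(Q 0, Q s) = 1) : RSp G Set.univ δ (cw G δ) := by
  have hsep := h.sep (hR.sdiff_nonempty hδ _ _)
  have hR' := hsep.rsp_cw hG hR hadj
  rw [hw] at hR'
  have hA : wt G (cw G δ) A + 1 + δ = δ * A.ncard := by
    have h1 := hR'.total
    rw [wt_sup_edge h.ne h.hp h.hq, Set.sdiff_singleton_eq_self (by simp [hpq])] at h1
    rw [wt]
    omega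
  have htot : wt G (cw G δ) Set.univ + δ = δ * (Set.univ : Set V).ncard := by
    rw [h.wt_eq (m := δ - 1) fun i hi => cw_of_connOn (h.contractible hG hi)]
    have h2 := Set.ncard_sdiff_add_ncard_of_subset h.sub (Set.toFinite _)
    rw [h.ncard_rest] at h2
    rw [← h2, mul_add, hs]
    obtain ⟨m, rfl⟩ : ∃ m, δ = m + 2 := ⟨δ - 2, by omega⟩
    have h3 : (m + 2 - 1) * (m + 2 - 1) = (m + 2) * (m + 2 - 1 - 1) + 1 := by
      simp only [Nat.add_sub_cancel, show m + 2 - 1 = m + 1 by omega]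
      ring
    omega
  refine RSp.of_cw hG htot fun S hS h3 => ?_
  rcases h.flat_cases hS h3 with rfl | ⟨h1, h2⟩ | ⟨h1, h2, h4⟩
  · exact hA
  · exact hsep.flat_eq_of_subset (by omega) hR' hS h1 h2
  · exact hsep.flat_eq_of_compl (by omega) hR' htot hS h1 h2 h4
end

section
variable {V W : Type} {δ : ℕ}

lemma rsp_of_iso_cycleGraph [Finite W] {G : SimpleGraph W} (hδ : 3 ≤ δ)
    (hG : TwoConnOn G Set.univ) (e : G ≃g cycleGraph δ) : RSp G Set.univ δ (cw G δ) := by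
  obtain ⟨n, rfl⟩ : ∃ n, δ = n + 3 := ⟨δ - 3, by omega⟩
  let Q : ℕ → W := fun i => e.symm (Fin.ofNat (n + 3) i)
  have hadj : ∀ x y : Fin (n + 3), G.Adj (e.symm x) (e.symm y) ↔ y = x + 1 ∨ x = y + 1 := by
    intro x y
    rw [e.symm.map_adj_iff, cycleGraph_adj, sub_eq_iff_eq_add', sub_eq_iff_eq_add', or_comm]
  have hval : ∀ x : Fin (n + 3), e.symm x = Q x.val := by
    intro x
    simp [Q]
  have hsucc : ∀ x : Fin (n + 3), x.val < n + 2 → e.symm (x + 1) = Q (x.val + 1) := by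
    intro x hx
    rw [hval]
    congr 1
    rw [Fin.val_add_one_of_lt']
    omega
  have hlast : ∀ x : Fin (n + 3), ¬ x.val < n + 2 → x = Fin.last (n + 2) := by
    intro x hx
    ext
    simp
    omega
  have hQ0 : Q 0 = e.symm 0 := by simp [hval]
  have hQs : Q (n + 2) = e.symm (Fin.last (n + 2)) := by simp [hval]
  have hear : Ear G Set.univ {Q 0, Q (n + 2)} (n + 2) Q := by
    have hinj : ∀ i ≤ n + 2, ∀ j ≤ n + 2, Q i = Q j → i = j := by
      intro i hi j hj hij
      have := congrArg Fin.val (e.symm.injective hij)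
      simp only [Fin.val_ofNat] at this
      rwa [Nat.mod_eq_of_lt (by omega), Nat.mod_eq_of_lt (by omega)] at this
    refine ⟨Set.subset_univ _, by omega, by simp, by simp, hinj, ?_, ?_, ?_, ?_⟩
    · intro i h1 h2
      refine ⟨trivial, ?_⟩
      rintro (h3 | h3)
      · have := hinj i (by omega) 0 (by omega) h3
        omega
      · have := hinj i (by omega) (n + 2) (by omega) h3
        omega
    · intro z hz
      obtain ⟨x, rfl⟩ := e.symm.surjective z
      rw [hval] at hz ⊢
      refine ⟨x.val, ?_, ?_, rfl⟩
      · rcases Nat.eq_zero_or_pos x.val with h | h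
        · rw [h] at hz; simp at hz
        · exact h
      · by_contra hcon
        have : x.val = n + 2 := by omega
        rw [this] at hz
        simp at hz
    · intro x _ y _ hxy
      obtain ⟨x, rfl⟩ := e.symm.surjective x
      obtain ⟨y, rfl⟩ := e.symm.surjective y
      rcases (hadj x y).1 hxy with rfl | rfl
      · by_cases hx : x.val < n + 2
        · exact Or.inr ⟨x.val, hx, by rw [hval x, hsucc x hx]⟩
        · rw [hlast x hx]
          simp [hQ0, hQs]
      · by_cases hx : y.val < n + 2
        · exact Or.inr ⟨y.val, hx, by rw [hval y, hsucc y hx, Sym2.eq_swap]⟩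
        · rw [hlast y hx]
          simp [hQ0, hQs]
    · intro i hi
      refine (hadj _ _).2 (Or.inl ?_)
      ext
      simp [Fin.val_add, Nat.mod_eq_of_lt (show i < n + 3 by omega)]
  refine hear.rsp_cycle (by omega) hG (by omega) ?_
  rw [hQ0, hQs, hadj]
  right
  simp

lemma rsp_of_isGluing [Finite W] {ι : Type} [Fintype ι] {Vf : ι → Type} (hδ : 3 ≤ δ)
    {Gs : ∀ i, SimpleGraph (Vf i)} {ws : ∀ i, Sym2 (Vf i) → ℕ} {es : ∀ i, Sym2 (Vf i)}
    {G : SimpleGraph W} {a b : W} (hG : TwoConnOn G Set.univ) (hι : Fintype.card ι = δ - 1)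
    (hsp : ∀ i, SatisfiesSpade (Gs i) δ (ws i)) (hes : ∀ i, es i ∈ (Gs i).edgeSet)
    (hwe : ∀ i, ws i (es i) = δ - 1) (hgl : IsGluing Gs es G a b) :
    RSp G Set.univ δ (cw G δ) := by
  obtain ⟨hne, hab, φ, hinj, hcov, hφe, hmeet, hadj⟩ := hgl
  have hmem : ∀ i, a ∈ Set.range (φ i) ∧ b ∈ Set.range (φ i) := by
    intro i
    have h1 := hφe i
    have h2 := hes i
    generalize es i = e at h1 h2
    induction e with | _ u v => ?_
    rw [Sym2.map_mk, Sym2.eq_iff] at h1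
    rcases h1 with ⟨rfl, rfl⟩ | ⟨rfl, rfl⟩ <;> simp
  have hinter : ∀ i j, i ≠ j → ∀ x ∈ Set.range (φ i), x ∈ Set.range (φ j) → x = a ∨ x = b := by
    intro i j hij x hx hx'
    have : x ∈ ({a, b} : Set W) := by
      rw [← hmeet i j hij]
      exact ⟨hx, hx'⟩
    simpa using this
  have hiff : ∀ i x y, (Gs i).Adj x y ↔ G.Adj (φ i x) (φ i y) := by
    intro i x y
    refine ⟨fun h => (hadj _ _).2 ⟨i, x, y, h, rfl, rfl⟩, fun h => ?_⟩
    obtain ⟨j, u, v, huv, hu, hv⟩ := (hadj _ _).1 h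
    by_cases hij : i = j
    · subst hij
      rwa [← hinj _ hu, ← hinj _ hv]
    -- an edge coming from another piece joins `a` and `b`
    have h1 := hinter i j hij (φ i x) ⟨x, rfl⟩ ⟨u, hu⟩
    have h2 := hinter i j hij (φ i y) ⟨y, rfl⟩ ⟨v, hv⟩
    have h3 : s(φ i x, φ i y) = s(a, b) := by
      have := h.ne
      rw [Sym2.eq_iff]
      grind
    rw [← hφe i, ← Sym2.map_mk] at h3
    have h4 := Sym2.map.injective (hinj i) h3
    rw [← SimpleGraph.mem_edgeSet, h4]
    exact hes i
  have hg : Glued G (fun i => Set.range (φ i)) a b := by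
    refine ⟨hab, fun i => (hmem i).1, fun i => (hmem i).2, hinter, hcov, fun x y hxy => ?_⟩
    obtain ⟨i, u, v, -, rfl, rfl⟩ := (hadj x y).1 hxy
    exact ⟨i, ⟨u, rfl⟩, ⟨v, rfl⟩⟩
  refine hg.rsp hδ hG hι (fun i => (hsp i).rsp_range hδ (hinj i) (hiff i)) fun i => ?_
  rw [← hφe i, (Sym2.map.injective (hinj i)).extend_apply, hwe i]

lemma rsp_of_isSubdivisionAt [Finite W] (hδ : 3 ≤ δ) {G : SimpleGraph V} {w : Sym2 V → ℕ} {u v : V}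
    {G' : SimpleGraph W} {q : Fin (δ - 1 + 1) → W} (hG : TwoConnOn G' Set.univ)
    (hsp : SatisfiesSpade G δ w) (huv : G.Adj u v) (hw : w s(u, v) = 1)
    (hsub : IsSubdivisionAt G u v G' q) : RSp G' Set.univ δ (cw G' δ) := by
  obtain ⟨φ, hφ, hqi, hq0, hqs, hqm, hcov, hadj⟩ := hsub
  obtain ⟨n, rfl⟩ : ∃ n, δ = n + 3 := ⟨δ - 3, by omega⟩
  let Q : ℕ → W := fun i => if hi : i < n + 3 then q ⟨i, hi⟩ else q 0
  have hQ : ∀ i (hi : i < n + 3), Q i = q ⟨i, hi⟩ := fun i hi => dif_pos hi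
  have hQ0 : Q 0 = φ u := by rw [hQ 0 (by omega), ← hq0]; rfl
  have hQs : Q (n + 2) = φ v := by rw [hQ (n + 2) (by omega), ← hqs]; rfl
  have hmid : ∀ i, 0 < i → i < n + 2 → Q i ∉ Set.range φ := by
    intro i h1 h2
    rw [hQ i (by omega)]
    refine hqm _ ?_ ?_
    · intro h; have := congrArg Fin.val h; simp at this; omega
    · intro h; have := congrArg Fin.val h; simp at this; omega
  have hadj' : ∀ x y : W, G'.Adj x y ↔
      ((∃ a b : V, G.Adj a b ∧ s(a, b) ≠ s(u, v) ∧ φ a = x ∧ φ b = y) ∨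
        ∃ i < n + 2, s(x, y) = s(Q i, Q (i + 1))) := by
    intro x y
    rw [hadj]
    refine or_congr_right ⟨?_, ?_⟩
    · rintro ⟨i, hi⟩
      refine ⟨i.val, i.isLt, ?_⟩
      have := i.isLt
      rw [hi, hQ i.val (by omega), hQ (i.val + 1) (by omega)]
      rfl
    · rintro ⟨i, hi, h⟩
      refine ⟨⟨i, hi⟩, ?_⟩
      rw [h, hQ i (by omega), hQ (i + 1) (by omega)]
      rfl
  -- path edges have an end outside the range of `φ`
  have hpath : ∀ a b : V, ¬ ∃ i < n + 2, s(φ a, φ b) = s(Q i, Q (i + 1)) := by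
    rintro a b ⟨i, hi, h⟩
    have h1 : Q i ∈ Set.range φ ∧ Q (i + 1) ∈ Set.range φ := by
      rcases Sym2.eq_iff.1 h with ⟨h1, h2⟩ | ⟨h1, h2⟩ <;> rw [← h1, ← h2] <;> simp
    by_cases h0 : i = 0
    · subst h0
      exact hmid 1 (by omega) (by omega) h1.2
    · exact hmid i (by omega) hi h1.1
  have hGφ : ∀ a b, G'.Adj (φ a) (φ b) ↔ G.Adj a b ∧ s(a, b) ≠ s(u, v) := by
    intro a b
    rw [hadj', or_iff_left (hpath a b)]
    constructor
    · rintro ⟨a', b', h1, h2, h3, h4⟩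
      obtain rfl := hφ h3
      obtain rfl := hφ h4
      exact ⟨h1, h2⟩
    · exact fun h => ⟨a, b, h.1, h.2, rfl, rfl⟩
  have hear : Ear G' Set.univ (Set.range φ) (n + 2) Q := by
    refine ⟨Set.subset_univ _, by omega, hQ0 ▸ ⟨u, rfl⟩, hQs ▸ ⟨v, rfl⟩, ?_,
      fun i h1 h2 => ⟨trivial, hmid i h1 h2⟩, ?_, ?_, ?_⟩
    · intro i hi j hj hij
      rw [hQ i (by omega), hQ j (by omega)] at hij
      exact congrArg Fin.val (hqi hij)
    · rintro z ⟨-, hz⟩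
      obtain ⟨i, rfl⟩ := (hcov z).resolve_left hz
      have hi := i.isLt
      refine ⟨i.val, ?_, ?_, hQ i.val (by omega)⟩
      · by_contra hcon
        have : i = 0 := Fin.ext (show i.val = 0 by omega)
        rw [this, hq0] at hz
        exact hz ⟨u, rfl⟩
      · by_contra hcon
        have : i = Fin.last _ := Fin.ext (by simp; omega)
        rw [this, hqs] at hz
        exact hz ⟨v, rfl⟩
    · intro x _ y _ hxy
      rcases (hadj' x y).1 hxy with ⟨a, b, -, -, rfl, rfl⟩ | h
      · exact Or.inl ⟨⟨a, rfl⟩, ⟨b, rfl⟩⟩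
      · exact Or.inr h
    · exact fun i hi => (hadj' _ _).2 (Or.inr ⟨i, hi, rfl⟩)
  have hGH : ∀ x y, G.Adj x y ↔ (G' ⊔ edge (Q 0) (Q (n + 2))).Adj (φ x) (φ y) := by
    intro x y
    rw [sup_edge_adj', hGφ, hQ0, hQs, ← Sym2.map_mk, ← Sym2.map_mk,
      (Sym2.map.injective hφ).eq_iff]
    constructor
    · intro h
      have := hφ.ne h.ne
      tauto
    · rintro (h | ⟨h1, -⟩)
      · exact h.1
      · rwa [← SimpleGraph.mem_edgeSet, h1, SimpleGraph.mem_edgeSet]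
  refine hear.rsp_subdivide (by omega) hG (by omega) ?_ (hsp.rsp_range (by omega) hφ hGH)
    (fun _ _ _ _ => Iff.rfl) ?_
  · rw [hQ0, hQs, hGφ]
    simp
  · rw [hQ0, hQs, ← Sym2.map_mk, (Sym2.map.injective hφ).extend_apply, hw]
end

theorem stmt8 {W : Type} [Fintype W] [DecidableEq W] (δ : ℕ) (hδ : 2 < δ)
    (G : SimpleGraph W) (h2c : IsTwoConnected G) :
    (∃ w : Sym2 W → ℕ, SatisfiesSpade G δ w) ↔ Obtainable δ G := by
  constructor
  · rintro ⟨w, hw⟩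
    exact RSp.obtainable hδ _ W G w rfl (hw.rsp hδ)
  · intro h
    refine ⟨cw G δ, RSp.spade hδ ?_⟩
    have hG := isTwoConnected_iff.1 h2c
    cases h with
    | cycle _ e => exact rsp_of_iso_cycleGraph hδ hG e
    | glue Gs ws es _ a b hob hsp hes hwe hgl =>
      exact rsp_of_isGluing hδ hG (Fintype.card_fin _) hsp hes hwe hgl
    | subdivide G₀ w u v _ q hob hsp huv hw1 hsub =>
      exact rsp_of_isSubdivisionAt hδ hG hsp huv hw1 hsub

end Gor
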